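/- arXiv:2208.14198 — 3 statements merged into one kernel-verified Lean document; each statement's English description precedes it below -/
import Mathlib

section
/- Let (T(t))_{t≥0} be a C₀-semigroup on a complex Banach space X with ‖T(t)‖ ≤ M for all t ≥ 0, where M ≥ 1. Suppose there exist a complex number ζ with |ζ| = 1 and K ≥ 1/2 such that ‖(ζI − T(t))x‖ ≥ ‖x‖/K for all x ∈ X and all t > 0. Then (T(t)) can be extended to a bounded holomorphic semigroup: setting C̃ := M²K, there exist universal constants c₁, c₂ > 0 such that the extension satisfies ‖T(z)‖ ≤ c₂ · C̃ · (1 + log C̃) for every z ∈ ℂ∖{0} with |arg z| ≤ c₁/C̃. -/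
open Filter Topology

universe u

/-- A strongly continuous one-parameter semigroup of bounded operators on a complex
Banach space. -/
def IsC0Semigroup {X : Type u} [NormedAddCommGroup X] [NormedSpace ℂ X]
    (T : ℝ → X →L[ℂ] X) : Prop :=
  T 0 = 1 ∧ (∀ s t : ℝ, 0 ≤ s → 0 ≤ t → T (s + t) = (T s).comp (T t)) ∧
    ∀ x : X, Tendsto (fun t => T t x) (nhdsWithin 0 (Set.Ioi 0)) (nhds x)

set_option linter.unusedSectionVars false
set_option linter.unusedSimpArgs false

section Contour

open Complex

variable {𝔸 : Type*} [NormedRing 𝔸] [NormedAlgebra ℂ 𝔸] [CompleteSpace 𝔸]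

lemma kato_circ_coeff (V : ℝ) (n : ℕ) :
    ∫ θ in (-Real.pi)..Real.pi, cexp (cexp (V + θ * I)) * ((cexp (V + θ * I))⁻¹) ^ n
      = (2 * Real.pi) * ((n.factorial : ℂ))⁻¹ := by
  have h := DifferentiableOn.circleIntegral_one_div_sub_center_pow_smul (c := 0)
    (R := Real.exp V) (f := cexp) (Real.exp_pos V) n (Complex.differentiable_exp.differentiableOn)
  rw [circleIntegral] at h
  have hper : Function.Periodic (fun θ : ℝ => cexp (cexp (V + θ * I)) * ((cexp (V + θ * I))⁻¹) ^ n)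
      (2 * Real.pi) := by
    intro θ
    have : cexp (V + ((θ + 2 * Real.pi : ℝ) : ℂ) * I) = cexp (V + θ * I) := by
      rw [← Complex.exp_periodic (V + θ * I)]
      congr 1; push_cast; ring
    simp only [this]
  have h2 := hper.intervalIntegral_add_eq (-Real.pi) 0
  have e1 : -Real.pi + 2 * Real.pi = Real.pi := by ring
  rw [e1, zero_add] at h2
  rw [h2]
  have h3 : ∀ θ : ℝ, deriv (circleMap 0 (Real.exp V)) θ •
      (1 / (circleMap 0 (Real.exp V) θ - 0) ^ (n + 1)) • cexp (circleMap 0 (Real.exp V) θ)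
      = I * (cexp (cexp (V + θ * I)) * ((cexp (V + θ * I))⁻¹) ^ n) := by
    intro θ
    have hc : circleMap 0 (Real.exp V) θ = cexp (V + θ * I) := by
      simp [circleMap, Complex.exp_add]
    rw [deriv_circleMap, hc]
    have := Complex.exp_ne_zero (V + θ * I)
    simp only [smul_eq_mul, sub_zero, inv_pow]
    field_simp
    ring
  simp_rw [h3] at h
  rw [intervalIntegral.integral_const_mul] at h
  have h4 : iteratedDeriv n cexp 0 = 1 := by
    simp [iteratedDeriv_eq_iterate]
  rw [h4] at h
  have hI := Complex.I_ne_zero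
  apply mul_left_cancel₀ hI
  rw [h]
  simp only [smul_eq_mul]
  field_simp

/-- integrand in logarithmic coordinates -/
noncomputable def katoG (b : 𝔸) (w : ℂ) : 𝔸 := (cexp (cexp w) * cexp w) • resolvent b (cexp w)

lemma kato_geom (b : 𝔸) (lam : ℂ) (h : ‖b‖ < ‖lam‖) :
    HasSum (fun n : ℕ => (lam⁻¹) ^ n • b ^ n) (lam • resolvent b lam) := by
  have hl : lam ≠ 0 := by
    rintro rfl
    simp at h
    exact absurd h (not_lt.2 (norm_nonneg b))
  have h1 : ‖lam⁻¹ • b‖ < 1 := by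
    rw [norm_smul, norm_inv]
    have : 0 < ‖lam‖ := norm_pos_iff.2 hl
    rw [inv_mul_lt_iff₀ this]; simpa using h
  have h2 : HasSum (fun n : ℕ => (lam⁻¹ • b) ^ n) (Ring.inverse (1 - lam⁻¹ • b)) := by
    rw [NormedRing.inverse_one_sub _ h1]
    exact (summable_geometric_of_norm_lt_one h1).hasSum
  have h3 : lam • resolvent b lam = Ring.inverse (1 - lam⁻¹ • b) := by
    have := spectrum.units_smul_resolvent_self (r := Units.mk0 lam hl) (a := b)
    simp [Units.smul_def] at this
    rw [this]
    simp [resolvent]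
  rw [h3]
  simpa [smul_pow] using h2

lemma kato_circ_exp (b : 𝔸) (V : ℝ) (hV : ‖b‖ < Real.exp V) :
    ∫ θ in (-Real.pi)..Real.pi, katoG b (V + θ * I) = (2 * Real.pi : ℂ) • NormedSpace.exp b := by
  have hn : ∀ θ : ℝ, ‖cexp (V + θ * I)‖ = Real.exp V := by
    intro θ; simp [Complex.norm_exp]
  set q := (Real.exp V)⁻¹ * ‖b‖ with hq
  have hq0 : 0 ≤ q := by positivity
  have hq1 : q < 1 := by
    rw [hq, inv_mul_lt_iff₀ (Real.exp_pos V)]; simpa using hV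
  have hs : HasSum (fun n : ℕ => ∫ θ in (-Real.pi)..Real.pi,
      (cexp (cexp (V + θ * I)) * ((cexp (V + θ * I))⁻¹) ^ n) • b ^ n)
      (∫ θ in (-Real.pi)..Real.pi, katoG b (V + θ * I)) := by
    apply intervalIntegral.hasSum_integral_of_dominated_convergence
      (fun n _ => Real.exp (Real.exp V) * (max 1 ‖(1 : 𝔸)‖ * q ^ n))
    · intro n
      apply Continuous.aestronglyMeasurable
      apply Continuous.smul _ continuous_const
      apply Continuous.mul
      · fun_prop
      · apply Continuous.pow
        apply Continuous.inv₀ (by fun_prop)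
        intro x; exact Complex.exp_ne_zero _
    · intro n
      refine Filter.Eventually.of_forall (fun θ _ => ?_)
      rw [norm_smul, norm_mul, norm_pow, norm_inv, hn, mul_assoc]
      refine mul_le_mul ?_ ?_ (by positivity) (by positivity)
      · rw [Complex.norm_exp]
        apply Real.exp_le_exp.2
        exact (Complex.re_le_norm _).trans (hn θ).le
      · rw [hq, mul_pow, ← mul_assoc, mul_comm (max 1 ‖(1 : 𝔸)‖) ((Real.exp V)⁻¹ ^ n), mul_assoc]
        gcongr
        rcases Nat.eq_zero_or_pos n with rfl | hn0
        · simp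
        · calc ‖b ^ n‖ ≤ 1 * ‖b‖ ^ n := by simpa using norm_pow_le' b hn0
            _ ≤ _ := by gcongr; exact le_max_left _ _
    · refine Filter.Eventually.of_forall (fun θ _ => ?_)
      exact ((summable_geometric_of_lt_one hq0 hq1).mul_left _).mul_left _
    · exact intervalIntegrable_const
    · refine Filter.Eventually.of_forall (fun θ _ => ?_)
      have := (kato_geom b (cexp (V + θ * I)) (by rw [hn]; exact hV)).const_smul
        (cexp (cexp (V + θ * I)))
      simpa [katoG, smul_smul] using this
  have hs2 := (NormedSpace.exp_series_hasSum_exp' (𝕂 := ℂ) b).const_smul (2 * Real.pi : ℂ)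
  refine hs.unique ?_
  convert hs2 using 2 with n
  rw [intervalIntegral.integral_smul_const, kato_circ_coeff, smul_smul]

lemma kato_int_log (s V : ℝ) (hs : 0 < s) (hV : 0 ≤ V) :
    ∫ u in (0:ℝ)..V, Real.exp (-(s * Real.exp u)) ≤ Real.log ((1 + s) / s) := by
  have h1 : ∫ u in (0:ℝ)..V, (1 + s * Real.exp u)⁻¹ =
      (V - Real.log (1 + s * Real.exp V)) - (0 - Real.log (1 + s * Real.exp 0)) := by
    apply intervalIntegral.integral_eq_sub_of_hasDerivAt
      (f := fun u => u - Real.log (1 + s * Real.exp u))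
    · intro u _
      have hp : 0 < 1 + s * Real.exp u := by positivity
      have := (hasDerivAt_id u).sub (((Real.hasDerivAt_exp u).const_mul s).const_add 1 |>.log hp.ne')
      have e : (1 + s * Real.exp u)⁻¹ = 1 - s * Real.exp u / (1 + s * Real.exp u) := by
        field_simp
        ring
      rw [e]
      exact this
    · apply Continuous.intervalIntegrable
      apply Continuous.inv₀ (by fun_prop)
      intro u; positivity
  calc _ ≤ ∫ u in (0:ℝ)..V, (1 + s * Real.exp u)⁻¹ := by
        apply intervalIntegral.integral_mono_on hV
        · apply Continuous.intervalIntegrable; fun_prop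
        · apply Continuous.intervalIntegrable
          apply Continuous.inv₀ (by fun_prop)
          intro u; positivity
        · intro u _
          rw [Real.exp_neg]
          apply inv_anti₀ (by positivity)
          have := Real.add_one_le_exp (s * Real.exp u)
          linarith
    _ = _ := h1
    _ ≤ _ := by
      have h2 : V + Real.log s ≤ Real.log (1 + s * Real.exp V) := by
        calc V + Real.log s = Real.log (s * Real.exp V) := by
              rw [Real.log_mul hs.ne' (Real.exp_pos V).ne', Real.log_exp]; ring
          _ ≤ _ := Real.log_le_log (by positivity) (by linarith)
      rw [Real.log_div (by positivity) hs.ne']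
      simp only [Real.exp_zero, mul_one]
      linarith


lemma katoG_norm (b : 𝔸) (u θ : ℝ) :
    ‖katoG b (u + θ * I)‖ = Real.exp (Real.exp u * Real.cos θ) *
      (Real.exp u * ‖resolvent b (cexp (u + θ * I))‖) := by
  rw [katoG, norm_smul, norm_mul, Complex.norm_exp, Complex.norm_exp, Complex.exp_re]
  simp [mul_assoc]

lemma katoG_diff (b : 𝔸) (w : ℂ) (h : cexp w ∈ resolventSet ℂ b) :
    DifferentiableAt ℂ (katoG b) w := by
  unfold katoG
  have h1 := (spectrum.hasDerivAt_resolvent_const_left h).scomp w (Complex.hasDerivAt_exp w)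
  have h2 : DifferentiableAt ℂ (fun w => cexp (cexp w) * cexp w) w := by fun_prop
  exact h2.smul h1.differentiableAt

lemma kato_exp_bound (b : 𝔸) (h1 : ‖(1 : 𝔸)‖ ≤ 1) (δ L : ℝ) (hδ : 0 < δ) (hδ2 : δ < Real.pi / 2)
    (hL : 0 ≤ L)
    (hres : ∀ u θ : ℝ, |θ| ≤ Real.pi / 2 + δ → cexp (u + θ * I) ∈ resolventSet ℂ b ∧
      Real.exp u * ‖resolvent b (cexp (u + θ * I))‖ ≤ L) :
    ‖NormedSpace.exp b‖ ≤ L * (3 + Real.log ((1 + Real.sin δ) / Real.sin δ)) := by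
  have hpi := Real.pi_pos
  set α := Real.pi / 2 + δ with hα
  set s := Real.sin δ with hs
  have hs0 : 0 < s := Real.sin_pos_of_pos_of_lt_pi hδ (by linarith)
  have hlog : 0 ≤ Real.log ((1 + s) / s) := by
    apply Real.log_nonneg
    rw [le_div_iff₀ hs0]; linarith
  have hαpi : α < Real.pi := by rw [hα]; linarith
  have hα0 : 0 < α := by positivity
  have hcosα : Real.cos α = -s := by
    rw [hα, add_comm, Real.cos_add_pi_div_two]
  -- main estimate at level V
  have key : ∀ V : ℝ, 0 ≤ V → 2 * ‖b‖ < Real.exp V →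
      ‖NormedSpace.exp b‖ ≤ L * (3 + Real.log ((1 + s) / s)) + 2 * Real.exp (-(s * Real.exp V)) := by
    intro V hV hb
    have hb' : ‖b‖ < Real.exp V := lt_of_le_of_lt (by linarith [norm_nonneg b]) hb
    have hVnorm : ∀ θ : ℝ, ‖cexp (V + θ * I)‖ = Real.exp V := by
      intro θ; simp [Complex.norm_exp]
    have hmem : ∀ θ : ℝ, cexp (V + θ * I) ∈ resolventSet ℂ b := by
      intro θ
      apply spectrum.mem_resolventSet_of_norm_lt_mul
      rw [hVnorm]
      calc ‖b‖ * ‖(1 : 𝔸)‖ ≤ ‖b‖ * 1 := by gcongr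
        _ < _ := by simpa using hb'
    have hcont : Continuous (fun θ : ℝ => katoG b (V + θ * I)) := by
      rw [continuous_iff_continuousAt]
      intro θ
      have := (katoG_diff b _ (hmem θ)).continuousAt
      exact ContinuousAt.comp (f := fun θ : ℝ => (V + θ * I : ℂ)) this (by fun_prop)
    have hcirc := kato_circ_exp b V hb'
    have hRnorm : ∀ θ : ℝ, Real.exp V * ‖resolvent b (cexp (V + θ * I))‖ ≤ 2 := by
      intro θ
      have hg := kato_geom b (cexp (V + θ * I)) (by rw [hVnorm]; exact hb')
      have hq : (Real.exp V)⁻¹ * ‖b‖ ≤ 1 / 2 := by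
        rw [inv_mul_le_iff₀ (Real.exp_pos V)]; linarith
      have hle : ∀ n : ℕ, ‖((cexp (V + θ * I))⁻¹) ^ n • b ^ n‖ ≤ (1 / 2 : ℝ) ^ n := by
        intro n
        rw [norm_smul, norm_pow, norm_inv, hVnorm]
        have : ‖b ^ n‖ ≤ ‖b‖ ^ n := by
          rcases Nat.eq_zero_or_pos n with rfl | hn0
          · simpa using h1
          · exact norm_pow_le' b hn0
        calc _ ≤ (Real.exp V)⁻¹ ^ n * ‖b‖ ^ n := by gcongr
          _ = ((Real.exp V)⁻¹ * ‖b‖) ^ n := by rw [mul_pow]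
          _ ≤ _ := by gcongr
      have := hasSum_geometric_two
      have h5 := tsum_of_norm_bounded this hle
      rw [hg.tsum_eq, norm_smul, hVnorm] at h5
      exact h5
    -- split
    have hIntv : ∀ x y : ℝ, IntervalIntegrable (fun θ : ℝ => katoG b (V + θ * I))
        MeasureTheory.volume x y := fun x y => hcont.intervalIntegrable x y
    have hsplit : (∫ θ in (-Real.pi)..(-α), katoG b (V + θ * I)) +
        (∫ θ in (-α)..α, katoG b (V + θ * I)) + (∫ θ in α..Real.pi, katoG b (V + θ * I))
        = (2 * Real.pi : ℂ) • NormedSpace.exp b := by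
      rw [intervalIntegral.integral_add_adjacent_intervals (hIntv _ _) (hIntv _ _),
        intervalIntegral.integral_add_adjacent_intervals (hIntv _ _) (hIntv _ _), hcirc]
    have hcosle : ∀ θ : ℝ, α ≤ |θ| → |θ| ≤ Real.pi → Real.cos θ ≤ -s := by
      intro θ ha hb
      rw [← hcosα, ← Real.cos_abs θ]
      exact Real.cos_le_cos_of_nonneg_of_le_pi hα0.le hb ha
    have hfar : ∀ θ : ℝ, α ≤ |θ| → |θ| ≤ Real.pi →
        ‖katoG b (V + θ * I)‖ ≤ 2 * Real.exp (-(s * Real.exp V)) := by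
      intro θ ha hb
      rw [katoG_norm, mul_comm]
      refine mul_le_mul (hRnorm θ) ?_ (by positivity) (by norm_num)
      apply Real.exp_le_exp.2
      nlinarith [hcosle θ ha hb, Real.exp_pos V]
    have hI1 : ‖∫ θ in (-Real.pi)..(-α), katoG b (V + θ * I)‖ ≤
        2 * Real.exp (-(s * Real.exp V)) * (Real.pi - α) := by
      have := intervalIntegral.norm_integral_le_of_norm_le_const (a := -Real.pi) (b := -α)
        (f := fun θ : ℝ => katoG b (V + θ * I)) (C := 2 * Real.exp (-(s * Real.exp V))) (by
          intro θ hθ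
          rw [Set.uIoc_of_le (by linarith)] at hθ
          have h0 : θ < 0 := by linarith [hθ.2]
          apply hfar θ <;> rw [abs_of_neg h0] <;> linarith [hθ.1, hθ.2])
      have e : |(-α - -Real.pi)| = Real.pi - α := by
        rw [abs_of_nonneg (by linarith)]; ring
      rwa [e] at this
    have hI3 : ‖∫ θ in α..Real.pi, katoG b (V + θ * I)‖ ≤
        2 * Real.exp (-(s * Real.exp V)) * (Real.pi - α) := by
      have := intervalIntegral.norm_integral_le_of_norm_le_const (a := α) (b := Real.pi)
        (f := fun θ : ℝ => katoG b (V + θ * I)) (C := 2 * Real.exp (-(s * Real.exp V))) (by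
          intro θ hθ
          rw [Set.uIoc_of_le (by linarith)] at hθ
          have h0 : 0 < θ := by linarith [hθ.1]
          apply hfar θ <;> rw [abs_of_pos h0] <;> linarith [hθ.1, hθ.2])
      have e : |(Real.pi - α)| = Real.pi - α := by
        rw [abs_of_nonneg (by linarith)]
      rwa [e] at this
    -- rectangle
    have hrect := Complex.integral_boundary_rect_eq_zero_of_differentiableOn (katoG b)
      (0 + (-α : ℝ) * I) ((V : ℝ) + (α : ℝ) * I) (by
        intro w hw
        apply DifferentiableAt.differentiableWithinAt
        apply katoG_diff
        rw [Complex.mem_reProdIm] at hw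
        have hw2 := hw.2
        simp at hw2
        rw [Set.uIcc_of_le (by linarith)] at hw2
        have := (hres w.re w.im (abs_le.2 hw2)).1
        rwa [Complex.re_add_im] at this)
    simp only [Complex.add_re, Complex.zero_re, Complex.mul_re, Complex.ofReal_re, Complex.I_re,
      mul_zero, Complex.ofReal_im, Complex.I_im, zero_mul, sub_zero, add_zero, Complex.add_im,
      Complex.zero_im, Complex.mul_im, mul_one, zero_add, Complex.ofReal_zero, sub_self] at hrect
    have hray : ∀ θ : ℝ, |θ| = α →
        ‖∫ u in (0:ℝ)..V, katoG b (u + θ * I)‖ ≤ L * Real.log ((1 + s) / s) := by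
      intro θ hθ
      calc _ ≤ ∫ u in (0:ℝ)..V, L * Real.exp (-(s * Real.exp u)) := by
            apply intervalIntegral.norm_integral_le_of_norm_le hV
            · refine Filter.Eventually.of_forall (fun u _ => ?_)
              rw [katoG_norm, mul_comm, ← Real.cos_abs, hθ, hcosα]
              refine mul_le_mul (hres u θ hθ.le).2 (le_of_eq ?_) (by positivity) hL
              congr 1; ring
            · apply Continuous.intervalIntegrable; fun_prop
        _ = L * ∫ u in (0:ℝ)..V, Real.exp (-(s * Real.exp u)) := by
            rw [intervalIntegral.integral_const_mul]
        _ ≤ _ := by gcongr; exact kato_int_log s V hs0 hV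
    have harc : ‖∫ θ in (-α)..α, katoG b ((0 : ℂ) + θ * I)‖ ≤ Real.exp 1 * L * (2 * α) := by
      have := intervalIntegral.norm_integral_le_of_norm_le_const (a := -α) (b := α)
        (f := fun θ : ℝ => katoG b ((0 : ℂ) + θ * I)) (C := Real.exp 1 * L) (by
          intro θ hθ
          rw [Set.uIoc_of_le (by linarith)] at hθ
          have h2 := katoG_norm b 0 θ
          have h3 := (hres 0 θ (abs_le.2 ⟨hθ.1.le, hθ.2⟩)).2
          simp only [Complex.ofReal_zero] at h2 h3
          rw [h2]
          refine mul_le_mul ?_ h3 (by positivity) (by positivity)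
          apply Real.exp_le_exp.2
          simpa using Real.cos_le_one θ)
      have e : |(α - -α)| = 2 * α := by
        rw [abs_of_nonneg (by linarith)]; ring
      rwa [e] at this
    have hmid : ‖∫ θ in (-α)..α, katoG b (V + θ * I)‖ ≤
        Real.exp 1 * L * (2 * α) + 2 * (L * Real.log ((1 + s) / s)) := by
      have e : I • (∫ θ in (-α)..α, katoG b (V + θ * I)) =
          I • (∫ θ in (-α)..α, katoG b ((0 : ℂ) + θ * I))
          - (∫ u in (0:ℝ)..V, katoG b (u + (-α : ℝ) * I))
          + (∫ u in (0:ℝ)..V, katoG b (u + (α : ℝ) * I)) := by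
        rw [← sub_eq_zero, ← hrect]
        simp only [zero_add]
        abel
      have e2 : ‖∫ θ in (-α)..α, katoG b (V + θ * I)‖ =
          ‖I • (∫ θ in (-α)..α, katoG b (V + θ * I))‖ := by
        rw [norm_smul]; simp
      rw [e2, e]
      refine (norm_add_le _ _).trans ?_
      have hA := norm_sub_le (I • (∫ θ in (-α)..α, katoG b ((0 : ℂ) + θ * I)))
        (∫ u in (0:ℝ)..V, katoG b (u + (-α : ℝ) * I))
      rw [norm_smul, Complex.norm_I, one_mul] at hA
      have hB := hray (-α) (by rw [abs_neg, abs_of_pos hα0])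
      have hC := hray α (by rw [abs_of_pos hα0])
      linarith
    have htot : 2 * Real.pi * ‖NormedSpace.exp b‖ ≤
        Real.exp 1 * L * (2 * α) + 2 * (L * Real.log ((1 + s) / s))
        + 2 * (2 * Real.exp (-(s * Real.exp V)) * (Real.pi - α)) := by
      have e : ‖(2 * Real.pi : ℂ) • NormedSpace.exp b‖ = 2 * Real.pi * ‖NormedSpace.exp b‖ := by
        rw [norm_smul]; simp [abs_of_pos hpi]
      rw [← e, ← hsplit]
      refine (norm_add_le _ _).trans ?_
      have := norm_add_le (∫ θ in (-Real.pi)..(-α), katoG b (V + θ * I))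
        (∫ θ in (-α)..α, katoG b (V + θ * I))
      linarith
    have he := Real.exp_one_lt_d9
    have hE := Real.exp_pos (-(s * Real.exp V))
    have hpi3 := Real.pi_gt_three
    have b1 : Real.exp 1 * L * (2 * α) ≤ 2 * Real.pi * (L * 3) := by
      have : Real.exp 1 * L ≤ L * 3 := by nlinarith
      calc _ ≤ (L * 3) * (2 * Real.pi) := by
            apply mul_le_mul this (by linarith) (by positivity) (by positivity)
        _ = _ := by ring
    have b2 : 2 * (L * Real.log ((1 + s) / s)) ≤ 2 * Real.pi * (L * Real.log ((1 + s) / s)) := by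
      have : 0 ≤ L * Real.log ((1 + s) / s) := by positivity
      nlinarith
    have b3 : 2 * (2 * Real.exp (-(s * Real.exp V)) * (Real.pi - α)) ≤
        2 * Real.pi * (2 * Real.exp (-(s * Real.exp V))) := by
      nlinarith
    have : 2 * Real.pi * ‖NormedSpace.exp b‖ ≤
      2 * Real.pi * (L * (3 + Real.log ((1 + s) / s)) + 2 * Real.exp (-(s * Real.exp V))) := by
      linarith
    exact le_of_mul_le_mul_left this (by positivity)
  have hlim : Tendsto (fun V : ℝ => L * (3 + Real.log ((1 + s) / s)) +
      2 * Real.exp (-(s * Real.exp V))) atTop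
      (nhds (L * (3 + Real.log ((1 + s) / s)) + 2 * 0)) := by
    refine Tendsto.const_add _ (Tendsto.const_mul _ ?_)
    refine Real.tendsto_exp_neg_atTop_nhds_zero.comp ?_
    exact Real.tendsto_exp_atTop.const_mul_atTop hs0
  have hev : ∀ᶠ V : ℝ in atTop, ‖NormedSpace.exp b‖ ≤ L * (3 + Real.log ((1 + s) / s)) +
      2 * Real.exp (-(s * Real.exp V)) := by
    filter_upwards [eventually_ge_atTop 0,
      Real.tendsto_exp_atTop.eventually_gt_atTop (2 * ‖b‖)] with V hV hV2
    exact key V hV hV2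
  simpa using ge_of_tendsto hlim hev

end Contour
section Scalar

open Complex

lemma kato_choose_angle (ζ : ℂ) (hζ : ‖ζ‖ = 1) (a : ℝ) (ha : a ≠ 0) :
    ∃ θ : ℝ, cexp (θ * I) = ζ ∧ |θ| ≤ 2 * Real.pi ∧ 0 < θ / a := by
  have hpi := Real.pi_pos
  have h0 : cexp (ζ.arg * I) = ζ := by
    have := Complex.norm_mul_exp_arg_mul_I ζ
    rwa [hζ, Complex.ofReal_one, one_mul] at this
  have h1 := Complex.neg_pi_lt_arg ζ
  have h2 := Complex.arg_le_pi ζ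
  rcases lt_or_gt_of_ne ha with ha | ha
  · by_cases hz : ζ.arg < 0
    · exact ⟨ζ.arg, h0, by rw [abs_of_neg hz]; linarith, div_pos_of_neg_of_neg hz ha⟩
    · refine ⟨ζ.arg - 2 * Real.pi, ?_, ?_, div_pos_of_neg_of_neg (by linarith) ha⟩
      · push_cast
        rw [sub_mul, Complex.exp_sub, h0, Complex.exp_two_pi_mul_I, div_one]
      · rw [abs_of_nonpos (by linarith)]; linarith
  · by_cases hz : 0 < ζ.arg
    · exact ⟨ζ.arg, h0, by rw [abs_of_pos hz]; linarith, div_pos hz ha⟩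
    · refine ⟨ζ.arg + 2 * Real.pi, ?_, ?_, div_pos (by linarith) ha⟩
      · push_cast
        rw [add_mul, Complex.exp_add, h0, Complex.exp_two_pi_mul_I, mul_one]
      · rw [abs_of_nonneg (by linarith)]; linarith

set_option maxHeartbeats 1000000 in
lemma kato_scalar (ζ : ℂ) (hζ : ‖ζ‖ = 1) (K : ℝ) (hK : 1 / 2 ≤ K) (w : ℂ) (hw : w ≠ 0)
    (hre : 0 ≤ w.re) (hsmall : ‖1 + w‖ - 1 < ‖w‖ / (128 * K)) :
    ∃ n : ℕ, 1 ≤ n ∧ ‖(1 + w) ^ n - ζ‖ ≤ 1 / (2 * K) ∧ n * ‖1 + w‖ ^ n ≤ 60 / ‖w‖ := by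
  have hK0 : 0 < K := by linarith
  set m := ‖w‖ with hm
  have hm0 : 0 < m := norm_pos_iff.2 hw
  set ρ := ‖1 + w‖ with hρ
  have hρ2 : ρ ^ 2 = 1 + 2 * w.re + m ^ 2 := by
    rw [hρ, hm, Complex.sq_norm, Complex.sq_norm, Complex.normSq_apply, Complex.normSq_apply]
    simp; ring
  have hm2 : m ^ 2 = w.re ^ 2 + w.im ^ 2 := by
    rw [hm, Complex.sq_norm, Complex.normSq_apply]; ring
  have hρ0 : 0 ≤ ρ := norm_nonneg _
  have hρ1 : 1 < ρ := by nlinarith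
  have hρle : ρ ≤ 1 + m := by
    have := norm_add_le (1 : ℂ) w
    simpa using this
  set e := 1 / (128 * K) with he
  have he0 : 0 < e := by positivity
  have heK : e * K = 1 / 128 := by rw [he]; field_simp
  have he64 : e ≤ 1 / 64 := by nlinarith
  have hsm : ρ - 1 < e * m := by
    have : m / (128 * K) = e * m := by rw [he]; ring
    linarith
  -- m ≤ 3 e
  have hm3 : m ≤ 3 * e := by
    have h1 : m ^ 2 ≤ (ρ - 1) * (ρ + 1) := by nlinarith
    have h2 : m ^ 2 ≤ (e * m) * (2 + m) := by
      calc m ^ 2 ≤ (ρ - 1) * (ρ + 1) := h1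
        _ ≤ (e * m) * (2 + m) := by
          apply mul_le_mul hsm.le (by linarith) (by linarith) (by positivity)
    have h3 : m ≤ e * (2 + m) := by
      have : m * m ≤ m * (e * (2 + m)) := by nlinarith
      exact le_of_mul_le_mul_left this hm0
    nlinarith
  have hu : w.re ≤ e * m := by
    have : (1 + w).re ≤ ρ := Complex.re_le_norm _
    simp at this
    linarith
  have hv : m / 2 ≤ |w.im| := by
    apply abs_le_of_sq_le_sq' _ (abs_nonneg _) |>.2
    rw [sq_abs]
    have : w.re ≤ m / 64 := by nlinarith
    nlinarith
  have hvm : |w.im| ≤ m := Complex.abs_im_le_norm w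
  set a := (1 + w).arg with ha
  have hne : (1 + w) ≠ 0 := by
    rw [← norm_pos_iff]; linarith
  have hsin : |Real.sin a| = |w.im| / ρ := by
    rw [ha, Complex.sin_arg, abs_div, abs_of_nonneg (norm_nonneg (1 + w))]
    simp [hρ]
  have hahalf : |a| ≤ Real.pi / 2 := by
    rw [ha, Complex.abs_arg_le_pi_div_two_iff]
    simp; linarith
  have hpi3 := Real.pi_gt_three
  have hpi4 := Real.pi_le_four
  have hpi315 := Real.pi_lt_d2
  have hmsmall : m ≤ 3 / 64 := by linarith
  have ha_low : m / 3 ≤ |a| := by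
    have h1 : |Real.sin a| ≤ |a| := Real.abs_sin_le_abs
    rw [hsin] at h1
    refine le_trans ?_ h1
    rw [le_div_iff₀ (by linarith)]
    nlinarith
  have ha_up : |a| ≤ 2 * m := by
    have h1 := Real.mul_abs_le_abs_sin hahalf
    rw [hsin] at h1
    have h2 : |w.im| / ρ ≤ m := by
      rw [div_le_iff₀ (by linarith)]
      nlinarith
    have h3 : 2 / Real.pi * |a| ≤ m := h1.trans h2
    rw [div_mul_eq_mul_div, div_le_iff₀ (by linarith)] at h3
    nlinarith
  have hapos : 0 < |a| := by linarith
  have ha0 : a ≠ 0 := abs_pos.1 hapos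
  obtain ⟨θ, hθ, hθ2, hθa⟩ := kato_choose_angle ζ hζ a ha0
  set n := ⌈θ / a⌉₊ with hn
  have hn1 : θ / a ≤ n := Nat.le_ceil _
  have hn2 : (n : ℝ) < θ / a + 1 := Nat.ceil_lt_add_one hθa.le
  have hn0 : 1 ≤ n := Nat.one_le_iff_ne_zero.2 (by
    have := Nat.ceil_pos.2 hθa
    omega)
  have hdiff : |n * a - θ| ≤ |a| := by
    have : n * a - θ = (n - θ / a) * a := by field_simp
    rw [this, abs_mul]
    have : |(n : ℝ) - θ / a| ≤ 1 := by
      rw [abs_le]; constructor <;> linarith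
    calc _ ≤ 1 * |a| := by gcongr
      _ = |a| := one_mul _
  have hnle : (n : ℝ) ≤ 20 / m := by
    have h1 : θ / a ≤ 2 * Real.pi / (m / 3) := by
      calc θ / a ≤ |θ / a| := le_abs_self _
        _ = |θ| / |a| := abs_div _ _
        _ ≤ _ := by gcongr
    have h2 : 2 * Real.pi / (m / 3) = 6 * Real.pi / m := by field_simp; ring
    have h3 : 1 ≤ (3 / 64) / m := by rw [le_div_iff₀ hm0]; linarith
    have h4 : 6 * Real.pi / m + (3 / 64) / m ≤ 20 / m := by
      rw [← add_div]; gcongr; nlinarith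
    linarith
  have hlog0 : 0 ≤ Real.log ρ := Real.log_nonneg hρ1.le
  have hlog : Real.log ρ ≤ e * m := by
    have := Real.log_le_sub_one_of_pos (show 0 < ρ by linarith)
    linarith
  have hnlog : n * Real.log ρ ≤ 20 * e := by
    calc n * Real.log ρ ≤ (20 / m) * (e * m) := by gcongr
      _ = 20 * e := by field_simp
  have hpolar : (1 + w) = cexp (Real.log ρ + a * I) := by
    rw [Complex.exp_add, ← Complex.ofReal_exp, Real.exp_log (by linarith)]
    exact (Complex.norm_mul_exp_arg_mul_I (1 + w)).symm
  refine ⟨n, hn0, ?_, ?_⟩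
  · set y : ℂ := (n * Real.log ρ : ℝ) + (n * a - θ : ℝ) * I with hy
    have hyn : ‖y‖ ≤ 26 * e := by
      calc ‖y‖ ≤ ‖((n * Real.log ρ : ℝ) : ℂ)‖ + ‖((n * a - θ : ℝ) : ℂ) * I‖ := norm_add_le _ _
        _ = n * Real.log ρ + |n * a - θ| := by
          rw [norm_mul, Complex.norm_I, mul_one, Complex.norm_real, Complex.norm_real,
            Real.norm_eq_abs, Real.norm_eq_abs, abs_of_nonneg (by positivity)]
        _ ≤ 26 * e := by linarith
    have hpow : (1 + w) ^ n = ζ * cexp y := by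
      rw [hpolar, ← Complex.exp_nat_mul, ← hθ, ← Complex.exp_add]
      congr 1
      rw [hy]; push_cast; ring
    have : (1 + w) ^ n - ζ = ζ * (cexp y - 1) := by rw [hpow]; ring
    rw [this, norm_mul, hζ, one_mul]
    have h1 := Complex.norm_exp_sub_one_le (x := y) (by linarith)
    have h2 : 1 / (2 * K) = 64 * e := by rw [he]; field_simp; norm_num
    linarith
  · have h1 : ρ ^ n ≤ 3 := by
      have : ρ ^ n = Real.exp (n * Real.log ρ) := by
        rw [Real.exp_nat_mul, Real.exp_log (by linarith)]
      rw [this]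
      have h2 : Real.exp (n * Real.log ρ) ≤ Real.exp 1 := Real.exp_le_exp.2 (by linarith)
      have := Real.exp_one_lt_d9
      linarith
    calc n * ρ ^ n ≤ (20 / m) * 3 := by gcongr
      _ = 60 / m := by ring

end Scalar
section Resolvent

open Complex

variable {X : Type*} [NormedAddCommGroup X] [NormedSpace ℂ X] [CompleteSpace X]

lemma kato_neumann (T : X →L[ℂ] X) (M : ℝ) (hT : ∀ n : ℕ, ‖T ^ n‖ ≤ M) (μ : ℂ)
    (hμ : 1 < ‖μ‖) : μ ∈ resolventSet ℂ T ∧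
      ∀ x : X, (‖μ‖ - 1) * ‖x‖ ≤ M * ‖μ • x - T x‖ := by
  have hμ0 : μ ≠ 0 := by
    rintro rfl; simp at hμ; linarith
  have hp : 0 < ‖μ‖ := by linarith
  have hle : ∀ n : ℕ, ‖(μ⁻¹ • T) ^ n‖ ≤ M * (‖μ‖⁻¹) ^ n := by
    intro n
    rw [smul_pow, norm_smul, norm_pow, norm_inv, mul_comm]
    gcongr
    exact hT n
  have hq1 : ‖μ‖⁻¹ < 1 := inv_lt_one_of_one_lt₀ hμ
  have hg := (hasSum_geometric_of_lt_one (by positivity) hq1).mul_left M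
  have hsum : Summable (fun n : ℕ => (μ⁻¹ • T) ^ n) := Summable.of_norm_bounded hg.summable hle
  have h1 := hsum.tsum_pow_mul_one_sub
  have h2 := hsum.one_sub_mul_tsum_pow
  have hR := tsum_of_norm_bounded hg hle
  set R := ∑' n : ℕ, (μ⁻¹ • T) ^ n with hRdef
  have hfac : algebraMap ℂ (X →L[ℂ] X) μ - T = μ • (1 - μ⁻¹ • T) := by
    rw [smul_sub, smul_smul, mul_inv_cancel₀ hμ0, one_smul, Algebra.algebraMap_eq_smul_one]
  constructor
  · rw [spectrum.mem_resolventSet_iff, hfac]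
    have hu : IsUnit (1 - μ⁻¹ • T) := ⟨⟨_, R, h2, h1⟩, rfl⟩
    exact (isUnit_smul_iff (Units.mk0 μ hμ0) _).2 hu
  · intro x
    have h3 : x = μ⁻¹ • R (μ • x - T x) := by
      have h4 : μ • x - T x = μ • ((1 - μ⁻¹ • T) x) := by
        simp [smul_sub, smul_smul, hμ0]
      have h5 : R ((1 - μ⁻¹ • T) x) = x := by
        have := congrArg (fun S : X →L[ℂ] X => S x) h1
        simpa using this
      rw [h4, map_smul, smul_smul, inv_mul_cancel₀ hμ0, one_smul, h5]
    have h6 : ‖x‖ ≤ ‖μ‖⁻¹ * ((M * (1 - ‖μ‖⁻¹)⁻¹) * ‖μ • x - T x‖) := by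
      calc ‖x‖ = ‖μ⁻¹ • R (μ • x - T x)‖ := by rw [← h3]
        _ = ‖μ‖⁻¹ * ‖R (μ • x - T x)‖ := by rw [norm_smul, norm_inv]
        _ ≤ _ := by
          gcongr
          exact R.le_of_opNorm_le hR _
    have h7 : ‖μ‖⁻¹ * ((M * (1 - ‖μ‖⁻¹)⁻¹) * ‖μ • x - T x‖)
        = (M * ‖μ • x - T x‖) / (‖μ‖ - 1) := by
      have : ‖μ‖ - 1 ≠ 0 := by linarith
      have h8 : (1 - ‖μ‖⁻¹) = (‖μ‖ - 1) / ‖μ‖ := by field_simp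
      rw [h8]
      field_simp
    rw [h7, le_div_iff₀ (by linarith)] at h6
    linarith

lemma kato_lower (T : X →L[ℂ] X) (M : ℝ) (hM : 1 ≤ M) (hT : ∀ n : ℕ, ‖T ^ n‖ ≤ M)
    (ζ : ℂ) (hζ : ‖ζ‖ = 1) (K : ℝ) (hK : 1 / 2 ≤ K)
    (hTK : ∀ n : ℕ, 1 ≤ n → ∀ x : X, ‖x‖ / K ≤ ‖ζ • x - (T ^ n) x‖)
    (w : ℂ) (hw : w ≠ 0) (hre : 0 ≤ w.re) :
    1 + w ∈ resolventSet ℂ T ∧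
      ∀ x : X, ‖w‖ * ‖x‖ ≤ 128 * (M ^ 2 * K) * ‖(1 + w) • x - T x‖ := by
  have hK0 : 0 < K := by linarith
  have hm0 : 0 < ‖w‖ := norm_pos_iff.2 hw
  have hρ2 : ‖1 + w‖ ^ 2 = 1 + 2 * w.re + ‖w‖ ^ 2 := by
    rw [Complex.sq_norm, Complex.sq_norm, Complex.normSq_apply, Complex.normSq_apply]
    simp; ring
  have hρ1 : 1 < ‖1 + w‖ := by nlinarith [norm_nonneg (1 + w)]
  obtain ⟨hmem, hlow⟩ := kato_neumann T M hT (1 + w) hρ1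
  refine ⟨hmem, fun x => ?_⟩
  have hMM : M ≤ M ^ 2 := by nlinarith
  suffices h : ‖w‖ * ‖x‖ ≤ 128 * (M * K) * ‖(1 + w) • x - T x‖ by
    refine h.trans ?_
    gcongr
  by_cases hs : ‖1 + w‖ - 1 < ‖w‖ / (128 * K)
  · obtain ⟨n, hn1, hn2, hn3⟩ := kato_scalar ζ hζ K hK w hw hre hs
    have hcomm : Commute (algebraMap ℂ (X →L[ℂ] X) (1 + w)) T := Algebra.commutes _ _
    have hg := hcomm.geom_sum₂_mul n
    have hgx := congrArg (fun S : X →L[ℂ] X => S x) hg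
    have e1 : (algebraMap ℂ (X →L[ℂ] X) (1 + w)) x = (1 + w) • x := by
      rw [Algebra.algebraMap_eq_smul_one]; simp
    have e2 : ((algebraMap ℂ (X →L[ℂ] X) (1 + w)) ^ n) x = (1 + w) ^ n • x := by
      rw [← map_pow, Algebra.algebraMap_eq_smul_one]; simp
    change (∑ i ∈ Finset.range n, (algebraMap ℂ (X →L[ℂ] X) (1 + w)) ^ i * T ^ (n - 1 - i))
      ((algebraMap ℂ (X →L[ℂ] X) (1 + w)) x - T x)
      = ((algebraMap ℂ (X →L[ℂ] X) (1 + w)) ^ n) x - (T ^ n) x at hgx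
    rw [e1, e2] at hgx
    have hnorm : ‖∑ i ∈ Finset.range n, (algebraMap ℂ (X →L[ℂ] X) (1 + w)) ^ i * T ^ (n - 1 - i)‖
        ≤ 60 / ‖w‖ * M := by
      calc _ ≤ ∑ i ∈ Finset.range n, ‖1 + w‖ ^ n * M := by
            refine norm_sum_le_of_le _ fun i hi => ?_
            rw [← map_pow, ← Algebra.smul_def, norm_smul, norm_pow]
            have hi' : i ≤ n := (Finset.mem_range.1 hi).le
            exact mul_le_mul (pow_le_pow_right₀ hρ1.le hi') (hT _) (norm_nonneg _) (by positivity)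
        _ = (n * ‖1 + w‖ ^ n) * M := by
            rw [Finset.sum_const, Finset.card_range, nsmul_eq_mul]; ring
        _ ≤ _ := by gcongr
    have hup : ‖(1 + w) ^ n • x - (T ^ n) x‖ ≤ 60 / ‖w‖ * M * ‖(1 + w) • x - T x‖ := by
      rw [← hgx]
      exact ContinuousLinearMap.le_of_opNorm_le _ hnorm _
    have hl : ‖x‖ / K ≤ ‖(1 + w) ^ n • x - (T ^ n) x‖ + 1 / (2 * K) * ‖x‖ := by
      refine (hTK n hn1 x).trans ?_
      have : ζ • x - (T ^ n) x = ((1 + w) ^ n • x - (T ^ n) x) - ((1 + w) ^ n - ζ) • x := by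
        rw [sub_smul]; abel
      rw [this]
      refine (norm_sub_le _ _).trans ?_
      gcongr
      rw [norm_smul]
      gcongr
    have h3 : ‖x‖ / (2 * K) ≤ 60 / ‖w‖ * M * ‖(1 + w) • x - T x‖ := by
      have : ‖x‖ / K - 1 / (2 * K) * ‖x‖ = ‖x‖ / (2 * K) := by field_simp; ring
      linarith
    rw [div_le_iff₀ (by positivity)] at h3
    have h4 : ‖w‖ * ‖x‖ ≤ ‖w‖ * (60 / ‖w‖ * M * ‖(1 + w) • x - T x‖ * (2 * K)) := by gcongr
    have h5 : ‖w‖ * (60 / ‖w‖ * M * ‖(1 + w) • x - T x‖ * (2 * K))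
      = 120 * (M * K) * ‖(1 + w) • x - T x‖ := by field_simp; ring
    rw [h5] at h4
    refine h4.trans ?_
    gcongr
    norm_num
  · push Not at hs
    rw [div_le_iff₀ (by positivity)] at hs
    calc ‖w‖ * ‖x‖ ≤ ((‖1 + w‖ - 1) * (128 * K)) * ‖x‖ := by gcongr
      _ = (128 * K) * ((‖1 + w‖ - 1) * ‖x‖) := by ring
      _ ≤ (128 * K) * (M * ‖(1 + w) • x - T x‖) := 
          mul_le_mul_of_nonneg_left (hlow x) (by positivity)
      _ = _ := by ring

lemma kato_res_A (T : X →L[ℂ] X) (M : ℝ) (hM : 1 ≤ M) (hT : ∀ n : ℕ, ‖T ^ n‖ ≤ M)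
    (ζ : ℂ) (hζ : ‖ζ‖ = 1) (K : ℝ) (hK : 1 / 2 ≤ K)
    (hTK : ∀ n : ℕ, 1 ≤ n → ∀ x : X, ‖x‖ / K ≤ ‖ζ • x - (T ^ n) x‖)
    (h : ℝ) (hh : 0 < h) (lam : ℂ) (hl : lam ≠ 0) (hre : 0 ≤ lam.re) :
    lam ∈ resolventSet ℂ ((h⁻¹ : ℂ) • (T - 1)) ∧
      ‖lam‖ * ‖resolvent ((h⁻¹ : ℂ) • (T - 1)) lam‖ ≤ 128 * (M ^ 2 * K) := by
  have hK0 : 0 < K := by linarith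
  have hhc : (h : ℂ) ≠ 0 := by exact_mod_cast hh.ne'
  have hw : (h : ℂ) * lam ≠ 0 := mul_ne_zero hhc hl
  have hwre : 0 ≤ ((h : ℂ) * lam).re := by
    simp; positivity
  obtain ⟨hmem, hlow⟩ := kato_lower T M hM hT ζ hζ K hK hTK (h * lam) hw hwre
  have hfac : algebraMap ℂ (X →L[ℂ] X) lam - (h⁻¹ : ℂ) • (T - 1)
      = (h⁻¹ : ℂ) • (algebraMap ℂ (X →L[ℂ] X) (1 + h * lam) - T) := by
    simp only [Algebra.algebraMap_eq_smul_one, smul_sub, smul_smul, mul_add, mul_one, add_smul,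
      smul_add, one_smul]
    rw [inv_mul_cancel_left₀ hhc]
    abel
  have hunit : IsUnit (algebraMap ℂ (X →L[ℂ] X) lam - (h⁻¹ : ℂ) • (T - 1)) := by
    rw [hfac]
    exact (isUnit_smul_iff (Units.mk0 (h⁻¹ : ℂ) (inv_ne_zero hhc)) _).2 hmem
  refine ⟨hunit, ?_⟩
  have hl0 : 0 < ‖lam‖ := norm_pos_iff.2 hl
  rw [← le_div_iff₀' hl0]
  refine ContinuousLinearMap.opNorm_le_bound _ (by positivity) fun y => ?_
  set x := resolvent ((h⁻¹ : ℂ) • (T - 1)) lam y with hx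
  have hxy : (algebraMap ℂ (X →L[ℂ] X) lam - (h⁻¹ : ℂ) • (T - 1)) x = y := by
    have := congrArg (fun S : X →L[ℂ] X => S y) (Ring.mul_inverse_cancel _ hunit)
    exact this
  have h2 := hlow x
  have h3 : (1 + h * lam) • x - T x = (h : ℂ) • y := by
    rw [← hxy, hfac]
    simp [smul_smul, hhc, Algebra.algebraMap_eq_smul_one]
  rw [h3, norm_smul, norm_mul, Complex.norm_real, Real.norm_eq_abs, abs_of_pos hh] at h2
  rw [div_mul_eq_mul_div, le_div_iff₀ hl0]
  have h4 : h * (‖x‖ * ‖lam‖) ≤ h * (128 * (M ^ 2 * K) * ‖y‖) := by linarith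
  exact le_of_mul_le_mul_left h4 hh

lemma kato_unit_perturb {𝔸 : Type*} [NormedRing 𝔸] [CompleteSpace 𝔸] (p q : 𝔸) (hp : IsUnit p)
    (h : ‖Ring.inverse p‖ * ‖p - q‖ ≤ 1 / 2) :
    IsUnit q ∧ ‖Ring.inverse q‖ ≤ 2 * ‖Ring.inverse p‖ := by
  set t := Ring.inverse p * (p - q) with ht
  have ht2 : ‖t‖ ≤ 1 / 2 := (norm_mul_le _ _).trans h
  have hq : q = p * (1 - t) := by
    rw [mul_sub, ht, ← mul_assoc, Ring.mul_inverse_cancel _ hp]; simp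
  have hu : IsUnit (1 - t) := isUnit_one_sub_of_norm_lt_one (by linarith)
  have hqu : IsUnit q := by rw [hq]; exact hp.mul hu
  refine ⟨hqu, ?_⟩
  have e : Ring.inverse q = Ring.inverse p + t * Ring.inverse q := by
    have h1 : (1 - t) = Ring.inverse p * q := by
      rw [hq, ← mul_assoc, Ring.inverse_mul_cancel _ hp, one_mul]
    have h2 : (1 - t) * Ring.inverse q = Ring.inverse p := by
      rw [h1, mul_assoc, Ring.mul_inverse_cancel _ hqu, mul_one]
    rw [← h2]; noncomm_ring
  have h3 : ‖Ring.inverse q‖ ≤ ‖Ring.inverse p‖ + ‖t‖ * ‖Ring.inverse q‖ := by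
    conv_lhs => rw [e]
    exact (norm_add_le _ _).trans (by gcongr; exact norm_mul_le _ _)
  nlinarith [norm_nonneg (Ring.inverse q)]

lemma kato_sector {𝔸 : Type*} [NormedRing 𝔸] [NormedAlgebra ℂ 𝔸] [CompleteSpace 𝔸]
    (h1 : ‖(1 : 𝔸)‖ ≤ 1) (a : 𝔸) (L δ : ℝ) (hδL : 2 * δ * L ≤ 1 / 2) (hδ : 0 ≤ δ) (hL : 0 ≤ L)
    (hres : ∀ lam : ℂ, lam ≠ 0 → 0 ≤ lam.re → lam ∈ resolventSet ℂ a ∧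
      ‖lam‖ * ‖resolvent a lam‖ ≤ L)
    (z : ℂ) (hz : z ≠ 0) (harg : |z.arg| ≤ δ) (u θ : ℝ) (hθ : |θ| ≤ Real.pi / 2 + δ) :
    cexp (u + θ * I) ∈ resolventSet ℂ (z • a) ∧
      Real.exp u * ‖resolvent (z • a) (cexp (u + θ * I))‖ ≤ 2 * L := by
  have hpi := Real.pi_pos
  set ψ := θ - z.arg with hψ
  have hψle : |ψ| ≤ Real.pi / 2 + 2 * δ := by
    rw [hψ]; exact (abs_sub _ _).trans (by linarith)
  obtain ⟨θ0, hθ0, hd⟩ : ∃ θ0 : ℝ, |θ0| ≤ Real.pi / 2 ∧ |ψ - θ0| ≤ 2 * δ := by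
    refine ⟨max (-(Real.pi / 2)) (min ψ (Real.pi / 2)), ?_, ?_⟩
    · rw [abs_le]
      exact ⟨le_max_left _ _, max_le (by linarith) (min_le_right _ _)⟩
    · rw [abs_le] at hψle ⊢
      rcases le_total ψ (Real.pi / 2) with h | h
      · rw [min_eq_left h]
        rcases le_total (-(Real.pi / 2)) ψ with h' | h'
        · rw [max_eq_right h']; constructor <;> linarith
        · rw [max_eq_left h']; constructor <;> linarith
      · rw [min_eq_right h, max_eq_right (by linarith)]; constructor <;> linarith
  have hzn : 0 < ‖z‖ := norm_pos_iff.2 hz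
  set v := u - Real.log ‖z‖ with hv
  set l0 := cexp (v + θ0 * I) with hl0
  set l1 := cexp (v + ψ * I) with hl1
  have hl0n : ‖l0‖ = Real.exp v := by simp [hl0, Complex.norm_exp]
  have hl0re : 0 ≤ l0.re := by
    rw [hl0, Complex.exp_re]
    have : 0 ≤ Real.cos θ0 := Real.cos_nonneg_of_mem_Icc (abs_le.1 hθ0)
    simp
    positivity
  obtain ⟨hm, hR⟩ := hres l0 (Complex.exp_ne_zero _) hl0re
  rw [hl0n] at hR
  have hdiff : ‖l0 - l1‖ ≤ Real.exp v * (2 * δ) := by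
    have : l0 - l1 = -(l0 * (cexp (I * ((ψ - θ0 : ℝ) : ℂ)) - 1)) := by
      rw [mul_sub, hl0, ← Complex.exp_add, hl1]
      have : (v : ℂ) + θ0 * I + I * ((ψ - θ0 : ℝ) : ℂ) = v + ψ * I := by push_cast; ring
      rw [this]; ring
    rw [this, norm_neg, norm_mul, hl0n]
    gcongr
    exact (Real.norm_exp_I_mul_ofReal_sub_one_le).trans hd
  have hzl : z * l1 = cexp (u + θ * I) := by
    conv_lhs => rw [← Complex.norm_mul_exp_arg_mul_I z, ← Real.exp_log hzn]
    rw [Complex.ofReal_exp, ← Complex.exp_add, hl1, ← Complex.exp_add]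
    congr 1
    rw [hv, hψ]; push_cast; ring
  have hpq : ‖(algebraMap ℂ 𝔸 l0 - a) - (algebraMap ℂ 𝔸 l1 - a)‖ ≤ ‖l0 - l1‖ := by
    have : (algebraMap ℂ 𝔸 l0 - a) - (algebraMap ℂ 𝔸 l1 - a) = (l0 - l1) • (1 : 𝔸) := by
      simp only [Algebra.algebraMap_eq_smul_one, sub_smul]; abel
    rw [this, norm_smul]
    calc _ ≤ ‖l0 - l1‖ * 1 := by gcongr
      _ = _ := mul_one _
  have hpert := kato_unit_perturb (algebraMap ℂ 𝔸 l0 - a) (algebraMap ℂ 𝔸 l1 - a) hm (by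
    change ‖resolvent a l0‖ * _ ≤ _
    calc _ ≤ ‖resolvent a l0‖ * (Real.exp v * (2 * δ)) := by
          gcongr; exact hpq.trans hdiff
      _ = (Real.exp v * ‖resolvent a l0‖) * (2 * δ) := by ring
      _ ≤ L * (2 * δ) := by gcongr
      _ ≤ 1 / 2 := by linarith)
  obtain ⟨hq1, hq2⟩ := hpert
  change ‖resolvent a l1‖ ≤ 2 * ‖resolvent a l0‖ at hq2
  have hfac : algebraMap ℂ 𝔸 (cexp (u + θ * I)) - z • a = z • (algebraMap ℂ 𝔸 l1 - a) := by
    rw [← hzl]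
    simp only [Algebra.algebraMap_eq_smul_one, smul_sub, smul_smul]
  refine ⟨?_, ?_⟩
  · change IsUnit _
    rw [hfac]
    exact (isUnit_smul_iff (Units.mk0 z hz) _).2 hq1
  · have hr := spectrum.units_smul_resolvent (r := (Units.mk0 z hz)⁻¹) (s := l1) (a := a)
    rw [inv_inv] at hr
    simp only [Units.smul_def, Units.val_mk0, Units.val_inv_eq_inv_val, smul_eq_mul] at hr
    rw [hzl] at hr
    rw [← hr, norm_smul, norm_inv]
    have hexp : Real.exp u * ‖z‖⁻¹ = Real.exp v := by
      rw [hv, Real.exp_sub, Real.exp_log hzn]; rfl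
    rw [← mul_assoc, hexp]
    calc Real.exp v * ‖resolvent a l1‖ ≤ Real.exp v * (2 * ‖resolvent a l0‖) := by gcongr
      _ = 2 * (Real.exp v * ‖resolvent a l0‖) := by ring
      _ ≤ _ := by gcongr

end Resolvent
section Uniform

open Complex

variable {X : Type*} [NormedAddCommGroup X] [NormedSpace ℂ X] [CompleteSpace X]

lemma kato_const (C : ℝ) (hC : 1 / 2 ≤ C) :
    1 ≤ 10240 * C * (1 + Real.log C) ∧ ∀ δ : ℝ, δ = (1 / 512) / C →
    0 < δ ∧ δ < Real.pi / 2 ∧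
    2 * (128 * C) * (3 + Real.log ((1 + Real.sin δ) / Real.sin δ))
      ≤ 10240 * C * (1 + Real.log C) := by
  have hC0 : 0 < C := by linarith
  have hl2 := Real.log_two_lt_d9
  have hl2' := Real.log_two_gt_d9
  have hlog : -0.7 ≤ Real.log C := by
    have : Real.log (1 / 2) ≤ Real.log C := Real.log_le_log (by norm_num) hC
    rw [one_div, Real.log_inv] at this
    linarith
  refine ⟨by nlinarith, ?_⟩
  intro δ hδ
  have hpi := Real.pi_gt_three
  have hδ0 : 0 < δ := by rw [hδ]; positivity
  have hδ1 : δ < 1 := by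
    rw [hδ, div_lt_iff₀ hC0]; linarith
  refine ⟨hδ0, by linarith, ?_⟩
  have hs1 : δ / 2 ≤ Real.sin δ := by
    have h := Real.mul_le_sin hδ0.le (by linarith)
    refine le_trans ?_ h
    have : 1 / 2 ≤ 2 / Real.pi := by
      rw [div_le_div_iff₀ (by norm_num) Real.pi_pos]; linarith [Real.pi_lt_four]
    nlinarith
  have hs0 : 0 < Real.sin δ := by linarith
  have hs2 := Real.sin_le_one δ
  have hq : (1 + Real.sin δ) / Real.sin δ ≤ 2 ^ 11 * C := by
    rw [div_le_iff₀ hs0]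
    have h1 : δ * C = 1 / 512 := by rw [hδ]; field_simp
    nlinarith
  have hlg : Real.log ((1 + Real.sin δ) / Real.sin δ) ≤ 11 * Real.log 2 + Real.log C := by
    refine (Real.log_le_log (by positivity) hq).trans ?_
    rw [Real.log_mul (by norm_num) hC0.ne', Real.log_pow]
    norm_num
  nlinarith

lemma kato_unif (T : X →L[ℂ] X) (M : ℝ) (hM : 1 ≤ M) (hT : ∀ n : ℕ, ‖T ^ n‖ ≤ M)
    (ζ : ℂ) (hζ : ‖ζ‖ = 1) (K : ℝ) (hK : 1 / 2 ≤ K)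
    (hTK : ∀ n : ℕ, 1 ≤ n → ∀ x : X, ‖x‖ / K ≤ ‖ζ • x - (T ^ n) x‖)
    (h : ℝ) (hh : 0 < h) (z : ℂ) (hz : |z.arg| ≤ (1 / 512) / (M ^ 2 * K)) :
    ‖NormedSpace.exp (z • ((h⁻¹ : ℂ) • (T - 1)))‖
      ≤ 10240 * (M ^ 2 * K) * (1 + Real.log (M ^ 2 * K)) := by
  have hC : 1 / 2 ≤ M ^ 2 * K := by nlinarith
  have hC0 : 0 < M ^ 2 * K := by linarith
  have h1 : ‖(1 : X →L[ℂ] X)‖ ≤ 1 := ContinuousLinearMap.norm_id_le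
  obtain ⟨hB, hc⟩ := kato_const (M ^ 2 * K) hC
  obtain ⟨hδ0, hδ1, hle⟩ := hc _ rfl
  by_cases hz0 : z = 0
  · rw [hz0, zero_smul, NormedSpace.exp_zero]
    exact h1.trans hB
  refine le_trans (kato_exp_bound _ h1 ((1 / 512) / (M ^ 2 * K)) (2 * (128 * (M ^ 2 * K)))
    hδ0 hδ1 (by positivity) ?_) hle
  intro u θ hθ
  refine kato_sector h1 _ (128 * (M ^ 2 * K)) ((1 / 512) / (M ^ 2 * K)) ?_ hδ0.le (by positivity)
    (fun lam hl hre => kato_res_A T M hM hT ζ hζ K hK hTK h hh lam hl hre) z hz0 hz u θ hθ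
  apply le_of_eq
  field_simp
  norm_num

end Uniform
section Limits

open Complex

variable {X : Type*} [NormedAddCommGroup X] [NormedSpace ℂ X] [CompleteSpace X]

lemma kato_conv_approx (u : ℕ → X)
    (h : ∀ ε : ℝ, 0 < ε → ∃ v : ℕ → X, ∃ l : X, Tendsto v atTop (𝓝 l) ∧ ∀ n, ‖u n - v n‖ ≤ ε) :
    ∃ l, Tendsto u atTop (𝓝 l) := by
  apply cauchySeq_tendsto_of_complete
  rw [Metric.cauchySeq_iff']
  intro ε hε
  obtain ⟨v, l, hv, huv⟩ := h (ε / 4) (by linarith)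
  obtain ⟨N, hN⟩ := (Metric.cauchySeq_iff'.1 hv.cauchySeq) (ε / 4) (by linarith)
  refine ⟨N, fun n hn => ?_⟩
  have h1 := hN n hn
  rw [dist_eq_norm] at h1 ⊢
  have h2 := huv n
  have h3 := huv N
  have e : u n - u N = (u n - v n) + (v n - v N) - (u N - v N) := by abel
  rw [e]
  have h4 := norm_sub_le ((u n - v n) + (v n - v N)) (u N - v N)
  have h5 := norm_add_le (u n - v n) (v n - v N)
  linarith

lemma kato_strong_limit (F : ℕ → X →L[ℂ] X) (h : ∀ x, ∃ l, Tendsto (fun n => F n x) atTop (𝓝 l)) :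
    ∃ R : X →L[ℂ] X, ∀ x, Tendsto (fun n => F n x) atTop (𝓝 (R x)) := by
  choose f hf using h
  refine ⟨continuousLinearMapOfTendsto F (f := f) (tendsto_pi_nhds.2 hf), fun x => hf x⟩

lemma kato_taylor {E : Type*} [NormedAddCommGroup E] [NormedSpace ℂ E] (F : ℂ → E)
    (hF : Differentiable ℂ F) (z0 : ℂ) (r B : ℝ) (hr : 0 < r)
    (hB : ∀ w ∈ Metric.ball z0 r, ‖F w‖ ≤ B) (w : ℂ) (hw : w ∈ Metric.ball z0 r) :
    ‖F w - F z0 - (w - z0) • deriv F z0‖ ≤ 4 * B * (‖w - z0‖ / r) ^ 2 := by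
  have hB0 := hB z0 (Metric.mem_ball_self hr)
  have hd : ‖deriv F z0‖ ≤ 2 * B / r := by
    refine Complex.norm_deriv_le_div_of_mapsTo_ball hF.differentiableOn ?_ hr
    intro v hv
    rw [mem_closedBall_iff_norm]
    have := norm_sub_le (F v) (F z0)
    have := hB v hv
    linarith
  set f : ℂ → E := fun v => F v - (v - z0) • deriv F z0 with hf
  have hfd : Differentiable ℂ f := by
    intro v
    exact (hF v).sub (((differentiableAt_id).sub_const z0).smul_const _)
  have hf0 : f z0 = F z0 := by simp [hf]
  have key := Complex.dist_le_mul_div_pow_of_mapsTo_ball_of_isLittleO (f := f) (c := z0) (z := w)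
    (R₁ := r) (R₂ := 4 * B) (n := 1) hfd.differentiableOn ?_ ?_ hw
  · rw [hf0, dist_eq_norm, dist_eq_norm] at key
    have e : F w - F z0 - (w - z0) • deriv F z0 = f w - F z0 := by
      change _ = F w - (w - z0) • deriv F z0 - F z0
      abel
    rw [e]
    exact key
  · intro v hv
    rw [mem_closedBall_iff_norm, hf0]
    have h1 := hB v hv
    have h2 : ‖(v - z0) • deriv F z0‖ ≤ r * (2 * B / r) := by
      rw [norm_smul]
      gcongr
      exact (mem_ball_iff_norm.1 hv).le
    have h3 : r * (2 * B / r) = 2 * B := by field_simp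
    have h4 : f v - F z0 = F v - F z0 - (v - z0) • deriv F z0 := by simp only [hf]; abel
    rw [h4]
    have := norm_sub_le (F v - F z0) ((v - z0) • deriv F z0)
    have := norm_sub_le (F v) (F z0)
    linarith
  · have := (hF z0).hasDerivAt.isLittleO
    simp only [hf0]
    refine (this.norm_right.congr_left ?_).congr_right ?_
    · intro v; simp only [hf]; abel
    · intro v; simp

lemma kato_holo (F : ℕ → ℂ → X →L[ℂ] X) (hF : ∀ n, Differentiable ℂ (F n)) (z0 : ℂ) (r B : ℝ)
    (hr : 0 < r) (hB : ∀ n, ∀ w ∈ Metric.ball z0 r, ‖F n w‖ ≤ B) (S : ℂ → X →L[ℂ] X)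
    (hS : ∀ w ∈ Metric.ball z0 r, ∀ x, Tendsto (fun n => F n w x) atTop (𝓝 (S w x))) :
    DifferentiableAt ℂ S z0 := by
  have hz0 := Metric.mem_ball_self (x := z0) hr
  have hB0 : 0 ≤ B := (norm_nonneg _).trans (hB 0 z0 hz0)
  have tay : ∀ n, ∀ w ∈ Metric.ball z0 r, ∀ x, ‖F n w x - F n z0 x - (w - z0) • deriv (F n) z0 x‖
      ≤ 4 * B * (‖w - z0‖ / r) ^ 2 * ‖x‖ := by
    intro n w hw x
    exact ContinuousLinearMap.le_of_opNorm_le _ (kato_taylor (F n) (hF n) z0 r B hr (hB n) w hw) x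
  obtain ⟨R, hR⟩ := kato_strong_limit (fun n => deriv (F n) z0) (by
    intro x
    apply kato_conv_approx
    intro ε hε
    obtain ⟨s, hs0, hsr, hs⟩ : ∃ s : ℝ, 0 < s ∧ s < r ∧ 4 * B * s / r ^ 2 * ‖x‖ ≤ ε := by
      have hc : Tendsto (fun s : ℝ => 4 * B * s / r ^ 2 * ‖x‖) (𝓝[>] 0) (𝓝 0) := by
        have : Continuous (fun s : ℝ => 4 * B * s / r ^ 2 * ‖x‖) := by fun_prop
        have h := this.tendsto 0
        simp only [mul_zero, zero_div, zero_mul] at h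
        exact h.mono_left nhdsWithin_le_nhds
      have h1 := hc.eventually (eventually_le_nhds hε)
      have h2 : ∀ᶠ s : ℝ in 𝓝[>] 0, s < r := nhdsWithin_le_nhds (eventually_lt_nhds hr)
      obtain ⟨s, ⟨hs1, hs2⟩, hs3⟩ := ((h1.and h2).and self_mem_nhdsWithin).exists
      exact ⟨s, hs3, hs2, hs1⟩
    have hsc : (s : ℂ) ≠ 0 := by exact_mod_cast hs0.ne'
    have hw : z0 + s ∈ Metric.ball z0 r := by
      simp [abs_of_pos hs0, hsr]
    refine ⟨fun n => (s : ℂ)⁻¹ • (F n (z0 + s) x - F n z0 x), _,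
      ((hS _ hw x).sub (hS _ hz0 x)).const_smul _, fun n => ?_⟩
    have h := tay n _ hw x
    rw [add_sub_cancel_left] at h
    have e : deriv (F n) z0 x - (s : ℂ)⁻¹ • (F n (z0 + s) x - F n z0 x)
        = -((s : ℂ)⁻¹ • (F n (z0 + s) x - F n z0 x - (s : ℂ) • deriv (F n) z0 x)) := by
      rw [smul_sub _ _ ((s : ℂ) • _), smul_smul, inv_mul_cancel₀ hsc, one_smul]; abel
    rw [e, norm_neg, norm_smul, norm_inv]
    rw [Complex.norm_real, Real.norm_eq_abs, abs_of_pos hs0] at h ⊢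
    refine le_trans ?_ hs
    calc s⁻¹ * _ ≤ s⁻¹ * (4 * B * (s / r) ^ 2 * ‖x‖) := by gcongr
      _ = _ := by field_simp)
  refine HasDerivAt.differentiableAt (f' := R) ?_
  rw [hasDerivAt_iff_isLittleO]
  have hO : (fun w => S w - S z0 - (w - z0) • R) =O[𝓝 z0] (fun w => ‖w - z0‖ ^ 2) := by
    refine Asymptotics.IsBigO.of_bound (4 * B / r ^ 2) ?_
    filter_upwards [Metric.ball_mem_nhds z0 hr] with w hw
    refine ContinuousLinearMap.opNorm_le_bound _ (by positivity) fun x => ?_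
    have ht := (((hS w hw x).sub (hS z0 hz0 x)).sub ((hR x).const_smul (w - z0))).norm
    refine (le_of_tendsto' ht (fun n => tay n w hw x)).trans (le_of_eq ?_)
    rw [norm_pow, norm_norm]
    field_simp
  refine hO.trans_isLittleO ?_
  have h2 : (fun w : ℂ => ‖w - z0‖ ^ 2) = (fun w : ℂ => ‖(w - z0) ^ 2‖) := by
    funext w; rw [norm_pow]
  rw [h2, Asymptotics.isLittleO_norm_left]
  have h3 := (Asymptotics.isLittleO_pow_id (𝕜 := ℂ) (n := 2) (by norm_num))
  have h4 : Tendsto (fun w : ℂ => w - z0) (𝓝 z0) (𝓝 0) := by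
    have : Continuous (fun w : ℂ => w - z0) := by fun_prop
    simpa using this.tendsto z0
  exact h3.comp_tendsto h4

end Limits
section Telescope

open Complex

variable {X : Type*} [NormedAddCommGroup X] [NormedSpace ℂ X] [CompleteSpace X]

lemma kato_telescope (P Q : X →L[ℂ] X) (hPQ : Commute P Q) (B₁ B₂ : ℝ)
    (hP : ∀ i : ℕ, ‖P ^ i‖ ≤ B₁) (hQ : ∀ i : ℕ, ‖Q ^ i‖ ≤ B₂) (k : ℕ) (x : X) :
    ‖(P ^ k) x - (Q ^ k) x‖ ≤ B₁ * B₂ * ‖(k : ℂ) • (P x - Q x)‖ := by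
  have hB : 0 ≤ B₁ := (norm_nonneg _).trans (hP 0)
  have hg := hPQ.geom_sum₂_mul k
  have hgx := congrArg (fun S : X →L[ℂ] X => S x) hg
  change (∑ i ∈ Finset.range k, P ^ i * Q ^ (k - 1 - i)) (P x - Q x)
      = (P ^ k) x - (Q ^ k) x at hgx
  have hnorm : ‖∑ i ∈ Finset.range k, P ^ i * Q ^ (k - 1 - i)‖ ≤ k * (B₁ * B₂) := by
    calc _ ≤ ∑ i ∈ Finset.range k, B₁ * B₂ := by
          refine norm_sum_le_of_le _ fun i hi => ?_
          exact (norm_mul_le _ _).trans (mul_le_mul (hP _) (hQ _) (norm_nonneg _) hB)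
      _ = _ := by rw [Finset.sum_const, Finset.card_range, nsmul_eq_mul]
  rw [← hgx, norm_smul, Complex.norm_natCast]
  refine (ContinuousLinearMap.le_of_opNorm_le _ hnorm _).trans (le_of_eq ?_)
  ring

lemma kato_telescope_lim (P Q : ℕ → X →L[ℂ] X) (hPQ : ∀ k, Commute (P k) (Q k)) (B₁ B₂ : ℝ)
    (hP : ∀ k i : ℕ, ‖P k ^ i‖ ≤ B₁) (hQ : ∀ k i : ℕ, ‖Q k ^ i‖ ≤ B₂)
    (p q : X →L[ℂ] X) (hp : ∀ k, 0 < k → P k ^ k = p) (hq : ∀ k, 0 < k → Q k ^ k = q) (x u v : X)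
    (hu : Tendsto (fun k : ℕ => (k : ℂ) • (P k x - x)) atTop (𝓝 u))
    (hv : Tendsto (fun k : ℕ => (k : ℂ) • (Q k x - x)) atTop (𝓝 v)) :
    ‖p x - q x‖ ≤ B₁ * B₂ * ‖u - v‖ := by
  have ht := ((hu.sub hv).norm).const_mul (B₁ * B₂)
  refine ge_of_tendsto ht ?_
  filter_upwards [eventually_gt_atTop 0] with k hk
  have h := kato_telescope (P k) (Q k) (hPQ k) B₁ B₂ (hP k) (hQ k) k x
  rw [hp k hk, hq k hk] at h
  rw [← smul_sub, sub_sub_sub_cancel_right]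
  exact h

lemma kato_exp_pow (a : X →L[ℂ] X) (z : ℂ) (i : ℕ) :
    NormedSpace.exp (z • a) ^ i = NormedSpace.exp (((i : ℂ) * z) • a) := by
  let +nondep : NormedAlgebra ℚ (X →L[ℂ] X) := .restrictScalars ℚ ℂ _
  rw [← NormedSpace.exp_nsmul, ← Nat.cast_smul_eq_nsmul ℂ, smul_smul]

lemma kato_exp_add (a : X →L[ℂ] X) (z w : ℂ) :
    NormedSpace.exp ((z + w) • a) = NormedSpace.exp (z • a) * NormedSpace.exp (w • a) := by
  let +nondep : NormedAlgebra ℚ (X →L[ℂ] X) := .restrictScalars ℚ ℂ _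
  rw [add_smul, NormedSpace.exp_add_of_commute (((Commute.refl a).smul_left _).smul_right _)]

lemma kato_exp_lim (a : X →L[ℂ] X) (z : ℂ) (x : X) :
    Tendsto (fun k : ℕ => (k : ℂ) • (NormedSpace.exp ((z / k) • a) x - x)) atTop (𝓝 (z • a x)) := by
  have h0 : HasDerivAt (fun u : ℂ => NormedSpace.exp (u • (z • a))) (z • a) 0 := by
    have := hasDerivAt_exp_smul_const (𝕂 := ℂ) (z • a) (0 : ℂ)
    rwa [zero_smul, NormedSpace.exp_zero, one_mul] at this
  have h1 := hasDerivAt_iff_tendsto_slope_zero.1 h0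
  have h2 : Tendsto (fun k : ℕ => (k : ℂ)⁻¹) atTop (𝓝[≠] 0) := by
    rw [tendsto_nhdsWithin_iff]
    refine ⟨tendsto_inv_atTop_nhds_zero_nat (𝕜 := ℂ), ?_⟩
    filter_upwards [eventually_gt_atTop 0] with k hk
    simp [hk.ne']
  have h3 := h1.comp h2
  have h4 := (ContinuousLinearMap.apply ℂ X x).continuous.tendsto _ |>.comp h3
  refine h4.congr fun k => ?_
  simp [Function.comp_def, smul_smul, div_eq_inv_mul]

lemma kato_arg_nat (z : ℂ) (δ : ℝ) (hδ : 0 ≤ δ) (hz : |z.arg| ≤ δ) (r : ℝ) (hr : 0 ≤ r) :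
    |((r : ℂ) * z).arg| ≤ δ := by
  rcases hr.eq_or_lt with h | h
  · rw [← h]; simpa using hδ
  · rwa [Complex.arg_real_mul _ h]

lemma kato_div_bound (a : X →L[ℂ] X) (δ B : ℝ) (hδ : 0 ≤ δ)
    (ha : ∀ z : ℂ, |z.arg| ≤ δ → ‖NormedSpace.exp (z • a)‖ ≤ B)
    (z : ℂ) (hz : |z.arg| ≤ δ) (k i : ℕ) : ‖NormedSpace.exp ((z / k) • a) ^ i‖ ≤ B := by
  rw [kato_exp_pow]
  apply ha
  have := kato_arg_nat z δ hδ hz (i / k) (by positivity)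
  convert this using 3
  push_cast; ring

lemma kato_exp_div_pow (a : X →L[ℂ] X) (z : ℂ) (k : ℕ) (hk : 0 < k) :
    NormedSpace.exp ((z / k) • a) ^ k = NormedSpace.exp (z • a) := by
  have : (k : ℂ) ≠ 0 := by exact_mod_cast hk.ne'
  rw [kato_exp_pow, mul_div_cancel₀ _ this]

lemma kato_compare (a b : X →L[ℂ] X) (hab : Commute a b) (δ B : ℝ) (hδ : 0 ≤ δ)
    (ha : ∀ z : ℂ, |z.arg| ≤ δ → ‖NormedSpace.exp (z • a)‖ ≤ B)
    (hb : ∀ z : ℂ, |z.arg| ≤ δ → ‖NormedSpace.exp (z • b)‖ ≤ B) (z : ℂ) (hz : |z.arg| ≤ δ) (x : X) :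
    ‖NormedSpace.exp (z • a) x - NormedSpace.exp (z • b) x‖ ≤ B * B * ‖z • a x - z • b x‖ := by
  let +nondep : NormedAlgebra ℚ (X →L[ℂ] X) := .restrictScalars ℚ ℂ _
  refine kato_telescope_lim (fun k => NormedSpace.exp ((z / k) • a))
    (fun k => NormedSpace.exp ((z / k) • b)) (fun k => ?_) B B
    (kato_div_bound a δ B hδ ha z hz) (kato_div_bound b δ B hδ hb z hz) _ _
    (kato_exp_div_pow a z) (kato_exp_div_pow b z) x _ _ (kato_exp_lim a z x) (kato_exp_lim b z x)
  exact ((hab.smul_left _).smul_right _).exp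

end Telescope
section Abstract

open Complex

variable {X : Type*} [NormedAddCommGroup X] [NormedSpace ℂ X] [CompleteSpace X]

lemma kato_abstract (A : ℕ → X →L[ℂ] X) (hA : ∀ n m, Commute (A n) (A m)) (δ B : ℝ) (hδ : 0 < δ)
    (hδ1 : δ < Real.pi / 2) (hB : 1 ≤ B)
    (hE : ∀ n, ∀ z : ℂ, |z.arg| ≤ δ → ‖NormedSpace.exp (z • A n)‖ ≤ B)
    (D : Set X) (hD : Dense D) (hAD : ∀ x ∈ D, ∃ y, Tendsto (fun n => A n x) atTop (𝓝 y)) :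
    ∃ S : ℂ → X →L[ℂ] X,
      (∀ z : ℂ, |z.arg| ≤ δ → ∀ x,
        Tendsto (fun n => NormedSpace.exp (z • A n) x) atTop (𝓝 (S z x))) ∧
      (∀ z₁ z₂ : ℂ, |z₁.arg| ≤ δ → |z₂.arg| ≤ δ → S (z₁ + z₂) = (S z₁).comp (S z₂)) ∧
      DifferentiableOn ℂ S {z : ℂ | z ≠ 0 ∧ |z.arg| < δ} ∧
      (∀ x : X, Tendsto (fun z => S z x)
          (nhdsWithin 0 {z : ℂ | z ≠ 0 ∧ |z.arg| ≤ δ}) (nhds x)) ∧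
      ∀ z : ℂ, |z.arg| ≤ δ → ‖S z‖ ≤ B := by
  classical
  have hB0 : 0 < B := by linarith
  have hone : ‖(1 : X →L[ℂ] X)‖ ≤ 1 := ContinuousLinearMap.norm_id_le
  have hex : ∀ z : ℂ, |z.arg| ≤ δ → ∃ R : X →L[ℂ] X, ∀ x,
      Tendsto (fun n => NormedSpace.exp (z • A n) x) atTop (𝓝 (R x)) := by
    intro z hz
    apply kato_strong_limit
    intro x
    apply kato_conv_approx
    intro ε hε
    obtain ⟨x', hx', hxx⟩ := hD.exists_dist_lt x (div_pos hε hB0)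
    obtain ⟨y, hy⟩ := hAD x' hx'
    have hcs : CauchySeq (fun n => NormedSpace.exp (z • A n) x') := by
      rw [Metric.cauchySeq_iff']
      intro η hη
      have hc2 := hy.cauchySeq
      rw [Metric.cauchySeq_iff'] at hc2
      obtain ⟨N, hN⟩ := hc2 (η / (B * B * (‖z‖ + 1))) (by positivity)
      refine ⟨N, fun n hn => ?_⟩
      have h1 := hN n hn
      rw [dist_eq_norm, lt_div_iff₀ (by positivity)] at h1
      rw [dist_eq_norm]
      refine (kato_compare (A n) (A N) (hA n N) δ B hδ.le (hE n) (hE N) z hz x').trans_lt ?_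
      rw [← smul_sub, norm_smul]
      refine lt_of_le_of_lt ?_ h1
      have := norm_nonneg (A n x' - A N x')
      have h3 : 0 ≤ B * B * ‖A n x' - A N x'‖ := by positivity
      nlinarith
    obtain ⟨l, hl⟩ := cauchySeq_tendsto_of_complete hcs
    refine ⟨_, l, hl, fun n => ?_⟩
    rw [← map_sub]
    refine (ContinuousLinearMap.le_of_opNorm_le _ (hE n z hz) _).trans ?_
    rw [dist_eq_norm, lt_div_iff₀ hB0] at hxx
    linarith
  set S : ℂ → X →L[ℂ] X := fun z =>
    if h : ∃ R : X →L[ℂ] X, ∀ x,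
      Tendsto (fun n => NormedSpace.exp (z • A n) x) atTop (𝓝 (R x)) then h.choose else 0 with hSdef
  have hS1 : ∀ z, ∀ R : X →L[ℂ] X, (∀ x,
      Tendsto (fun n => NormedSpace.exp (z • A n) x) atTop (𝓝 (R x))) → S z = R := by
    intro z R hR
    have hh : ∃ R : X →L[ℂ] X, ∀ x,
      Tendsto (fun n => NormedSpace.exp (z • A n) x) atTop (𝓝 (R x)) := ⟨R, hR⟩
    have e : S z = hh.choose := by simp only [hSdef]; rw [dif_pos hh]
    ext x
    rw [e]
    exact tendsto_nhds_unique (hh.choose_spec x) (hR x)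
  have hS2 : ∀ z : ℂ, |z.arg| ≤ δ → ∀ x,
        Tendsto (fun n => NormedSpace.exp (z • A n) x) atTop (𝓝 (S z x)) := by
    intro z hz
    obtain ⟨R, hR⟩ := hex z hz
    rw [hS1 z R hR]
    exact hR
  clear_value S
  have hSB : ∀ z : ℂ, |z.arg| ≤ δ → ‖S z‖ ≤ B := by
    intro z hz
    refine ContinuousLinearMap.opNorm_le_bound _ hB0.le fun x => ?_
    exact le_of_tendsto' (hS2 z hz x).norm
      (fun n => ContinuousLinearMap.le_of_opNorm_le _ (hE n z hz) _)
  refine ⟨S, hS2, ?_, ?_, ?_, hSB⟩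
  · intro z₁ z₂ h₁ h₂
    apply hS1
    intro x
    have ha := hS2 z₁ h₁ (S z₂ x)
    have hb : Tendsto (fun n => NormedSpace.exp (z₁ • A n) (NormedSpace.exp (z₂ • A n) x - S z₂ x))
        atTop (𝓝 0) := by
      have h := ((hS2 z₂ h₂ x).sub_const (S z₂ x)).norm.const_mul B
      rw [sub_self, norm_zero, mul_zero] at h
      exact squeeze_zero_norm (fun n => ContinuousLinearMap.le_of_opNorm_le _ (hE n z₁ h₁) _) h
    have hab := hb.add ha
    rw [zero_add] at hab
    refine hab.congr fun n => ?_
    rw [kato_exp_add, map_sub, sub_add_cancel]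
    rfl
  · intro z0 hz0
    apply DifferentiableAt.differentiableWithinAt
    have hslit : z0 ∈ Complex.slitPlane := by
      rw [Complex.mem_slitPlane_iff_arg]
      refine ⟨?_, hz0.1⟩
      intro h
      have := hz0.2
      rw [h, abs_of_pos Real.pi_pos] at this
      linarith [Real.pi_pos]
    have hopen : ∀ᶠ w in 𝓝 z0, |w.arg| < δ := by
      have hc : ContinuousAt (fun w : ℂ => |w.arg|) z0 := (Complex.continuousAt_arg hslit).abs
      exact hc.eventually (eventually_lt_nhds hz0.2)
    obtain ⟨r, hr, hball⟩ := Metric.eventually_nhds_iff_ball.1 hopen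
    refine kato_holo (fun n z => NormedSpace.exp (z • A n))
      (fun n z => (hasDerivAt_exp_smul_const (𝕂 := ℂ) (A n) z).differentiableAt) z0 r B hr
      (fun n w hw => hE n w (hball w hw).le) S (fun w hw => hS2 w (hball w hw).le)
  · intro x
    rw [Metric.tendsto_nhds]
    intro ε hε
    obtain ⟨x', hx', hxx⟩ := hD.exists_dist_lt x (show 0 < ε / (3 * B) by positivity)
    obtain ⟨y, hy⟩ := hAD x' hx'
    have hsm : ∀ᶠ z : ℂ in 𝓝[{z : ℂ | z ≠ 0 ∧ |z.arg| ≤ δ}] 0, B * B * (‖z‖ * ‖y‖) < ε / 3 := by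
      have hc : Continuous (fun z : ℂ => B * B * (‖z‖ * ‖y‖)) := by fun_prop
      have h := hc.tendsto 0
      simp only [norm_zero, zero_mul, mul_zero] at h
      exact nhdsWithin_le_nhds (h.eventually (eventually_lt_nhds (by linarith)))
    filter_upwards [hsm, self_mem_nhdsWithin] with z hz1 hz2
    have h1 : ‖S z x' - x'‖ ≤ B * B * (‖z‖ * ‖y‖) := by
      have ht := ((hS2 z hz2.2 x').sub_const x').norm
      have ht2 := (hy.norm.const_mul ‖z‖).const_mul (B * B)
      refine le_of_tendsto_of_tendsto' ht ht2 fun n => ?_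
      have h := kato_compare (A n) 0 (Commute.zero_right _) δ B hδ.le (hE n)
        (fun z _ => by rw [smul_zero, NormedSpace.exp_zero]; exact hone.trans hB) z hz2.2 x'
      rw [smul_zero, NormedSpace.exp_zero] at h
      simpa [norm_smul] using h
    rw [dist_eq_norm] at hxx ⊢
    rw [lt_div_iff₀ (by positivity)] at hxx
    have h2 : ‖S z (x - x')‖ ≤ B * ‖x - x'‖ := ContinuousLinearMap.le_of_opNorm_le _ (hSB z hz2.2) _
    have e : S z x - x = S z (x - x') + (S z x' - x') - (x - x') := by
      rw [map_sub]; abel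
    rw [e]
    have h3 := norm_sub_le (S z (x - x') + (S z x' - x')) (x - x')
    have h4 := norm_add_le (S z (x - x')) (S z x' - x')
    have h5 : ‖x - x'‖ ≤ B * ‖x - x'‖ := by nlinarith [norm_nonneg (x - x')]
    linarith

end Abstract
section Semigroup

open Complex

variable {X : Type u} [NormedAddCommGroup X] [NormedSpace ℂ X] [CompleteSpace X]

lemma kato_T_pow (T : ℝ → X →L[ℂ] X) (hT : IsC0Semigroup T) (h : ℝ) (hh : 0 ≤ h) (n : ℕ) :
    T h ^ n = T (n * h) := by
  induction n with
  | zero => simp [hT.1]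
  | succ n ih =>
    rw [pow_succ, ih]
    have := hT.2.1 (n * h) h (by positivity) hh
    rw [show ((n + 1 : ℕ) : ℝ) * h = n * h + h by push_cast; ring, this]
    rfl

lemma kato_T_comm (T : ℝ → X →L[ℂ] X) (hT : IsC0Semigroup T) (s t : ℝ) (hs : 0 ≤ s) (ht : 0 ≤ t) :
    Commute (T s) (T t) := by
  change (T s).comp (T t) = (T t).comp (T s)
  rw [← hT.2.1 s t hs ht, ← hT.2.1 t s ht hs, add_comm]

lemma kato_T_cont (T : ℝ → X →L[ℂ] X) (hT : IsC0Semigroup T) (M : ℝ)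
    (hM : ∀ t : ℝ, 0 ≤ t → ‖T t‖ ≤ M) (x : X) : Continuous (fun r : ℝ => T (max r 0) x) := by
  have hM0 : 0 ≤ M := (norm_nonneg _).trans (hM 0 le_rfl)
  have key : ∀ s t : ℝ, 0 ≤ s → s ≤ t → ‖T t x - T s x‖ ≤ M * ‖T (t - s) x - x‖ := by
    intro s t hs hst
    have h := hT.2.1 s (t - s) hs (by linarith)
    rw [add_sub_cancel] at h
    rw [h]
    change ‖T s (T (t - s) x) - T s x‖ ≤ _
    rw [← map_sub]
    exact ContinuousLinearMap.le_of_opNorm_le _ (hM s hs) _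
  have key2 : ∀ s t : ℝ, ‖T (max s 0) x - T (max t 0) x‖
      ≤ M * ‖T |max s 0 - max t 0| x - x‖ := by
    intro s t
    rcases le_total (max s 0) (max t 0) with h | h
    · rw [norm_sub_rev, abs_sub_comm, abs_of_nonneg (by linarith)]
      exact key _ _ (le_max_right _ _) h
    · rw [abs_of_nonneg (by linarith)]
      exact key _ _ (le_max_right _ _) h
  have h0 : Tendsto (fun h : ℝ => T h x) (𝓝[≥] 0) (𝓝 x) := by
    have h1 := hT.2.2 x
    have h2 : Tendsto (fun h : ℝ => T h x) (pure 0) (𝓝 x) := by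
      rw [tendsto_pure_left]
      intro s hs
      rw [hT.1]
      exact mem_of_mem_nhds hs
    rw [← Set.Ioi_insert, nhdsWithin_insert]
    exact h2.sup h1
  rw [continuous_iff_continuousAt]
  intro t
  rw [ContinuousAt, tendsto_iff_norm_sub_tendsto_zero]
  have h3 : Tendsto (fun s : ℝ => |max s 0 - max t 0|) (𝓝 t) (𝓝[≥] 0) := by
    rw [tendsto_nhdsWithin_iff]
    refine ⟨?_, Eventually.of_forall fun s => Set.mem_Ici.2 (abs_nonneg _)⟩
    have hc : Continuous (fun s : ℝ => |max s 0 - max t 0|) := by fun_prop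
    simpa using hc.tendsto t
  have h4 := ((h0.comp h3).sub_const x).norm.const_mul M
  rw [sub_self, norm_zero, mul_zero] at h4
  exact squeeze_zero (fun _ => norm_nonneg _) (fun s => key2 s t) h4

lemma kato_dense (T : ℝ → X →L[ℂ] X) (hT : IsC0Semigroup T) (M : ℝ)
    (hM : ∀ t : ℝ, 0 ≤ t → ‖T t‖ ≤ M) :
    Dense {x : X | ∃ y, Tendsto (fun h : ℝ => (h : ℂ)⁻¹ • (T h x - x)) (𝓝[>] 0) (𝓝 y)} := by
  intro x
  set g : ℝ → X := fun r => T (max r 0) x with hg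
  have hgc : Continuous g := kato_T_cont T hT M hM x
  set G : ℝ → X := fun s => ∫ r in (0 : ℝ)..s, g r with hG
  have hGd : ∀ s, HasDerivAt G (g s) s := fun s =>
    intervalIntegral.integral_hasDerivAt_right (hgc.intervalIntegrable _ _)
      (hgc.stronglyMeasurableAtFilter _ _) hgc.continuousAt
  have hG0 : G 0 = 0 := by simp [hG]
  have hg0 : g 0 = x := by simp [hg, hT.1]
  have hslope : ∀ s, Tendsto (fun h : ℝ => (h : ℂ)⁻¹ • (G (s + h) - G s)) (𝓝[>] 0) (𝓝 (g s)) := by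
    intro s
    have h1 := (hasDerivAt_iff_tendsto_slope_zero.1 (hGd s)).mono_left
      (nhdsWithin_mono 0 (fun h (hh : h ∈ Set.Ioi (0 : ℝ)) => (ne_of_gt hh : h ≠ 0)))
    refine h1.congr fun h => ?_
    rw [← Complex.ofReal_inv]
    rfl
  have hshift : ∀ a : ℝ, 0 ≤ a → ∀ h : ℝ, 0 < h → T h (G a) = G (a + h) - G h := by
    intro a ha h hh
    have h1 : T h (G a) = ∫ r in (0 : ℝ)..a, T h (g r) :=
      ((T h).intervalIntegral_comp_comm (hgc.intervalIntegrable _ _)).symm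
    have h2 : ∫ r in (0 : ℝ)..a, T h (g r) = ∫ r in (0 : ℝ)..a, g (r + h) := by
      apply intervalIntegral.integral_congr
      intro r hr
      rw [Set.uIcc_of_le ha] at hr
      simp only [hg]
      rw [max_eq_left hr.1, max_eq_left (by linarith [hr.1]), add_comm r h,
        hT.2.1 h r hh.le hr.1]
      rfl
    rw [h1, h2, intervalIntegral.integral_comp_add_right, zero_add]
    have h3 := intervalIntegral.integral_add_adjacent_intervals
      (hgc.intervalIntegrable (μ := MeasureTheory.volume) 0 h)
      (hgc.intervalIntegrable (μ := MeasureTheory.volume) h (a + h))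
    simp only [hG]
    rw [← h3, add_sub_cancel_left]
  have hmem : ∀ a : ℝ, 0 ≤ a → ∀ c : ℂ,
      c • G a ∈ {x : X | ∃ y, Tendsto (fun h : ℝ => (h : ℂ)⁻¹ • (T h x - x)) (𝓝[>] 0) (𝓝 y)} := by
    intro a ha c
    have h1 := ((hslope a).sub (hslope 0)).const_smul c
    refine ⟨_, h1.congr' ?_⟩
    filter_upwards [self_mem_nhdsWithin] with h hh
    rw [map_smul, ← smul_sub, hshift a ha h hh, hG0, zero_add, ← smul_sub, smul_comm]
    congr 2
    abel
  have hlim := hslope 0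
  rw [hg0] at hlim
  refine mem_closure_of_tendsto hlim ?_
  filter_upwards [self_mem_nhdsWithin] with h hh
  rw [hG0, zero_add, sub_zero]
  exact hmem h (le_of_lt hh) _

lemma kato_T_compare (T : ℝ → X →L[ℂ] X) (hT : IsC0Semigroup T) (M : ℝ)
    (hM : ∀ t : ℝ, 0 ≤ t → ‖T t‖ ≤ M) (a : X →L[ℂ] X) (ha : ∀ t : ℝ, 0 ≤ t → Commute a (T t))
    (B : ℝ) (hB : ∀ t : ℝ, 0 ≤ t → ‖NormedSpace.exp ((t : ℂ) • a)‖ ≤ B) (x y : X)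
    (hy : Tendsto (fun h : ℝ => (h : ℂ)⁻¹ • (T h x - x)) (𝓝[>] 0) (𝓝 y)) (t : ℝ) (ht : 0 < t) :
    ‖NormedSpace.exp ((t : ℂ) • a) x - T t x‖ ≤ B * M * ‖(t : ℂ) • a x - (t : ℂ) • y‖ := by
  let +nondep : NormedAlgebra ℚ (X →L[ℂ] X) := .restrictScalars ℚ ℂ _
  refine kato_telescope_lim (fun k => NormedSpace.exp (((t : ℂ) / k) • a))
    (fun k => T (t / k)) (fun k => ?_) B M
    (fun k i => ?_) (fun k i => ?_) _ _
    (kato_exp_div_pow a t) (fun k hk => ?_) x _ _ (kato_exp_lim a t x) ?_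
  · exact ((ha _ (by positivity)).smul_left _).exp_left
  · rw [kato_exp_pow]
    have := hB (i * (t / k)) (by positivity)
    push_cast at this
    exact this
  · rw [kato_T_pow T hT _ (by positivity)]
    exact hM _ (by positivity)
  · have : (k : ℝ) ≠ 0 := by exact_mod_cast hk.ne'
    rw [kato_T_pow T hT _ (by positivity), mul_div_cancel₀ _ this]
  · have h1 : Tendsto (fun k : ℕ => t / (k : ℝ)) atTop (𝓝[>] 0) := by
      rw [tendsto_nhdsWithin_iff]
      refine ⟨tendsto_const_div_atTop_nhds_zero_nat t, ?_⟩
      filter_upwards [eventually_gt_atTop 0] with k hk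
      have : (0 : ℝ) < k := by exact_mod_cast hk
      exact div_pos ht this
    have h2 := (hy.comp h1).const_smul (t : ℂ)
    refine h2.congr' ?_
    filter_upwards [eventually_gt_atTop 0] with k hk
    have hk0 : (k : ℂ) ≠ 0 := by exact_mod_cast hk.ne'
    have ht0 : (t : ℂ) ≠ 0 := by exact_mod_cast ht.ne'
    simp only [Function.comp_def]
    rw [smul_smul]
    congr 1
    push_cast
    field_simp

end Semigroup
/-- Quantitative version of Kato's criterion: there are universal constants
`c₁, c₂ > 0` such that any `C₀`-semigroup with `‖T t‖ ≤ M` (`M ≥ 1`) satisfying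
`‖(ζ I - T t) x‖ ≥ ‖x‖/K` for some unimodular `ζ` and `K ≥ 1/2` extends to a
bounded holomorphic semigroup `S` on the sector `|arg z| ≤ c₁/C̃`, `C̃ = M² K`,
with `‖S z‖ ≤ c₂ · C̃ · (1 + log C̃)` there. -/
theorem stmt3 :
    ∃ c₁ c₂ : ℝ, 0 < c₁ ∧ 0 < c₂ ∧
      ∀ (X : Type u) [NormedAddCommGroup X] [NormedSpace ℂ X] [CompleteSpace X]
        (T : ℝ → X →L[ℂ] X), IsC0Semigroup T →
      ∀ M : ℝ, 1 ≤ M → (∀ t : ℝ, 0 ≤ t → ‖T t‖ ≤ M) →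
      ∀ (ζ : ℂ), ‖ζ‖ = 1 → ∀ K : ℝ, 1 / 2 ≤ K →
      (∀ t : ℝ, 0 < t → ∀ x : X, ‖x‖ / K ≤ ‖ζ • x - T t x‖) →
      ∃ S : ℂ → X →L[ℂ] X,
        (∀ t : ℝ, 0 ≤ t → S (t : ℂ) = T t) ∧
        (∀ z₁ z₂ : ℂ, z₁ ≠ 0 → z₂ ≠ 0 →
          |z₁.arg| ≤ c₁ / (M ^ 2 * K) → |z₂.arg| ≤ c₁ / (M ^ 2 * K) →
          S (z₁ + z₂) = (S z₁).comp (S z₂)) ∧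
        DifferentiableOn ℂ S {z : ℂ | z ≠ 0 ∧ |z.arg| < c₁ / (M ^ 2 * K)} ∧
        (∀ x : X, Tendsto (fun z => S z x)
          (nhdsWithin 0 {z : ℂ | z ≠ 0 ∧ |z.arg| ≤ c₁ / (M ^ 2 * K)}) (nhds x)) ∧
        ∀ z : ℂ, z ≠ 0 → |z.arg| ≤ c₁ / (M ^ 2 * K) →
          ‖S z‖ ≤ c₂ * (M ^ 2 * K) * (1 + Real.log (M ^ 2 * K)) := by
  refine ⟨1 / 512, 10240, by norm_num, by norm_num, ?_⟩
  intro X _ _ _ T hT M hM hTM ζ hζ K hK hTK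
  have hC : 1 / 2 ≤ M ^ 2 * K := by nlinarith
  obtain ⟨hB, hc⟩ := kato_const (M ^ 2 * K) hC
  obtain ⟨hδ0, hδ1, -⟩ := hc _ rfl
  set δ := (1 / 512) / (M ^ 2 * K) with hδ
  set B := 10240 * (M ^ 2 * K) * (1 + Real.log (M ^ 2 * K)) with hBdef
  set h : ℕ → ℝ := fun n => 1 / ((n : ℝ) + 1) with hh
  have hpos : ∀ n, 0 < h n := fun n => by simp only [hh]; positivity
  have hlim : Tendsto h atTop (𝓝[>] 0) := by
    rw [tendsto_nhdsWithin_iff]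
    exact ⟨tendsto_one_div_add_atTop_nhds_zero_nat, Eventually.of_forall hpos⟩
  set A : ℕ → X →L[ℂ] X := fun n => ((h n : ℂ)⁻¹) • (T (h n) - 1) with hA
  have hAT : ∀ n, ∀ t : ℝ, 0 ≤ t → Commute (A n) (T t) := by
    intro n t ht
    exact ((kato_T_comm T hT _ _ (hpos n).le ht).sub_left (Commute.one_left _)).smul_left _
  have hAA : ∀ n m, Commute (A n) (A m) := by
    intro n m
    exact ((hAT n _ (hpos m).le).sub_right (Commute.one_right _)).smul_right _
  have hE : ∀ n, ∀ z : ℂ, |z.arg| ≤ δ → ‖NormedSpace.exp (z • A n)‖ ≤ B := by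
    intro n z hz
    refine kato_unif (T (h n)) M hM (fun k => ?_) ζ hζ K hK (fun k hk x => ?_) (h n) (hpos n) z hz
    · rw [kato_T_pow T hT _ (hpos n).le]
      exact hTM _ (mul_nonneg (Nat.cast_nonneg _) (hpos n).le)
    · rw [kato_T_pow T hT _ (hpos n).le]
      have : (0 : ℝ) < k := by exact_mod_cast hk
      exact hTK _ (mul_pos this (hpos n)) x
  have hD := kato_dense T hT M hTM
  have hAx : ∀ x y : X, Tendsto (fun h : ℝ => (h : ℂ)⁻¹ • (T h x - x)) (𝓝[>] 0) (𝓝 y) →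
      Tendsto (fun n => A n x) atTop (𝓝 y) := by
    intro x y hy
    exact hy.comp hlim
  obtain ⟨S, hS1, hS2, hS3, hS4, hS5⟩ := kato_abstract A hAA δ B hδ0 hδ1 hB hE _ hD
    (fun x ⟨y, hy⟩ => ⟨y, hAx x y hy⟩)
  have harg : ∀ t : ℝ, 0 ≤ t → |(t : ℂ).arg| ≤ δ := by
    intro t ht
    rw [Complex.arg_ofReal_of_nonneg ht, abs_zero]
    exact hδ0.le
  refine ⟨S, ?_, fun z₁ z₂ _ _ => hS2 z₁ z₂, hS3, hS4, fun z _ => hS5 z⟩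
  intro t ht
  have hST : ∀ x ∈ {x : X | ∃ y, Tendsto (fun h : ℝ => (h : ℂ)⁻¹ • (T h x - x)) (𝓝[>] 0) (𝓝 y)},
      S (t : ℂ) x = T t x := by
    rintro x ⟨y, hy⟩
    refine tendsto_nhds_unique (hS1 t (harg t ht) x) ?_
    rcases ht.eq_or_lt with h0 | h0
    · rw [← h0, hT.1, Complex.ofReal_zero]
      simp only [zero_smul, NormedSpace.exp_zero]
      exact tendsto_const_nhds
    · rw [tendsto_iff_norm_sub_tendsto_zero]
      have hr := ((((hAx x y hy).const_smul (t : ℂ)).sub_const ((t : ℂ) • y)).norm).const_mul (B * M)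
      rw [sub_self, norm_zero, mul_zero] at hr
      refine squeeze_zero (fun _ => norm_nonneg _) (fun n => ?_) hr
      exact kato_T_compare T hT M hTM (A n) (hAT n) B (fun s hs => hE n s (harg s hs)) x y hy t h0
  have := Continuous.ext_on hD (S (t : ℂ)).continuous (T t).continuous hST
  ext x
  exact congrFun this x
end

section
/- Let (T(t))_{t≥0} be a C₀-semigroup on a complex Banach space X with ‖T(t)‖ ≤ M for all t ≥ 0, where M ≥ 1, and suppose there exists 0 < ε ≤ 2 such that ‖T(t) − I‖ ≤ 2 − ε for all t > 0. Then (T(t)) extends to a bounded holomorphic semigroup on a sector Σ_θ with θ comparable (up to universal constants) to ε/M², and there exist universal constants c₁, c₂ > 0 such that ‖T(z)‖ ≤ c₂ · (M²/ε) · (1 + log(M/ε)) for every z ∈ ℂ∖{0} with |arg z| ≤ c₁ · ε/M². -/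
open Filter Topology

universe u

open MeasureTheory Set

/-- Working hypotheses: the semigroup is extended evenly to all of the real line. -/
structure GoodSG {X : Type u} [NormedAddCommGroup X] [NormedSpace ℂ X]
    (T : ℝ → X →L[ℂ] X) (M ε : ℝ) : Prop where
  zero : T 0 = 1
  add : ∀ s t : ℝ, 0 ≤ s → 0 ≤ t → ∀ x, T (s + t) x = T s (T t x)
  cont : ∀ x : X, Continuous fun t => T t x
  bd : ∀ t x, ‖T t x‖ ≤ M * ‖x‖
  near : ∀ t : ℝ, 0 < t → ‖T t - 1‖ ≤ 2 - ε
  hM : 1 ≤ M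
  he : 0 < ε
  he2 : ε ≤ 2

/-- Laplace transform of an orbit. -/
noncomputable def LapV {X : Type u} [NormedAddCommGroup X] [NormedSpace ℂ X]
    (T : ℝ → X →L[ℂ] X) (l : ℂ) (x : X) : X :=
  ∫ t in Ioi (0:ℝ), Complex.exp (-l * t) • T t x

section part1

set_option linter.unusedSectionVars false

variable {X : Type u} [NormedAddCommGroup X] [NormedSpace ℂ X]
  {T : ℝ → X →L[ℂ] X} {M ε : ℝ}

theorem GoodSG.scale (g : GoodSG T M ε) {r : ℝ} (hr : 0 < r) :
    GoodSG (fun t => T (r * t)) M ε where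
  zero := by simpa using g.zero
  add s t hs ht x := by
    rw [mul_add]; exact g.add _ _ (by positivity) (by positivity) x
  cont x := (g.cont x).comp (continuous_const.mul continuous_id)
  bd t x := g.bd _ x
  near t ht := g.near _ (by positivity)
  hM := g.hM
  he := g.he
  he2 := g.he2

theorem norm_cexp_neg (l : ℂ) (t : ℝ) : ‖Complex.exp (-l * t)‖ = Real.exp (-l.re * t) := by
  rw [Complex.norm_exp]; simp

theorem GoodSG.contE (g : GoodSG T M ε) (l : ℂ) (x : X) :
    Continuous fun t : ℝ => Complex.exp (-l * t) • T t x :=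
  (by fun_prop : Continuous fun t : ℝ => Complex.exp (-l * t)).smul (g.cont x)

theorem GoodSG.normE (g : GoodSG T M ε) (l : ℂ) (x : X) (t : ℝ) :
    ‖Complex.exp (-l * t) • T t x‖ ≤ (M * ‖x‖) * Real.exp (-l.re * t) := by
  rw [norm_smul, norm_cexp_neg, mul_comm]
  gcongr
  exact g.bd t x

theorem GoodSG.int (g : GoodSG T M ε) {l : ℂ} (hl : 0 < l.re) (x : X) (a : ℝ) :
    IntegrableOn (fun t : ℝ => Complex.exp (-l * t) • T t x) (Ioi a) := by
  refine Integrable.mono' ((exp_neg_integrableOn_Ioi a hl).const_mul (M * ‖x‖))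
    (g.contE l x).aestronglyMeasurable ?_
  exact Eventually.of_forall fun t => g.normE l x t

theorem GoodSG.int1 (g : GoodSG T M ε) {l : ℂ} (hl : 0 < l.re) (x : X) :
    IntegrableOn (fun t : ℝ => (t:ℂ) • Complex.exp (-l * t) • T t x) (Ioi 0) := by
  have h2 : 0 < l.re / 2 := by positivity
  refine Integrable.mono' ((exp_neg_integrableOn_Ioi 0 h2).const_mul ((2 / l.re) * (M * ‖x‖)))
    (Complex.continuous_ofReal.smul (g.contE l x)).aestronglyMeasurable ?_
  refine (ae_restrict_iff' measurableSet_Ioi).2 (Eventually.of_forall fun t ht => ?_)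
  have ht : 0 < t := ht
  rw [norm_smul]
  have h1 := g.normE l x t
  have h3 : t ≤ (2 / l.re) * Real.exp (l.re / 2 * t) := by
    have := Real.add_one_le_exp (l.re / 2 * t)
    calc t = (2 / l.re) * (l.re / 2 * t) := by field_simp
      _ ≤ _ := by gcongr; linarith
  have h4 : Real.exp (l.re / 2 * t) * Real.exp (-l.re * t) = Real.exp (-(l.re / 2) * t) := by
    rw [← Real.exp_add]; congr 1; ring
  have hM := g.hM
  calc ‖(t:ℂ)‖ * _ ≤ ((2 / l.re) * Real.exp (l.re / 2 * t)) *
        ((M * ‖x‖) * Real.exp (-l.re * t)) := by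
        rw [Complex.norm_real, Real.norm_of_nonneg ht.le]
        gcongr
    _ = _ := by rw [← h4]; ring

theorem GoodSG.norm_lap (g : GoodSG T M ε) {l : ℂ} (hl : 0 < l.re) (x : X) :
    ‖LapV T l x‖ ≤ M / l.re * ‖x‖ := by
  have := norm_integral_le_of_norm_le
    ((exp_neg_integrableOn_Ioi 0 hl).const_mul (M * ‖x‖))
    (f := fun t : ℝ => Complex.exp (-l * t) • T t x)
    (Eventually.of_forall fun t => g.normE l x t)
  refine this.trans (le_of_eq ?_)
  rw [integral_const_mul, integral_exp_mul_Ioi (by linarith)]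
  simp; field_simp

theorem GoodSG.lap_add (g : GoodSG T M ε) {l : ℂ} (hl : 0 < l.re) (x y : X) :
    LapV T l (x + y) = LapV T l x + LapV T l y := by
  unfold LapV
  rw [← integral_add (g.int hl x 0) (g.int hl y 0)]
  simp

theorem GoodSG.lap_smul (_g : GoodSG T M ε) {l : ℂ} (c : ℂ) (x : X) :
    LapV T l (c • x) = c • LapV T l x := by
  unfold LapV
  rw [← integral_smul]
  congr 1; ext t
  rw [map_smul, smul_comm]

theorem GoodSG.lap_sub (g : GoodSG T M ε) {l : ℂ} (hl : 0 < l.re) (x y : X) :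
    LapV T l (x - y) = LapV T l x - LapV T l y := by
  rw [sub_eq_add_neg, ← neg_one_smul ℂ y, g.lap_add hl, g.lap_smul]; simp [sub_eq_add_neg]

variable [CompleteSpace X]

theorem GoodSG.evol (g : GoodSG T M ε) {l : ℂ} (hl : 0 < l.re) (x : X) {h : ℝ} (hh : 0 ≤ h) :
    T h (LapV T l x) = Complex.exp (l * h) •
      (LapV T l x - ∫ t in (0:ℝ)..h, Complex.exp (-l * t) • T t x) := by
  have e1 : LapV T l x - ∫ t in (0:ℝ)..h, Complex.exp (-l * t) • T t x
      = ∫ t in Ioi h, Complex.exp (-l * t) • T t x := by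
    unfold LapV
    rw [← intervalIntegral.integral_interval_add_Ioi (g.int hl x 0) (g.int hl x h)]
    abel
  have e2 : ∫ t in Ioi h, Complex.exp (-l * t) • T t x
      = ∫ t in Ioi (0:ℝ), Complex.exp (-l * (t + h : ℝ)) • T (t + h) x := by
    rw [← integral_indicator measurableSet_Ioi, ← integral_indicator measurableSet_Ioi,
      ← integral_add_right_eq_self _ h]
    congr 1; ext t
    simp [indicator]
  rw [e1, e2, ← integral_smul]
  unfold LapV
  rw [← ContinuousLinearMap.integral_comp_comm _ (g.int hl x 0)]
  refine setIntegral_congr_fun measurableSet_Ioi fun t ht => ?_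
  have ht : 0 < t := ht
  change (T h) (Complex.exp (-l * t) • T t x) =
    Complex.exp (l * h) • (Complex.exp (-l * (t + h : ℝ)) • T (t + h) x)
  rw [map_smul, smul_smul, ← Complex.exp_add, add_comm t h, g.add h t hh ht.le]
  congr 2
  push_cast; ring

theorem GoodSG.deriv (g : GoodSG T M ε) {l : ℂ} (hl : 0 < l.re) (x : X) {t : ℝ} (ht : 0 < t) :
    HasDerivAt (fun t : ℝ => T t (LapV T l x)) (l • T t (LapV T l x) - T t x) t := by
  have hI : HasDerivAt (fun h : ℝ => ∫ t in (0:ℝ)..h, Complex.exp (-l * t) • T t x)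
      (Complex.exp (-l * t) • T t x) t :=
    intervalIntegral.integral_hasDerivAt_right ((g.contE l x).intervalIntegrable _ _)
      ((g.contE l x).stronglyMeasurableAtFilter _ _) (g.contE l x).continuousAt
  have hE : HasDerivAt (fun h : ℝ => Complex.exp (l * h)) (Complex.exp (l * t) * l) t := by
    have := ((Complex.ofRealCLM.hasDerivAt (x := t)).const_mul l).cexp
    simpa using this
  have := hE.smul ((hasDerivAt_const t (LapV T l x)).sub hI)
  refine (this.congr_of_eventuallyEq ?_).congr_deriv ?_
  · filter_upwards [lt_mem_nhds ht] with s hs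
    rw [g.evol hl x hs.le]; rfl
  · rw [g.evol hl x ht.le]
    simp only [zero_sub, smul_neg, smul_smul, ← Complex.exp_add]
    rw [show l * t + -l * t = 0 by ring, Complex.exp_zero, one_smul, mul_comm l (Complex.exp _)]
    simp only [Pi.sub_apply]
    abel

theorem hasDerivAt_cexp_neg (l : ℂ) (t : ℝ) :
    HasDerivAt (fun h : ℝ => Complex.exp (-l * h)) (Complex.exp (-l * t) * (-l)) t := by
  have := ((Complex.ofRealCLM.hasDerivAt (x := t)).const_mul (-l)).cexp
  simpa using this

theorem GoodSG.tendsto0 (g : GoodSG T M ε) {l : ℂ} (hl : 0 < l.re) (x : X) :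
    Tendsto (fun t : ℝ => Complex.exp (-l * t) • T t x) atTop (𝓝 0) := by
  refine squeeze_zero_norm (g.normE l x) ?_
  have : Tendsto (fun t : ℝ => -l.re * t) atTop atBot :=
    tendsto_id.const_mul_atTop_of_neg (by linarith)
  simpa using (Real.tendsto_exp_atBot.comp this).const_mul (M * ‖x‖)

theorem GoodSG.tendsto1 (g : GoodSG T M ε) {l : ℂ} (hl : 0 < l.re) (x : X) :
    Tendsto (fun t : ℝ => (t:ℂ) • Complex.exp (-l * t) • T t x) atTop (𝓝 0) := by
  have h1 : Tendsto (fun t : ℝ => (M * ‖x‖) * (t ^ (1:ℝ) * Real.exp (-l.re * t))) atTop (𝓝 0) := by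
    simpa using (tendsto_rpow_mul_exp_neg_mul_atTop_nhds_zero 1 l.re hl).const_mul (M * ‖x‖)
  refine squeeze_zero_norm' ?_ h1
  filter_upwards [eventually_gt_atTop (0:ℝ)] with t ht
  rw [norm_smul, Complex.norm_real, Real.norm_of_nonneg ht.le, Real.rpow_one]
  have := g.normE l x t
  calc _ ≤ t * ((M * ‖x‖) * Real.exp (-l.re * t)) := by gcongr
    _ = _ := by ring

theorem GoodSG.resolvent (g : GoodSG T M ε) {l n : ℂ} (hl : 0 < l.re) (hn : 0 < n.re) (x : X) :
    (n - l) • LapV T n (LapV T l x) = LapV T l x - LapV T n x := by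
  set y := LapV T l x with hy
  have hd : ∀ t ∈ Ioi (0:ℝ), HasDerivAt (fun t : ℝ => Complex.exp (-n * t) • T t y)
      (Complex.exp (-n * t) • T t ((l - n) • y - x)) t := by
    intro t ht
    refine ((hasDerivAt_cexp_neg n t).smul (g.deriv hl x ht)).congr_deriv ?_
    simp only [map_sub, map_smul, ← hy, smul_sub, sub_smul, mul_smul, neg_smul, smul_neg]
    abel
  have h1 := integral_Ioi_of_hasDerivAt_of_tendsto (g.contE n y).continuousWithinAt hd
    (g.int hn _ 0) (g.tendsto0 hn y)
  have h2 : LapV T n ((l - n) • y - x) = -y := by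
    have : LapV T n ((l - n) • y - x) = 0 - _ := h1
    rw [this]; simp [g.zero]
  rw [g.lap_sub hn, g.lap_smul] at h2
  have h3 : (n - l) • LapV T n y = - ((l - n) • LapV T n y) := by rw [← neg_smul, neg_sub]
  rw [h3, sub_eq_iff_eq_add.1 h2]
  abel

theorem GoodSG.square (g : GoodSG T M ε) {l : ℂ} (hl : 0 < l.re) (x : X) :
    ∫ t in Ioi (0:ℝ), (t:ℂ) • Complex.exp (-l * t) • T t x = LapV T l (LapV T l x) := by
  set y := LapV T l x with hy
  have hd : ∀ t ∈ Ioi (0:ℝ), HasDerivAt (fun t : ℝ => (t:ℂ) • Complex.exp (-l * t) • T t y)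
      (Complex.exp (-l * t) • T t y - (t:ℂ) • Complex.exp (-l * t) • T t x) t := by
    intro t ht
    have h0 : HasDerivAt (fun t : ℝ => (t:ℂ)) 1 t := by
      exact (hasDerivAt_id t).ofReal_comp
    refine (h0.smul ((hasDerivAt_cexp_neg l t).smul (g.deriv hl x ht))).congr_deriv ?_
    simp only [← hy, smul_sub, mul_smul, neg_smul, smul_neg, one_smul, smul_add, Pi.smul_apply']
    abel
  have h1 := integral_Ioi_of_hasDerivAt_of_tendsto
    (f := fun t : ℝ => (t:ℂ) • Complex.exp (-l * t) • T t y)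
    (Complex.continuous_ofReal.smul (g.contE l y)).continuousWithinAt hd
    ((g.int hl y 0).sub (g.int1 hl x)) (g.tendsto1 hl y)
  rw [integral_sub (g.int hl y 0) (g.int1 hl x)] at h1
  simp only [Complex.ofReal_zero, zero_smul, sub_zero] at h1
  exact (sub_eq_zero.1 h1).symm

theorem GoodSG.bound2 (g : GoodSG T M ε) {l : ℂ} (hl : 0 < l.re) (x : X) :
    |l.im| * ε * ‖LapV T l x‖ ≤ 2 * Real.pi * M * ‖x‖ := by
  have hM := g.hM
  have he := g.he
  have he2 := g.he2
  by_cases h0 : l.im = 0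
  · rw [h0]; simp; positivity
  have hp : 0 < |l.im| := abs_pos.2 h0
  set h : ℝ := Real.pi / |l.im| with hh
  have hh0 : 0 < h := by positivity
  set y := LapV T l x with hy
  set q := Real.exp (-l.re * h) with hq
  have hq0 : 0 < q := Real.exp_pos _
  have hq1 : q ≤ 1 := Real.exp_le_one_iff.2 (by nlinarith)
  have hexp : Complex.exp (-l * h) = -(q:ℂ) := by
    have : -l * h = ((-l.re * h : ℝ) : ℂ) + (-l.im * h : ℝ) * Complex.I := by
      conv_lhs => rw [← Complex.re_add_im l]
      push_cast; ring
    rw [this, Complex.exp_add, ← Complex.ofReal_exp]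
    have h2 : Complex.exp ((-l.im * h : ℝ) * Complex.I) = -1 := by
      rcases lt_or_gt_of_ne h0 with hneg | hpos
      · have : -l.im * h = Real.pi := by
          rw [hh, abs_of_neg hneg]; field_simp
        rw [this, Complex.exp_pi_mul_I]
      · have : -l.im * h = -Real.pi := by
          rw [hh, abs_of_pos hpos]; field_simp
        rw [this]; push_cast; rw [neg_mul, Complex.exp_neg, Complex.exp_pi_mul_I]; norm_num
    rw [h2]; simp [hq]
  have key : y + (q:ℂ) • T h y = ∫ t in (0:ℝ)..h, Complex.exp (-l * t) • T t x := by
    have := g.evol hl x hh0.le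
    rw [← hy] at this
    have h3 : Complex.exp (-l * h) • T h y
        = y - ∫ t in (0:ℝ)..h, Complex.exp (-l * t) • T t x := by
      rw [this, smul_smul, ← Complex.exp_add]
      simp
    rw [hexp, neg_smul] at h3
    rw [← sub_neg_eq_add, h3]; abel
  have hI : ‖∫ t in (0:ℝ)..h, Complex.exp (-l * t) • T t x‖ ≤ (M * ‖x‖) * |h - 0| := by
    apply intervalIntegral.norm_integral_le_of_norm_le_const
    intro t ht
    rw [uIoc_of_le hh0.le] at ht
    refine (g.normE l x t).trans ?_
    have : Real.exp (-l.re * t) ≤ 1 := Real.exp_le_one_iff.2 (by nlinarith [ht.1])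
    exact mul_le_of_le_one_right (by positivity) this
  rw [sub_zero, abs_of_pos hh0, ← key] at hI
  have hlow : (ε / 2) * ‖y‖ ≤ ‖y + (q:ℂ) • T h y‖ := by
    have e : y + (q:ℂ) • T h y = ((1 + q : ℝ) : ℂ) • y - (-((q:ℂ) • (T h - 1) y)) := by
      simp only [_root_.sub_apply, one_apply_eq_self, smul_sub]
      push_cast
      rw [add_smul, one_smul]; abel
    have h5 : ‖(q:ℂ) • (T h - 1) y‖ ≤ q * ((2 - ε) * ‖y‖) := by
      rw [norm_smul, Complex.norm_real, Real.norm_of_nonneg hq0.le]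
      gcongr
      exact ContinuousLinearMap.le_of_opNorm_le _ (g.near h hh0) y
    have h6 : ‖((1 + q : ℝ) : ℂ) • y‖ = (1 + q) * ‖y‖ := by
      rw [norm_smul, Complex.norm_real, Real.norm_of_nonneg (by positivity)]
    rw [e]
    have h7 := norm_sub_norm_le (((1 + q : ℝ) : ℂ) • y) (-((q:ℂ) • (T h - 1) y))
    rw [norm_neg, h6] at h7
    have : (ε / 2) ≤ (1 + q) - q * (2 - ε) := by nlinarith
    nlinarith [norm_nonneg y, mul_le_mul_of_nonneg_right this (norm_nonneg y)]
  have h8 := hlow.trans hI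
  have h9 : |l.im| * h = Real.pi := by rw [hh]; field_simp
  calc |l.im| * ε * ‖y‖ = 2 * |l.im| * (ε / 2 * ‖y‖) := by ring
    _ ≤ 2 * |l.im| * (M * ‖x‖ * h) := by gcongr
    _ = 2 * (|l.im| * h) * M * ‖x‖ := by ring
    _ = _ := by rw [h9]

theorem lap_scale (T : ℝ → X →L[ℂ] X) {r : ℝ} (hr : 0 < r) (m : ℂ) (x : X) :
    LapV (fun t => T (r * t)) m x = (r:ℂ)⁻¹ • LapV T (m / r) x := by
  unfold LapV
  have := integral_comp_mul_left_Ioi (fun t : ℝ => Complex.exp (-(m / r) * t) • T t x) 0 hr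
  rw [mul_zero] at this
  rw [← Complex.ofReal_inv, Complex.coe_smul, ← this]
  congr 1; ext t
  congr 2
  have : (r:ℂ) ≠ 0 := by exact_mod_cast hr.ne'
  push_cast; field_simp

end part1

open Classical in
/-- The Laplace transform as a bounded operator. -/
noncomputable def LapOp {X : Type u} [NormedAddCommGroup X] [NormedSpace ℂ X]
    (T : ℝ → X →L[ℂ] X) (l : ℂ) : X →L[ℂ] X :=
  if h : ∃ L : X →L[ℂ] X, ∀ x, L x = LapV T l x then h.choose else 0

/-- The vertical line of integration. -/
noncomputable def muL (w : ℝ) : ℂ := 1 + (2 * Real.pi * w : ℝ) * Complex.I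

theorem muL_re (w : ℝ) : (muL w).re = 1 := by simp [muL]
theorem muL_im (w : ℝ) : (muL w).im = 2 * Real.pi * w := by simp [muL]
theorem muL_cont : Continuous muL := by unfold muL; fun_prop
theorem norm_exp_muL (w : ℝ) : ‖Complex.exp (muL w)‖ = Real.exp 1 := by
  rw [Complex.norm_exp, muL_re]

theorem integrable_G (M : ℝ) {ε : ℝ} (he : 0 < ε) :
    Integrable (fun w : ℝ => 2 * M ^ 2 * (1 + (ε * w) ^ 2)⁻¹) :=
  (integrable_inv_one_add_sq.comp_mul_left' he.ne').const_mul _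

theorem integral_G (M : ℝ) {ε : ℝ} (he : 0 < ε) :
    ∫ w : ℝ, 2 * M ^ 2 * (1 + (ε * w) ^ 2)⁻¹ = 2 * Real.pi * (M ^ 2 / ε) := by
  rw [integral_const_mul, Measure.integral_comp_mul_left (fun x : ℝ => (1 + x ^ 2)⁻¹) ε,
    integral_univ_inv_one_add_sq, abs_of_pos (by positivity)]
  simp; field_simp

section part2

set_option linter.unusedSectionVars false

variable {X : Type u} [NormedAddCommGroup X] [NormedSpace ℂ X]
  {T : ℝ → X →L[ℂ] X} {M ε : ℝ}

theorem GoodSG.lapOp_apply (g : GoodSG T M ε) {l : ℂ} (hl : 0 < l.re) (x : X) :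
    LapOp T l x = LapV T l x := by
  have h : ∃ L : X →L[ℂ] X, ∀ x, L x = LapV T l x :=
    ⟨LinearMap.mkContinuous
      { toFun := LapV T l, map_add' := g.lap_add hl, map_smul' := fun c x => g.lap_smul c x }
      (M / l.re) (fun x => g.norm_lap hl x), fun x => rfl⟩
  unfold LapOp
  rw [dif_pos h]
  exact h.choose_spec x

variable [CompleteSpace X]

theorem GoodSG.op_resolvent (g : GoodSG T M ε) {l n : ℂ} (hl : 0 < l.re) (hn : 0 < n.re) :
    (n - l) • (LapOp T n * LapOp T l) = LapOp T l - LapOp T n := by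
  ext x
  simp only [_root_.smul_apply, _root_.sub_apply, mul_apply_eq_comp,
    g.lapOp_apply hl, g.lapOp_apply hn]
  exact g.resolvent hl hn x

theorem GoodSG.J_norm (g : GoodSG T M ε) (w : ℝ) : ‖LapOp T (muL w)‖ ≤ M := by
  have h : 0 < (muL w).re := by simp [muL_re]
  have hM := g.hM
  refine ContinuousLinearMap.opNorm_le_bound _ (by linarith) fun x => ?_
  rw [g.lapOp_apply h]
  simpa [muL_re] using g.norm_lap h x

theorem GoodSG.J_norm2 (g : GoodSG T M ε) (w : ℝ) : ε * |w| * ‖LapOp T (muL w)‖ ≤ M := by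
  have h : 0 < (muL w).re := by simp [muL_re]
  have hM := g.hM
  have he := g.he
  rcases eq_or_ne w 0 with h0 | h0
  · rw [h0]; simp; linarith
  have hw : 0 < |w| := abs_pos.2 h0
  have : ‖LapOp T (muL w)‖ ≤ M / (ε * |w|) := by
    refine ContinuousLinearMap.opNorm_le_bound _ (by positivity) fun x => ?_
    rw [g.lapOp_apply h]
    have h2 := g.bound2 h x
    rw [muL_im, abs_mul, abs_of_pos (by positivity : 0 < 2 * Real.pi)] at h2
    rw [div_mul_eq_mul_div, le_div_iff₀ (by positivity)]
    have hpi : 0 < 2 * Real.pi := by positivity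
    refine le_of_mul_le_mul_left ?_ hpi
    linarith
  rw [le_div_iff₀ (by positivity)] at this
  linarith

theorem GoodSG.J_sq (g : GoodSG T M ε) (w : ℝ) :
    ‖LapOp T (muL w)‖ * ‖LapOp T (muL w)‖ ≤ 2 * M ^ 2 * (1 + (ε * w) ^ 2)⁻¹ := by
  have h1 := g.J_norm w
  have h2 := g.J_norm2 w
  have he := g.he
  set j := ‖LapOp T (muL w)‖
  have hj : 0 ≤ j := norm_nonneg _
  rw [← div_eq_mul_inv, le_div_iff₀ (by positivity)]
  have h3 : j * j ≤ M ^ 2 := by nlinarith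
  have h4 : (ε * |w| * j) ^ 2 ≤ M ^ 2 := by gcongr
  have h5 : (ε * |w| * j) ^ 2 = j * j * (ε * w) ^ 2 := by
    rw [mul_pow, mul_pow, sq_abs]; ring
  rw [h5] at h4
  linarith

theorem GoodSG.J_cont (g : GoodSG T M ε) : Continuous fun w => LapOp T (muL w) := by
  have hre : ∀ w, 0 < (muL w).re := fun w => by simp [muL_re]
  have hM := g.hM
  rw [continuous_iff_continuousAt]
  intro w0
  rw [ContinuousAt, tendsto_iff_norm_sub_tendsto_zero]
  have h0 : Tendsto (fun w => ‖muL w0 - muL w‖ * (M * M)) (𝓝 w0) (𝓝 0) := by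
    have : Continuous fun w => ‖muL w0 - muL w‖ * (M * M) :=
      (continuous_const.sub muL_cont).norm.mul continuous_const
    simpa using this.tendsto w0
  refine squeeze_zero (fun _ => norm_nonneg _) (fun w => ?_) h0
  rw [← g.op_resolvent (hre w) (hre w0), norm_smul]
  gcongr
  refine (norm_mul_le _ _).trans ?_
  gcongr
  · exact g.J_norm _
  · exact g.J_norm _

theorem norm_muL_le (w : ℝ) : ‖muL w‖ ≤ 1 + 2 * Real.pi * |w| := by
  unfold muL
  refine (norm_add_le _ _).trans ?_
  simp [abs_of_pos Real.pi_pos]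

theorem GoodSG.B_norm (g : GoodSG T M ε) (w : ℝ) :
    ‖muL w • LapOp T (muL w) - 1‖ ≤ 12 * M / ε := by
  have h1 := g.J_norm w
  have h2 := g.J_norm2 w
  have he := g.he
  have he2 := g.he2
  have hM := g.hM
  have hone : ‖(1 : X →L[ℂ] X)‖ ≤ 1 := ContinuousLinearMap.norm_id_le
  set j := ‖LapOp T (muL w)‖ with hjd
  have hj : 0 ≤ j := norm_nonneg _
  have h3 : ‖muL w • LapOp T (muL w) - 1‖ ≤ (1 + 2 * Real.pi * |w|) * j + 1 := by
    refine (norm_sub_le _ _).trans ?_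
    rw [norm_smul]
    gcongr
    exact norm_muL_le w
  refine h3.trans ?_
  rw [le_div_iff₀ he]
  have hpi := Real.pi_lt_four
  have hpi0 := Real.pi_pos
  have e : ((1 + 2 * Real.pi * |w|) * j + 1) * ε = ε * j + 2 * Real.pi * (ε * |w| * j) + ε := by
    ring
  rw [e]
  have a1 : ε * j ≤ 2 * M := by nlinarith
  have a2 : 2 * Real.pi * (ε * |w| * j) ≤ 2 * 3.15 * M := by
    have := Real.pi_lt_d2
    gcongr
  nlinarith

theorem GoodSG.inversion (g : GoodSG T M ε) (x : X) :
    T 1 x = ∫ w : ℝ, Complex.exp (muL w) • LapOp T (muL w) (LapOp T (muL w) x) := by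
  have hre : ∀ w, 0 < (muL w).re := fun w => by simp [muL_re]
  set f : ℝ → X := fun t => ((max t 0 : ℝ) : ℂ) • Complex.exp (-(1:ℂ) * t) • T t x with hf
  have hfc : Continuous f := by
    refine Continuous.smul (by fun_prop) (g.contE 1 x)
  have hf0 : ∀ (h : ℝ → ℂ), (fun t => h t • f t) =
      (Ioi (0:ℝ)).indicator (fun t : ℝ => h t • (t:ℂ) • Complex.exp (-(1:ℂ) * t) • T t x) := by
    intro h
    ext t
    by_cases ht : 0 < t
    · rw [indicator_of_mem (by exact ht)]; simp [hf, max_eq_left ht.le]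
    · rw [indicator_of_notMem (by exact ht)]; simp [hf, max_eq_right (not_lt.1 ht)]
  have hfi : Integrable f := by
    have h1 := hf0 (fun _ => 1)
    simp only [one_smul] at h1
    change f = _ at h1
    rw [h1, integrable_indicator_iff measurableSet_Ioi]
    exact g.int1 (l := 1) (by simp) x
  have hF : FourierTransform.fourier f
      = fun w => LapOp T (muL w) (LapOp T (muL w) x) := by
    ext w
    rw [Real.fourier_real_eq_integral_exp_smul, hf0, integral_indicator measurableSet_Ioi,
      g.lapOp_apply (hre w), g.lapOp_apply (hre w), ← g.square (hre w)]
    congr 1; ext t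
    rw [smul_comm, smul_smul (Complex.exp _), ← Complex.exp_add]
    congr 3
    unfold muL
    push_cast; ring
  have hFi : Integrable (FourierTransform.fourier f) := by
    rw [hF]
    refine Integrable.mono' ((integrable_G M g.he).mul_const ‖x‖) ?_ ?_
    · exact ((g.J_cont).clm_apply ((g.J_cont).clm_apply continuous_const)).aestronglyMeasurable
    · refine Eventually.of_forall fun w => ?_
      calc _ ≤ ‖LapOp T (muL w)‖ * (‖LapOp T (muL w)‖ * ‖x‖) :=
            (ContinuousLinearMap.le_opNorm _ _).trans (by
              gcongr; exact ContinuousLinearMap.le_opNorm _ _)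
        _ = ‖LapOp T (muL w)‖ * ‖LapOp T (muL w)‖ * ‖x‖ := by ring
        _ ≤ _ := mul_le_mul_of_nonneg_right (g.J_sq w) (norm_nonneg x)
  have hinv := congrFun (hfc.fourierInv_fourier_eq hfi hFi) 1
  rw [Real.fourierInv_eq', hF] at hinv
  have h1 : f 1 = Complex.exp (-1) • T 1 x := by simp [hf]
  have h2 : T 1 x = Complex.exp 1 • f 1 := by
    rw [h1, smul_smul, ← Complex.exp_add]; simp
  rw [h2, ← hinv, ← integral_smul]
  congr 1; ext w
  rw [smul_smul, ← Complex.exp_add]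
  congr 2
  unfold muL
  simp

end part2

section part3

variable {R : Type u} [NormedRing R] [NormedAlgebra ℂ R] [CompleteSpace R]

theorem norm_inv_le (h1 : ‖(1:R)‖ ≤ 1) {t : R} (ht : ‖t‖ ≤ 1 / 2) :
    ‖Ring.inverse (1 - t)‖ ≤ 2 := by
  have hu : IsUnit (1 - t) := (Units.oneSub t (by linarith)).isUnit
  have h := Ring.inverse_mul_cancel _ hu
  rw [mul_sub, mul_one] at h
  have h2 : Ring.inverse (1 - t) = 1 + Ring.inverse (1 - t) * t :=
    sub_eq_iff_eq_add.1 h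
  have h3 : ‖Ring.inverse (1 - t)‖ ≤ 1 + ‖Ring.inverse (1 - t)‖ * (1 / 2) := by
    conv_lhs => rw [h2]
    refine (norm_add_le _ _).trans ?_
    gcongr
    refine (norm_mul_le _ _).trans ?_
    gcongr
  linarith

theorem core_integral (h1 : ‖(1:R)‖ ≤ 1) {J B : ℝ → R} (hJ : Continuous J) (hB : Continuous B)
    {β : ℝ} (hβ : 0 < β) (hBb : ∀ w, ‖B w‖ ≤ β) {G : ℝ → ℝ} (hG : Integrable G)
    (hJG : ∀ w, ‖J w‖ * ‖J w‖ ≤ G w) {e : ℝ → ℂ} (he : Continuous e)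
    {E : ℝ} (heE : ∀ w, ‖e w‖ ≤ E) (F : ℂ → ℝ → R)
    (hF : F = fun z w => e w • (Ring.inverse (1 - (z - 1) • B w) * (J w * J w) *
        Ring.inverse (1 - (z - 1) • B w))) :
    (∀ z ∈ Metric.ball (1:ℂ) (1 / (2 * β)), Integrable (F z)) ∧
    DifferentiableOn ℂ (fun z => ∫ w, F z w) (Metric.ball (1:ℂ) (1 / (2 * β))) ∧
    ∀ z ∈ Metric.ball (1:ℂ) (1 / (2 * β)), ‖∫ w, F z w‖ ≤ 4 * E * ∫ w, G w := by
  have hsmall : ∀ z ∈ Metric.ball (1:ℂ) (1 / (2 * β)), ∀ w, ‖(z - 1) • B w‖ ≤ 1 / 2 := by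
    intro z hz w
    rw [Metric.mem_ball, dist_eq_norm] at hz
    rw [norm_smul]
    calc _ ≤ 1 / (2 * β) * β := by gcongr; exact hBb w
      _ = 1 / 2 := by field_simp
  have hunit : ∀ z ∈ Metric.ball (1:ℂ) (1 / (2 * β)), ∀ w, IsUnit (1 - (z - 1) • B w) :=
    fun z hz w => (Units.oneSub _ (by linarith [hsmall z hz w])).isUnit
  have hWb : ∀ z ∈ Metric.ball (1:ℂ) (1 / (2 * β)), ∀ w,
      ‖Ring.inverse (1 - (z - 1) • B w)‖ ≤ 2 := fun z hz w => norm_inv_le h1 (hsmall z hz w)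
  have hWc : ∀ z ∈ Metric.ball (1:ℂ) (1 / (2 * β)),
      Continuous fun w => Ring.inverse (1 - (z - 1) • B w) := by
    intro z hz
    rw [continuous_iff_continuousAt]
    intro w
    obtain ⟨v, hv⟩ := hunit z hz w
    have := NormedRing.inverse_continuousAt v
    rw [hv] at this
    exact ContinuousAt.comp (f := fun w => 1 - (z - 1) • B w) this
      (continuous_const.sub (hB.const_smul _)).continuousAt
  have hE : 0 ≤ E := (norm_nonneg _).trans (heE 0)
  have hG0 : ∀ w, 0 ≤ G w := fun w => (by positivity : 0 ≤ ‖J w‖ * ‖J w‖).trans (hJG w)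
  have hJJ : ∀ w, ‖J w * J w‖ ≤ G w := fun w => (norm_mul_le _ _).trans (hJG w)
  have hFc : ∀ z ∈ Metric.ball (1:ℂ) (1 / (2 * β)), Continuous (F z) := by
    intro z hz
    rw [hF]
    exact he.smul (((hWc z hz).mul (hJ.mul hJ)).mul (hWc z hz))
  have hFb : ∀ z ∈ Metric.ball (1:ℂ) (1 / (2 * β)), ∀ w, ‖F z w‖ ≤ 4 * E * G w := by
    intro z hz w
    rw [hF]
    simp only
    rw [norm_smul]
    have hg := hG0 w
    calc _ ≤ E * (2 * G w * 2) := by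
          gcongr
          · exact heE w
          refine (norm_mul_le _ _).trans ?_
          gcongr
          · refine (norm_mul_le _ _).trans ?_
            gcongr
            · exact hWb z hz w
            · exact hJJ w
          · exact hWb z hz w
      _ = _ := by ring
  have hFi : ∀ z ∈ Metric.ball (1:ℂ) (1 / (2 * β)), Integrable (F z) := fun z hz =>
    Integrable.mono' (hG.const_mul (4 * E)) (hFc z hz).aestronglyMeasurable
      (Eventually.of_forall (hFb z hz))
  refine ⟨hFi, ?_, ?_⟩
  · intro z hz
    have hnb : Metric.ball (1:ℂ) (1 / (2 * β)) ∈ 𝓝 z := Metric.isOpen_ball.mem_nhds hz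
    set W : ℂ → ℝ → R := fun z w => Ring.inverse (1 - (z - 1) • B w) with hW
    set F' : ℂ → ℝ → R := fun z w => e w • ((W z w * B w * W z w) * (J w * J w) * W z w +
      W z w * (J w * J w) * (W z w * B w * W z w)) with hF'
    have hWd : ∀ z ∈ Metric.ball (1:ℂ) (1 / (2 * β)), ∀ w,
        HasDerivAt (fun z => W z w) (W z w * B w * W z w) z := by
      intro z hz w
      obtain ⟨v, hv⟩ := hunit z hz w
      have h2 := hasFDerivAt_ringInverse (𝕜 := ℂ) v
      rw [hv] at h2
      have h3 : HasDerivAt (fun z : ℂ => 1 - (z - 1) • B w) (-B w) z := by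
        have := ((((hasDerivAt_id z).sub_const 1).smul_const (B w)).const_sub 1)
        simpa using this
      have h4 := h2.comp_hasDerivAt z h3
      refine h4.congr_deriv ?_
      have h5 : W z w = ((v⁻¹ : Rˣ) : R) := by
        simp only [hW]; rw [← hv, Ring.inverse_unit]
      rw [h5]
      simp
    have hWBW : ∀ z ∈ Metric.ball (1:ℂ) (1 / (2 * β)), ∀ w,
        ‖W z w * B w * W z w‖ ≤ 2 * β * 2 := by
      intro z hz w
      refine (norm_mul_le _ _).trans ?_
      gcongr
      · refine (norm_mul_le _ _).trans ?_
        gcongr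
        · exact hWb z hz w
        · exact hBb w
      · exact hWb z hz w
    have hW'c : Continuous fun w => W z w * B w * W z w :=
      ((hWc z hz).mul hB).mul (hWc z hz)
    have := hasDerivAt_integral_of_dominated_loc_of_deriv_le (μ := volume) (F := F) (F' := F')
      (bound := fun w => 16 * β * E * G w) hnb
      (by filter_upwards [hnb] with y hy using (hFc y hy).aestronglyMeasurable)
      (hFi z hz)
      (he.smul (((hW'c.mul (hJ.mul hJ)).mul (hWc z hz)).add
        (((hWc z hz).mul (hJ.mul hJ)).mul hW'c))).aestronglyMeasurable
      (Eventually.of_forall fun w y hy => by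
        simp only [hF']
        rw [norm_smul]
        have hg := hG0 w
        calc _ ≤ E * ((2 * β * 2) * G w * 2 + 2 * G w * (2 * β * 2)) := by
              gcongr
              · exact heE w
              refine (norm_add_le _ _).trans ?_
              gcongr
              · refine (norm_mul_le _ _).trans ?_
                gcongr
                · refine (norm_mul_le _ _).trans ?_
                  gcongr
                  · exact hWBW y hy w
                  · exact hJJ w
                · exact hWb y hy w
              · refine (norm_mul_le _ _).trans ?_
                gcongr
                · refine (norm_mul_le _ _).trans ?_
                  gcongr
                  · exact hWb y hy w
                  · exact hJJ w
                · exact hWBW y hy w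
          _ = _ := by ring)
      (hG.const_mul _)
      (Eventually.of_forall fun w y hy => by
        rw [hF]
        exact ((((hWd y hy w).mul_const (J w * J w)).mul (hWd y hy w))).const_smul (e w))
    exact this.2.differentiableAt.differentiableWithinAt
  · intro z hz
    refine (norm_integral_le_of_norm_le (hG.const_mul (4 * E))
      (Eventually.of_forall (hFb z hz))).trans ?_
    rw [integral_const_mul]

end part3

theorem eq_of_real_eq {E : Type u} [NormedAddCommGroup E] [NormedSpace ℂ E] [CompleteSpace E]
    {U : Set ℂ} (hU : IsOpen U) (hc : Convex ℝ U) {f h : ℂ → E} (hf : DifferentiableOn ℂ f U)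
    (hh : DifferentiableOn ℂ h U) {t : ℝ} (ht : (t:ℂ) ∈ U)
    (heq : ∀ r : ℝ, (r:ℂ) ∈ U → f r = h r) : EqOn f h U := by
  refine (hf.analyticOnNhd hU).eqOn_of_preconnected_of_frequently_eq (hh.analyticOnNhd hU)
    hc.isPreconnected ht ?_
  have htend : Tendsto (fun r : ℝ => (r:ℂ)) (𝓝[≠] t) (𝓝[≠] (t:ℂ)) := by
    refine tendsto_nhdsWithin_of_tendsto_nhds_of_eventually_within _
      (Complex.continuous_ofReal.continuousAt.tendsto.mono_left nhdsWithin_le_nhds) ?_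
    filter_upwards [self_mem_nhdsWithin] with r hr
    simpa using hr
  refine htend.frequently (Eventually.frequently ?_)
  have : ∀ᶠ r : ℝ in 𝓝 t, (r:ℂ) ∈ U :=
    Complex.continuous_ofReal.continuousAt.eventually (hU.mem_nhds ht)
  filter_upwards [nhdsWithin_le_nhds this] with r hr using heq r hr

/-- Cone around the positive half line. -/
def coneS (ρ : ℝ) : Set ℂ := {z | |z.im| < ρ * z.re}

theorem coneS_open (ρ : ℝ) : IsOpen (coneS ρ) :=
  isOpen_lt (by fun_prop) (by fun_prop)

theorem coneS_add {ρ : ℝ} {z w : ℂ} (hz : z ∈ coneS ρ) (hw : w ∈ coneS ρ) : z + w ∈ coneS ρ := by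
  simp only [coneS, mem_ofPred_eq, Complex.add_im, Complex.add_re] at *
  have := abs_add_le z.im w.im
  linarith

theorem coneS_convex (ρ : ℝ) : Convex ℝ (coneS ρ) := by
  intro z hz w hw a b ha hb hab
  simp only [coneS, mem_ofPred_eq, Complex.add_im, Complex.add_re, Complex.real_smul,
    Complex.mul_im, Complex.mul_re, Complex.ofReal_re, Complex.ofReal_im, zero_mul, add_zero,
    sub_zero] at *
  rw [abs_lt] at *
  rcases ha.eq_or_lt with h | h
  · subst h
    have : b = 1 := by linarith
    subst this
    simpa using hw
  · constructor <;> nlinarith [hz.1, hz.2, hw.1, hw.2]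

theorem coneS_re {ρ : ℝ} (hρ : 0 < ρ) {z : ℂ} (hz : z ∈ coneS ρ) : 0 < z.re := by
  simp only [coneS, mem_ofPred_eq] at hz
  have := abs_nonneg z.im
  by_contra h
  nlinarith

theorem coneS_real {ρ : ℝ} (hρ : 0 < ρ) {t : ℝ} (ht : 0 < t) : (t:ℂ) ∈ coneS ρ := by
  simp only [coneS, mem_ofPred_eq, Complex.ofReal_im, Complex.ofReal_re, abs_zero]
  positivity

section part4

variable {X : Type u} [NormedAddCommGroup X] [NormedSpace ℂ X] [CompleteSpace X]
  {T : ℝ → X →L[ℂ] X} {M ε : ℝ}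

theorem GoodSG.core (g : GoodSG T M ε) : ∃ F : ℂ → X →L[ℂ] X,
    DifferentiableOn ℂ F (Metric.ball 1 (ε / (24 * M))) ∧
    (∀ r : ℝ, (r:ℂ) ∈ Metric.ball (1:ℂ) (ε / (24 * M)) → F r = T r) ∧
    ∀ z ∈ Metric.ball (1:ℂ) (ε / (24 * M)), ‖F z‖ ≤ 100 * (M ^ 2 / ε) := by
  have hM := g.hM
  have he := g.he
  have he2 := g.he2
  have hre : ∀ w, 0 < (muL w).re := fun w => by simp [muL_re]
  have hone : ‖(1 : X →L[ℂ] X)‖ ≤ 1 := ContinuousLinearMap.norm_id_le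
  have hρ : 1 / (2 * (12 * M / ε)) = ε / (24 * M) := by field_simp; norm_num
  obtain ⟨h1, h2, h3⟩ := core_integral hone g.J_cont
    ((muL_cont.smul g.J_cont).sub (continuous_const (y := (1 : X →L[ℂ] X))))
    (β := 12 * M / ε) (by positivity) g.B_norm (integrable_G M he) g.J_sq
    (Complex.continuous_exp.comp muL_cont) (E := Real.exp 1)
    (fun w => (norm_exp_muL w).le) _ rfl
  rw [hρ] at h1 h2 h3
  refine ⟨_, h2, ?_, fun z hz => (h3 z hz).trans ?_⟩
  · intro r hr
    have hint := h1 r hr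
    have hr0 : 0 < r := by
      rw [Metric.mem_ball, dist_eq_norm, ← Complex.ofReal_one, ← Complex.ofReal_sub,
        Complex.norm_real, Real.norm_eq_abs, abs_lt] at hr
      have : ε / (24 * M) < 1 := by rw [div_lt_one (by positivity)]; linarith
      linarith [hr.1]
    have hrc : (r:ℂ) ≠ 0 := by exact_mod_cast hr0.ne'
    ext x
    rw [ContinuousLinearMap.integral_apply hint]
    have hinv := (g.scale hr0).inversion x
    rw [mul_one] at hinv
    rw [hinv]
    congr 1; ext w
    have hre' : 0 < (muL w / r).re := by
      rw [Complex.div_ofReal_re, muL_re]; positivity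
    set J := LapOp T (muL w) with hJ
    set J' := LapOp T (muL w / r) with hJ'
    set Jr := LapOp (fun t => T (r * t)) (muL w) with hJr
    have hJr' : Jr = (r:ℂ)⁻¹ • J' := by
      ext y
      rw [hJr, (g.scale hr0).lapOp_apply (hre w), lap_scale T hr0, _root_.smul_apply, hJ',
        g.lapOp_apply hre']
    have r1 := g.op_resolvent (hre w) hre'
    have r2 := g.op_resolvent hre' (hre w)
    rw [← hJ, ← hJ'] at r1 r2
    have q1 : muL w / r - muL w = - (((r:ℂ) - 1) * (r:ℂ)⁻¹ * muL w) := by field_simp; ring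
    have q2 : muL w - muL w / r = (((r:ℂ) - 1) * (r:ℂ)⁻¹ * muL w) := by field_simp
    rw [q1, neg_smul] at r1
    rw [q2] at r2
    set D : X →L[ℂ] X := 1 - ((r:ℂ) - 1) • (muL w • J - 1) with hD
    have hcoef : (r:ℂ)⁻¹ + ((r:ℂ) - 1) * (r:ℂ)⁻¹ = 1 := by field_simp; ring
    have a1 : Jr * D = J := by
      have : Jr * D = ((r:ℂ)⁻¹ + ((r:ℂ) - 1) * (r:ℂ)⁻¹) • J' +
          -((((r:ℂ) - 1) * (r:ℂ)⁻¹ * muL w) • (J' * J)) := by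
        rw [hJr', hD]
        simp only [mul_sub, mul_one, smul_mul_assoc, mul_smul_comm, smul_sub, smul_smul, add_smul]
        module
      rw [this, hcoef, r1, one_smul]; abel
    have a2 : D * Jr = J := by
      have : D * Jr = ((r:ℂ)⁻¹ + ((r:ℂ) - 1) * (r:ℂ)⁻¹) • J' -
          ((((r:ℂ) - 1) * (r:ℂ)⁻¹ * muL w) • (J * J')) := by
        rw [hJr', hD]
        simp only [sub_mul, one_mul, smul_mul_assoc, mul_smul_comm, smul_sub, smul_smul, add_smul]
        module
      rw [this, hcoef, r2, one_smul]; abel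
    have hu : IsUnit D := by
      refine (Units.oneSub (((r:ℂ) - 1) • (muL w • J - 1)) ?_).isUnit
      rw [Metric.mem_ball, dist_eq_norm] at hr
      rw [norm_smul]
      have hb := g.B_norm w
      calc _ ≤ ε / (24 * M) * (12 * M / ε) := by gcongr
        _ < 1 := by field_simp; norm_num
    have b1 : J * Ring.inverse D = Jr := by
      rw [← a1, mul_assoc, Ring.mul_inverse_cancel _ hu, mul_one]
    have b2 : Ring.inverse D * J = Jr := by
      rw [← a2, ← mul_assoc, Ring.inverse_mul_cancel _ hu, one_mul]
    have b3 : Ring.inverse D * (J * J) * Ring.inverse D = Jr * Jr := by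
      rw [← mul_assoc, b2, mul_assoc, b1]
    change (Complex.exp (muL w) • (Ring.inverse D * (J * J) * Ring.inverse D)) x = _
    rw [b3]
    rfl
  · rw [integral_G M he]
    have e1 := Real.exp_one_lt_d9
    have e2 := Real.pi_lt_d2
    have hp : 0 < M ^ 2 / ε := by positivity
    calc 4 * Real.exp 1 * (2 * Real.pi * (M ^ 2 / ε))
        ≤ 4 * 2.7182818286 * (2 * 3.15 * (M ^ 2 / ε)) := by gcongr
      _ ≤ _ := by nlinarith

theorem GoodSG.core_t (g : GoodSG T M ε) {t : ℝ} (ht : 0 < t) : ∃ F : ℂ → X →L[ℂ] X,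
    DifferentiableOn ℂ F (Metric.ball (t:ℂ) (ε / (24 * M) * t)) ∧
    (∀ r : ℝ, (r:ℂ) ∈ Metric.ball (t:ℂ) (ε / (24 * M) * t) → F r = T r) ∧
    ∀ z ∈ Metric.ball (t:ℂ) (ε / (24 * M) * t), ‖F z‖ ≤ 100 * (M ^ 2 / ε) := by
  obtain ⟨F, h1, h2, h3⟩ := (g.scale ht).core
  have htc : (t:ℂ) ≠ 0 := by exact_mod_cast ht.ne'
  have hmem : ∀ z ∈ Metric.ball (t:ℂ) (ε / (24 * M) * t),
      z / t ∈ Metric.ball (1:ℂ) (ε / (24 * M)) := by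
    intro z hz
    rw [Metric.mem_ball, dist_eq_norm] at *
    rw [show z / t - 1 = (z - t) / t by field_simp, norm_div, Complex.norm_real,
      Real.norm_of_nonneg ht.le, div_lt_iff₀ ht]
    exact hz
  refine ⟨fun z => F (z / t), h1.comp (by fun_prop) hmem, fun r hr => ?_,
    fun z hz => h3 _ (hmem z hz)⟩
  have h4 := hmem _ hr
  rw [← Complex.ofReal_div] at h4
  have := h2 _ h4
  simp only
  rw [← Complex.ofReal_div, this]
  congr 1; field_simp

theorem GoodSG.global (g : GoodSG T M ε) : ∃ S : ℂ → X →L[ℂ] X,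
    (∀ t : ℝ, 0 ≤ t → S t = T t) ∧
    DifferentiableOn ℂ S (coneS (ε / (24 * M))) ∧
    ∀ z ∈ coneS (ε / (24 * M)), ‖S z‖ ≤ 100 * (M ^ 2 / ε) := by
  have hM := g.hM
  have he := g.he
  set ρ := ε / (24 * M) with hρd
  have hρ : 0 < ρ := by positivity
  have hex : ∀ t : ℝ, ∃ F : ℂ → X →L[ℂ] X, 0 < t →
    DifferentiableOn ℂ F (Metric.ball (t:ℂ) (ρ * t)) ∧
    (∀ r : ℝ, (r:ℂ) ∈ Metric.ball (t:ℂ) (ρ * t) → F r = T r) ∧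
    ∀ z ∈ Metric.ball (t:ℂ) (ρ * t), ‖F z‖ ≤ 100 * (M ^ 2 / ε) := by
    intro t
    by_cases ht : 0 < t
    · obtain ⟨F, hF⟩ := g.core_t ht
      exact ⟨F, fun _ => hF⟩
    · exact ⟨fun _ => 0, fun h => absurd h ht⟩
  choose F hF using hex
  have hmem : ∀ z ∈ coneS ρ, z ∈ Metric.ball (z.re:ℂ) (ρ * z.re) := by
    intro z hz
    rw [Metric.mem_ball, dist_eq_norm]
    have : z - (z.re:ℂ) = z.im * Complex.I := by
      rw [sub_eq_iff_eq_add, add_comm, Complex.re_add_im]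
    rw [this]; simpa [coneS] using hz
  have hself : ∀ t : ℝ, 0 < t → (t:ℂ) ∈ Metric.ball (t:ℂ) (ρ * t) := fun t ht =>
    Metric.mem_ball_self (by positivity)
  refine ⟨fun z => if z = 0 then 1 else F z.re z, ?_, ?_, ?_⟩
  · intro t ht
    rcases ht.eq_or_lt with h | h
    · subst h; simp [g.zero]
    · have : (t:ℂ) ≠ 0 := by exact_mod_cast h.ne'
      simp only [this, if_false, Complex.ofReal_re]
      exact (hF t h).2.1 t (hself t h)
  · intro z0 hz0
    have hre0 := coneS_re hρ hz0
    have hd := (hF z0.re hre0).1.differentiableAt (Metric.isOpen_ball.mem_nhds (hmem z0 hz0))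
    refine (hd.congr_of_eventuallyEq ?_).differentiableWithinAt
    filter_upwards [(coneS_open ρ).mem_nhds hz0, Metric.isOpen_ball.mem_nhds (hmem z0 hz0)]
      with z hz hzb
    have hre := coneS_re hρ hz
    have hne : z ≠ 0 := by rintro rfl; simp at hre
    simp only [hne, if_false]
    have hzr : (z.re : ℂ) ∈ Metric.ball (z0.re:ℂ) (ρ * z0.re) := by
      rw [Metric.mem_ball, dist_eq_norm] at *
      refine lt_of_le_of_lt ?_ hzb
      rw [← Complex.ofReal_sub, Complex.norm_real]
      simpa using Complex.abs_re_le_norm (z - z0.re)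
    refine eq_of_real_eq (Metric.isOpen_ball.inter Metric.isOpen_ball)
      ((convex_ball _ _).inter (convex_ball _ _))
      ((hF z.re hre).1.mono inter_subset_left) ((hF z0.re hre0).1.mono inter_subset_right)
      ⟨hself _ hre, hzr⟩ ?_ ⟨hmem z hz, hzb⟩
    intro r hr
    rw [(hF z.re hre).2.1 r hr.1, (hF z0.re hre0).2.1 r hr.2]
  · intro z hz
    have hre := coneS_re hρ hz
    have hne : z ≠ 0 := by rintro rfl; simp at hre
    simp only [hne, if_false]
    exact (hF z.re hre).2.2 z (hmem z hz)

theorem GoodSG.global2 (g : GoodSG T M ε) {S : ℂ → X →L[ℂ] X} {ρ C : ℝ} (hρ : 0 < ρ)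
    (h1 : ∀ t : ℝ, 0 ≤ t → S t = T t) (h2 : DifferentiableOn ℂ S (coneS ρ))
    (h3 : ∀ z ∈ coneS ρ, ‖S z‖ ≤ C) :
    (∀ z ∈ coneS ρ, ∀ w ∈ coneS ρ, S (z + w) = S z * S w) ∧
    ∀ x, Tendsto (fun z => S z x) (𝓝[coneS ρ] 0) (𝓝 x) := by
  have hsh : ∀ w ∈ coneS ρ, DifferentiableOn ℂ (fun z => S (z + w)) (coneS ρ) := fun w hw =>
    h2.comp (by fun_prop) (fun z hz => coneS_add hz hw)
  have s1 : ∀ r : ℝ, 0 < r → ∀ z ∈ coneS ρ, S (z + r) = S r * S z := by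
    intro r hr z hz
    refine eq_of_real_eq (coneS_open ρ) (coneS_convex ρ) (hsh r (coneS_real hρ hr))
      (h := fun z => S r * S z) (h2.const_mul _) (coneS_real hρ one_pos) ?_ hz
    intro t ht
    have ht0 : 0 < t := by simpa using coneS_re hρ ht
    rw [← Complex.ofReal_add, h1 _ (by positivity), h1 _ hr.le, h1 _ ht0.le, add_comm]
    ext x
    exact g.add r t hr.le ht0.le x
  have s2 : ∀ z ∈ coneS ρ, ∀ w ∈ coneS ρ, S (z + w) = S z * S w := by
    intro z hz w hw
    refine eq_of_real_eq (coneS_open ρ) (coneS_convex ρ) (hsh w hw)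
      (h := fun z => S z * S w) (h2.mul_const _) (coneS_real hρ one_pos) ?_ hz
    intro t ht
    have ht0 : 0 < t := by simpa using coneS_re hρ ht
    rw [add_comm, s1 t ht0 w hw]
  refine ⟨s2, fun x => ?_⟩
  have hC : 0 ≤ C := (norm_nonneg _).trans (h3 1 (by simpa using coneS_real hρ one_pos))
  rw [Metric.tendsto_nhds]
  intro η hη
  set δ := η / (2 * (C + 2)) with hδ
  have hδ0 : 0 < δ := by positivity
  have hcx : Tendsto (fun t => T t x) (𝓝[>] 0) (𝓝 x) := by
    have := ((g.cont x).tendsto 0).mono_left (nhdsWithin_le_nhds (s := Ioi (0:ℝ)))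
    simpa [g.zero] using this
  obtain ⟨t, htx, ht0⟩ := ((Metric.tendsto_nhds.1 hcx δ hδ0).and self_mem_nhdsWithin).exists
  have ht0 : 0 < t := ht0
  rw [dist_eq_norm] at htx
  have hct : Tendsto (fun z : ℂ => S (z + t) x) (𝓝 0) (𝓝 (S t x)) := by
    have hd : ContinuousAt S (0 + (t:ℂ)) := by
      rw [zero_add]
      exact (h2.differentiableAt ((coneS_open ρ).mem_nhds (coneS_real hρ ht0))).continuousAt
    have h5 : ContinuousAt (fun z : ℂ => S (z + t)) 0 :=
      ContinuousAt.comp (f := fun z : ℂ => z + t) hd (by fun_prop)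
    have h6 : ContinuousAt (fun z : ℂ => S (z + t) x) 0 := h5.clm_apply continuousAt_const
    simpa [ContinuousAt] using h6
  have hev := Metric.tendsto_nhds.1 hct (η / 2) (by positivity)
  filter_upwards [nhdsWithin_le_nhds hev, self_mem_nhdsWithin] with z hz hzc
  rw [dist_eq_norm] at *
  rw [s2 z hzc t (coneS_real hρ ht0), h1 t ht0.le, mul_apply_eq_comp] at hz
  have e : S z x - x = (S z (T t x) - T t x) + ((T t x - x) - S z (T t x - x)) := by
    rw [map_sub]; abel
  have e2 : ‖S z (T t x - x)‖ ≤ C * δ :=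
    (ContinuousLinearMap.le_of_opNorm_le _ (h3 z hzc) _).trans (by gcongr)
  rw [e]
  have e3 := norm_add_le (S z (T t x) - T t x) ((T t x - x) - S z (T t x - x))
  have e4 := norm_sub_le (T t x - x) (S z (T t x - x))
  have e5 : (C + 2) * δ = η / 2 := by rw [hδ]; field_simp
  nlinarith

end part4

theorem IsC0Semigroup.good {X : Type u} [NormedAddCommGroup X] [NormedSpace ℂ X]
    {T : ℝ → X →L[ℂ] X} (hT : IsC0Semigroup T) {M ε : ℝ} (hM : 1 ≤ M)
    (hb : ∀ t : ℝ, 0 ≤ t → ‖T t‖ ≤ M) (he : 0 < ε) (he2 : ε ≤ 2)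
    (hn : ∀ t : ℝ, 0 < t → ‖T t - 1‖ ≤ 2 - ε) : GoodSG (fun t => T |t|) M ε := by
  obtain ⟨h0, hadd, hc⟩ := hT
  have hbd : ∀ t : ℝ, ∀ x, ‖T |t| x‖ ≤ M * ‖x‖ := fun t x =>
    ContinuousLinearMap.le_of_opNorm_le _ (hb _ (abs_nonneg t)) x
  refine ⟨by simpa using h0, ?_, ?_, hbd, ?_, hM, he, he2⟩
  · intro s t hs ht x
    rw [abs_of_nonneg hs, abs_of_nonneg ht, abs_of_nonneg (by positivity), hadd s t hs ht]
    rfl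
  · intro x
    -- modulus of continuity
    have key : ∀ a b : ℝ, ‖T |a| x - T |b| x‖ ≤ M * ‖T |(|a| - |b|)| x - x‖ := by
      have aux : ∀ a b : ℝ, 0 ≤ a → a ≤ b → ‖T b x - T a x‖ ≤ M * ‖T (b - a) x - x‖ := by
        intro a b ha hab
        have : T b x = T a (T (b - a) x) := by
          have := hadd a (b - a) ha (by linarith)
          rw [add_sub_cancel] at this
          rw [this]; rfl
        rw [this, ← map_sub]
        exact ContinuousLinearMap.le_of_opNorm_le _ (hb a ha) _
      intro a b
      rcases le_total |a| |b| with h | h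
      · rw [norm_sub_rev, abs_sub_comm, abs_of_nonneg (by linarith : 0 ≤ |b| - |a|)]
        exact aux _ _ (abs_nonneg a) h
      · rw [abs_of_nonneg (by linarith : 0 ≤ |a| - |b|)]
        exact aux _ _ (abs_nonneg b) h
    have hc0 : Tendsto (fun t => T |t| x) (𝓝 0) (𝓝 x) := by
      rw [Metric.tendsto_nhds]
      intro η hη
      obtain ⟨δ, hδ, hδ2⟩ := Metric.mem_nhdsWithin_iff.1 (Metric.tendsto_nhds.1 (hc x) η hη)
      filter_upwards [Metric.ball_mem_nhds (0:ℝ) hδ] with t ht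
      rcases eq_or_ne t 0 with h | h
      · subst h; simp [h0, hη]
      · refine hδ2 ⟨?_, abs_pos.2 h⟩
        simpa using ht
    rw [continuous_iff_continuousAt]
    intro b
    rw [ContinuousAt, tendsto_iff_norm_sub_tendsto_zero]
    refine squeeze_zero (fun _ => norm_nonneg _) (fun a => key a b) ?_
    have h1 : Tendsto (fun a : ℝ => |a| - |b|) (𝓝 b) (𝓝 0) := by
      have : Continuous fun a : ℝ => |a| - |b| := by fun_prop
      simpa using this.tendsto b
    have h2 := (tendsto_iff_norm_sub_tendsto_zero.1 (hc0.comp h1)).const_mul M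
    simpa using h2
  · intro t ht
    rw [abs_of_pos ht]; exact hn t ht

theorem mem_coneS_of_arg {M ε : ℝ} (hM : 1 ≤ M) (he : 0 < ε) (he2 : ε ≤ 2) {z : ℂ} (hz : z ≠ 0)
    (ha : |z.arg| ≤ 1 / 100 * ε / M ^ 2) : z ∈ coneS (ε / (24 * M)) := by
  have hn : 0 < ‖z‖ := norm_pos_iff.2 hz
  set a := z.arg with had
  have hM2 : M ≤ M ^ 2 := by nlinarith
  have b1 : |a| ≤ ε / (100 * M) := by
    refine ha.trans ?_
    rw [div_le_div_iff₀ (by positivity) (by positivity)]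
    nlinarith
  have b2 : |a| ≤ 1 / 50 := by
    refine b1.trans ?_
    rw [div_le_div_iff₀ (by positivity) (by positivity)]
    nlinarith
  have hcos : 1 / 2 ≤ Real.cos a := by
    have := Real.one_sub_sq_div_two_le_cos (x := a)
    have h2 : a ^ 2 ≤ (1 / 50) ^ 2 := by rw [← sq_abs]; gcongr
    nlinarith
  have him : z.im = ‖z‖ * Real.sin a := (Complex.norm_mul_sin_arg z).symm
  have hre : z.re = ‖z‖ * Real.cos a := (Complex.norm_mul_cos_arg z).symm
  simp only [coneS, mem_ofPred_eq]
  rw [him, hre, abs_mul, abs_of_pos hn]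
  have hsin : |Real.sin a| ≤ |a| := Real.abs_sin_le_abs
  calc ‖z‖ * |Real.sin a| ≤ ‖z‖ * (ε / (100 * M)) := by gcongr; exact hsin.trans b1
    _ < ‖z‖ * (ε / (24 * M) * (1 / 2)) := by
        gcongr
        rw [div_mul_div_comm, div_lt_div_iff₀ (by positivity) (by positivity)]
        nlinarith [mul_pos he (by linarith : 0 < M)]
    _ ≤ ‖z‖ * (ε / (24 * M) * Real.cos a) := by gcongr
    _ = _ := by ring

/-- Quantitative holomorphic extension under the condition `‖T t - I‖ ≤ 2 - ε`:
there are universal constants `c₁, c₂ > 0` such that any `C₀`-semigroup with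
`‖T t‖ ≤ M` (`M ≥ 1`) and `‖T t - I‖ ≤ 2 - ε` for all `t > 0` (with `0 < ε ≤ 2`)
extends to a bounded holomorphic semigroup `S` on the sector
`|arg z| ≤ c₁ · ε/M²`, with `‖S z‖ ≤ c₂ · (M²/ε) · (1 + log (M/ε))` there. -/
theorem stmt4 :
    ∃ c₁ c₂ : ℝ, 0 < c₁ ∧ 0 < c₂ ∧
      ∀ (X : Type u) [NormedAddCommGroup X] [NormedSpace ℂ X] [CompleteSpace X]
        (T : ℝ → X →L[ℂ] X), IsC0Semigroup T →
      ∀ M : ℝ, 1 ≤ M → (∀ t : ℝ, 0 ≤ t → ‖T t‖ ≤ M) →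
      ∀ ε : ℝ, 0 < ε → ε ≤ 2 →
      (∀ t : ℝ, 0 < t → ‖T t - 1‖ ≤ 2 - ε) →
      ∃ S : ℂ → X →L[ℂ] X,
        (∀ t : ℝ, 0 ≤ t → S (t : ℂ) = T t) ∧
        (∀ z₁ z₂ : ℂ, z₁ ≠ 0 → z₂ ≠ 0 →
          |z₁.arg| ≤ c₁ * ε / M ^ 2 → |z₂.arg| ≤ c₁ * ε / M ^ 2 →
          S (z₁ + z₂) = (S z₁).comp (S z₂)) ∧
        DifferentiableOn ℂ S {z : ℂ | z ≠ 0 ∧ |z.arg| < c₁ * ε / M ^ 2} ∧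
        (∀ x : X, Tendsto (fun z => S z x)
          (nhdsWithin 0 {z : ℂ | z ≠ 0 ∧ |z.arg| ≤ c₁ * ε / M ^ 2}) (nhds x)) ∧
        ∀ z : ℂ, z ≠ 0 → |z.arg| ≤ c₁ * ε / M ^ 2 →
          ‖S z‖ ≤ c₂ * (M ^ 2 / ε) * (1 + Real.log (M / ε)) := by
  refine ⟨1 / 100, 400, by norm_num, by norm_num, ?_⟩
  intro X _ _ _ T hT M hM hb ε he he2 hn
  have g := hT.good hM hb he he2 hn
  have hρ : 0 < ε / (24 * M) := by positivity
  obtain ⟨S, h1, h2, h3⟩ := g.global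
  obtain ⟨h4, h5⟩ := g.global2 hρ h1 h2 h3
  have hmem : ∀ z : ℂ, z ≠ 0 → |z.arg| ≤ 1 / 100 * ε / M ^ 2 → z ∈ coneS (ε / (24 * M)) :=
    fun z hz ha => mem_coneS_of_arg hM he he2 hz ha
  refine ⟨S, ?_, ?_, ?_, ?_, ?_⟩
  · intro t ht
    rw [h1 t ht, abs_of_nonneg ht]
  · intro z w hz hw haz haw
    exact h4 z (hmem z hz haz) w (hmem w hw haw)
  · exact h2.mono fun z hz => hmem z hz.1 hz.2.le
  · intro x
    exact (h5 x).mono_left (nhdsWithin_mono _ fun z hz => hmem z hz.1 hz.2)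
  · intro z hz ha
    refine (h3 z (hmem z hz ha)).trans ?_
    have hlog : -(3 / 4) ≤ Real.log (M / ε) := by
      have h6 : Real.log (1 / 2) ≤ Real.log (M / ε) := by
        apply Real.log_le_log (by norm_num)
        rw [div_le_div_iff₀ (by norm_num) he]
        linarith
      have h7 : Real.log (1 / 2) = -Real.log 2 := by rw [one_div, Real.log_inv]
      have := Real.log_two_lt_d9
      linarith
    have hp : 0 < M ^ 2 / ε := by positivity
    nlinarith
end

section
/- Let (T(t))_{t≥0} be a C₀-semigroup on a complex Banach space X with ‖T(t)‖ ≤ M for all t ≥ 0, where M ≥ 1, and suppose there exists 0 < ε ≤ 2 such that ‖T(t) − I‖ ≤ 2 − ε for all t > 0. Then the map t ↦ T(t) is differentiable in operator norm on (0,∞), and there is a universal constant c > 0 such that sup_{t>0} ‖t·T′(t)‖ ≤ c · (M⁴/ε²) · (1 + log(M/ε)). -/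
open Filter Topology

universe u

section aux

open MeasureTheory Set

variable {X : Type u} [NormedAddCommGroup X] [NormedSpace ℂ X]

lemma sg_cont {T : ℝ → X →L[ℂ] X} (hT : IsC0Semigroup T) {M : ℝ}
    (hM : ∀ t : ℝ, 0 ≤ t → ‖T t‖ ≤ M) (x : X) :
    Continuous fun r : ℝ => T (max r 0) x := by
  obtain ⟨h0, hadd, hc⟩ := hT
  have key : ∀ s t : ℝ, 0 ≤ s → s ≤ t → ‖T t x - T s x‖ ≤ M * ‖T |t - s| x - x‖ := by
    intro s t hs hst
    have h1 : T t = (T s).comp (T (t - s)) := by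
      rw [← hadd s (t - s) hs (by linarith)]; congr 1; ring
    rw [abs_of_nonneg (by linarith : 0 ≤ t - s), h1]
    have : ((T s).comp (T (t - s))) x - T s x = T s (T (t - s) x - x) := by simp
    rw [this]
    exact (T s).le_of_opNorm_le (hM s hs) _
  have key2 : ∀ s t : ℝ, 0 ≤ s → 0 ≤ t → ‖T t x - T s x‖ ≤ M * ‖T |t - s| x - x‖ := by
    intro s t hs ht
    rcases le_total s t with h | h
    · exact key s t hs h
    · rw [norm_sub_rev, abs_sub_comm]; exact key t s ht h
  have h3 : Tendsto (fun t => T t x) (nhdsWithin 0 (Set.Ici 0)) (nhds x) := by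
    rw [← Set.Ioi_insert, nhdsWithin_insert, tendsto_sup]
    refine ⟨?_, hc x⟩
    have : T 0 x = x := by rw [h0]; rfl
    rw [tendsto_pure_left]
    intro s hs
    rw [this]; exact mem_of_mem_nhds hs
  rw [continuous_iff_continuousAt]
  intro s
  rw [ContinuousAt, tendsto_iff_norm_sub_tendsto_zero]
  have h4 : Tendsto (fun r : ℝ => |max r 0 - max s 0|) (𝓝 s) (nhdsWithin 0 (Set.Ici 0)) := by
    rw [tendsto_nhdsWithin_iff]
    refine ⟨?_, Eventually.of_forall fun r => mem_Ici.2 (abs_nonneg _)⟩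
    have : Continuous (fun r : ℝ => |max r 0 - max s 0|) := by fun_prop
    have := this.tendsto s
    simpa using this
  have h5 := (tendsto_iff_norm_sub_tendsto_zero.1 (h3.comp h4)).const_mul M
  rw [mul_zero] at h5
  refine squeeze_zero (fun _ => norm_nonneg _) (fun r => ?_) h5
  exact key2 _ _ (le_max_right _ _) (le_max_right _ _)

lemma sg_contOn {T : ℝ → X →L[ℂ] X} (hT : IsC0Semigroup T) {M : ℝ}
    (hM : ∀ t : ℝ, 0 ≤ t → ‖T t‖ ≤ M) (x : X) :
    ContinuousOn (fun r : ℝ => T r x) (Ici 0) := by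
  refine (sg_cont hT hM x).continuousOn.congr ?_
  intro r hr
  simp only [max_eq_left (mem_Ici.1 hr)]

/-- Laplace kernel. -/
noncomputable def lk (n : ℕ) (l : ℂ) (r : ℝ) : ℂ := (r : ℂ) ^ n * Complex.exp (-(l * r))

lemma lk_norm (n : ℕ) (l : ℂ) {r : ℝ} (hr : 0 ≤ r) :
    ‖lk n l r‖ = r ^ n * Real.exp (-(l.re * r)) := by
  simp [lk, Complex.norm_exp, abs_of_nonneg hr]

lemma lk_cont (n : ℕ) (l : ℂ) : Continuous (lk n l) := by
  unfold lk; fun_prop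

/-- Weighted Laplace transform of an orbit. -/
noncomputable def LF (T : ℝ → X →L[ℂ] X) (n : ℕ) (l : ℂ) (x : X) : X :=
  ∫ r in Ioi (0 : ℝ), lk n l r • T r x

lemma pe_int (n : ℕ) {a : ℝ} (ha : 0 < a) :
    IntegrableOn (fun r : ℝ => r ^ n * Real.exp (-(a * r))) (Ioi 0) := by
  have := integrableOn_rpow_mul_exp_neg_mul_rpow (p := 1) (s := n) (b := a) 
    (by have : (0:ℝ) ≤ n := n.cast_nonneg
        linarith) one_pos ha
  simpa using this

lemma pe_val (n : ℕ) {a : ℝ} (ha : 0 < a) :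
    ∫ r in Ioi (0 : ℝ), r ^ n * Real.exp (-(a * r)) = n.factorial / a ^ (n + 1) := by
  have := Real.integral_rpow_mul_exp_neg_mul_Ioi (a := n + 1) (r := a) (by positivity) ha
  rw [Real.Gamma_nat_eq_factorial] at this
  simp only [add_sub_cancel_right, Real.rpow_natCast] at this
  rw [this]
  norm_cast
  rw [one_div, inv_pow]; field_simp

lemma orb_norm {T : ℝ → X →L[ℂ] X} {M : ℝ}
    (hM : ∀ t : ℝ, 0 ≤ t → ‖T t‖ ≤ M) (n : ℕ) (l : ℂ) (x : X) {r : ℝ} (hr : 0 ≤ r) :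
    ‖lk n l r • T r x‖ ≤ (M * ‖x‖) * (r ^ n * Real.exp (-(l.re * r))) := by
  rw [norm_smul, lk_norm n l hr, mul_comm]
  exact mul_le_mul_of_nonneg_right ((T r).le_of_opNorm_le (hM r hr) _) (by positivity)

lemma orb_int {T : ℝ → X →L[ℂ] X} (hT : IsC0Semigroup T) {M : ℝ}
    (hM : ∀ t : ℝ, 0 ≤ t → ‖T t‖ ≤ M) (n : ℕ) {l : ℂ} (hl : 0 < l.re) (x : X) :
    IntegrableOn (fun r : ℝ => lk n l r • T r x) (Ioi 0) := by
  refine Integrable.mono' ((pe_int n hl).const_mul (M * ‖x‖)) ?_ ?_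
  · refine ContinuousOn.aestronglyMeasurable ?_ measurableSet_Ioi
    exact (lk_cont n l).continuousOn.smul ((sg_contOn hT hM x).mono Ioi_subset_Ici_self)
  · refine (ae_restrict_iff' (measurableSet_Ioi (a := (0:ℝ)))).2 (Eventually.of_forall fun r hr => ?_)
    exact orb_norm hM n l x (le_of_lt hr)

lemma LF_norm {T : ℝ → X →L[ℂ] X} {M : ℝ}
    (hM : ∀ t : ℝ, 0 ≤ t → ‖T t‖ ≤ M) (n : ℕ) {l : ℂ} (hl : 0 < l.re) (x : X) :
    ‖LF T n l x‖ ≤ M * ‖x‖ * (n.factorial / l.re ^ (n + 1)) := by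
  rw [← pe_val n hl, ← integral_const_mul]
  refine norm_integral_le_of_norm_le ((pe_int n hl).const_mul _) ?_
  refine (ae_restrict_iff' (measurableSet_Ioi (a := (0:ℝ)))).2 (Eventually.of_forall fun r hr => ?_)
  exact orb_norm hM n l x (le_of_lt hr)

lemma LF_split {T : ℝ → X →L[ℂ] X} (hT : IsC0Semigroup T) {M : ℝ}
    (hM : ∀ t : ℝ, 0 ≤ t → ‖T t‖ ≤ M) (n : ℕ) {l : ℂ} (hl : 0 < l.re) (x : X)
    {τ : ℝ} (hτ : 0 < τ) :
    LF T n l x = (∫ r in Ioc 0 τ, lk n l r • T r x) +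
      ∫ r in Ioi (0 : ℝ), lk n l (r + τ) • T τ (T r x) := by
  have hi := orb_int hT hM n hl x
  have h0 : LF T n l x = (∫ r in Ioc 0 τ, lk n l r • T r x) + ∫ r in Ioi τ, lk n l r • T r x := by
    rw [LF, ← Ioc_union_Ioi_eq_Ioi hτ.le, setIntegral_union (Ioc_disjoint_Ioi (le_refl τ))
      measurableSet_Ioi (hi.mono_set Ioc_subset_Ioi_self) (hi.mono_set (Ioi_subset_Ioi hτ.le))]
  rw [h0]
  congr 1
  have h := (measurePreserving_add_right (volume : Measure ℝ) τ).setIntegral_preimage_emb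
    (measurableEmbedding_addRight τ) (fun r => lk n l r • T r x) (Ioi τ)
  conv_lhs => rw [← h]
  simp only [preimage_add_const_Ioi, sub_self]
  refine setIntegral_congr_fun (measurableSet_Ioi (a := (0:ℝ))) fun r hr => ?_
  rw [add_comm r τ, hT.2.1 τ r hτ.le (le_of_lt hr)]
  rfl

lemma head_bd {T : ℝ → X →L[ℂ] X} {M : ℝ}
    (hM : ∀ t : ℝ, 0 ≤ t → ‖T t‖ ≤ M) (hM0 : 0 ≤ M) (n : ℕ) {l : ℂ} (hl : 0 < l.re) (x : X)
    {τ : ℝ} (hτ : 0 < τ) :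
    ‖∫ r in Ioc 0 τ, lk n l r • T r x‖ ≤ M * ‖x‖ * τ ^ (n + 1) := by
  have := norm_setIntegral_le_of_norm_le_const (μ := volume) (s := Ioc 0 τ)
    (f := fun r => lk n l r • T r x) (C := M * ‖x‖ * τ ^ n) (by simp) (fun r hr => by
      refine (orb_norm hM n l x hr.1.le).trans ?_
      refine mul_le_mul_of_nonneg_left ?_ (by positivity)
      have h1 : Real.exp (-(l.re * r)) ≤ 1 := by
        rw [Real.exp_le_one_iff]; nlinarith [mul_pos hl hr.1]
      have h2 : r ^ n ≤ τ ^ n := pow_le_pow_left₀ hr.1.le hr.2 n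
      calc r ^ n * Real.exp (-(l.re * r)) ≤ τ ^ n * 1 := by
            apply mul_le_mul h2 h1 (Real.exp_nonneg _) (by positivity)
        _ = _ := mul_one _)
  refine this.trans (le_of_eq ?_)
  simp [Measure.real, hτ.le]; ring


lemma tail_int [CompleteSpace X] {T : ℝ → X →L[ℂ] X} (hT : IsC0Semigroup T) {M : ℝ}
    (hM : ∀ t : ℝ, 0 ≤ t → ‖T t‖ ≤ M) {l : ℂ} (hl : 0 < l.re) (x : X) (τ : ℝ) (c0 c1 c2 : ℂ)  :
    ∫ r in Ioi (0 : ℝ), (c2 * lk 2 l r + c1 * lk 1 l r + c0 * lk 0 l r) • T τ (T r x) =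
      T τ (c2 • LF T 2 l x + c1 • LF T 1 l x + c0 • LF T 0 l x) := by
  have i0 : Integrable (fun r => c0 • (lk 0 l r • T r x)) (volume.restrict (Ioi 0)) :=
    (orb_int hT hM 0 hl x).smul c0
  have i1 : Integrable (fun r => c1 • (lk 1 l r • T r x)) (volume.restrict (Ioi 0)) :=
    (orb_int hT hM 1 hl x).smul c1
  have i2 : Integrable (fun r => c2 • (lk 2 l r • T r x)) (volume.restrict (Ioi 0)) :=
    (orb_int hT hM 2 hl x).smul c2
  have e : c2 • LF T 2 l x + c1 • LF T 1 l x + c0 • LF T 0 l x =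
      ∫ r in Ioi (0 : ℝ), (c2 • (lk 2 l r • T r x) + c1 • (lk 1 l r • T r x)
        + c0 • (lk 0 l r • T r x)) := by
    have i4 : Integrable (fun r => c2 • (lk 2 l r • T r x) + c1 • (lk 1 l r • T r x))
      (volume.restrict (Ioi 0)) := i2.add i1
    rw [integral_add i4 i0, integral_add i2 i1]
    simp only [integral_smul, LF]
  have i3 : Integrable (fun r => c2 • (lk 2 l r • T r x) + c1 • (lk 1 l r • T r x)
        + c0 • (lk 0 l r • T r x)) (volume.restrict (Ioi 0)) := (i2.add i1).add i0
  rw [e, ← ContinuousLinearMap.integral_comp_comm _ i3]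
  refine integral_congr_ae (Eventually.of_forall fun r => ?_)
  simp only [map_add, map_smul, add_smul, mul_smul]

lemma inv_bd {T : ℝ → X →L[ℂ] X} {ε : ℝ} (hε : 0 < ε) (hε2 : ε ≤ 2)
    (h : ∀ t : ℝ, 0 < t → ‖T t - 1‖ ≤ 2 - ε) {τ : ℝ} (hτ : 0 < τ) {q : ℝ} (hq0 : 0 ≤ q)
    (hq1 : q ≤ 1) (v : X) : ‖v‖ ≤ (2 / ε) * ‖v + (q : ℂ) • T τ v‖ := by
  have h1 : ‖T τ v - v‖ ≤ (2 - ε) * ‖v‖ := by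
    have := (T τ - 1).le_of_opNorm_le (h τ hτ) v
    simpa using this
  have h2 : v + (q : ℂ) • T τ v = ((1 + q : ℝ) : ℂ) • v - (-(q : ℂ)) • (T τ v - v) := by
    push_cast
    module
  have h3 : (1 + q) * ‖v‖ - q * ‖T τ v - v‖ ≤ ‖v + (q : ℂ) • T τ v‖ := by
    rw [h2]
    refine le_trans (le_of_eq ?_) (norm_sub_norm_le _ _)
    rw [norm_smul, norm_smul, norm_neg, Complex.norm_real, Complex.norm_real,
      Real.norm_of_nonneg hq0, Real.norm_of_nonneg (by linarith)]
  have h4 : (ε / 2) * ‖v‖ ≤ ‖v + (q : ℂ) • T τ v‖ := by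
    refine le_trans ?_ h3
    have := mul_le_mul_of_nonneg_left h1 hq0
    have h5 : ε / 2 * ‖v‖ ≤ (1 + q - q * (2 - ε)) * ‖v‖ := by
      apply mul_le_mul_of_nonneg_right _ (norm_nonneg _)
      nlinarith
    linarith
  rw [div_mul_eq_mul_div, le_div_iff₀ hε]
  linarith

lemma LF_bounds [CompleteSpace X] {T : ℝ → X →L[ℂ] X} (hT : IsC0Semigroup T) {M : ℝ} (hM1 : 1 ≤ M)
    (hM : ∀ t : ℝ, 0 ≤ t → ‖T t‖ ≤ M) {ε : ℝ} (hε : 0 < ε) (hε2 : ε ≤ 2)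
    (h : ∀ t : ℝ, 0 < t → ‖T t - 1‖ ≤ 2 - ε) {l : ℂ} (hl : 0 < l.re) (hs : l.im ≠ 0) (x : X) :
    ‖LF T 1 l x‖ ≤ 2 * (2 * Real.pi * M / ε / |l.im|) ^ 2 * ‖x‖ ∧
    ‖LF T 2 l x‖ ≤ 6 * (2 * Real.pi * M / ε / |l.im|) ^ 3 * ‖x‖ := by
  have hs' : 0 < |l.im| := abs_pos.2 hs
  set τ : ℝ := Real.pi / |l.im| with hτd
  have hτ : 0 < τ := by positivity
  set κ : ℝ := 2 * Real.pi * M / ε / |l.im| with hκ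
  have hκτ : κ = 2 / ε * M * τ := by rw [hκ, hτd]; field_simp
  have hτκ : τ ≤ κ := by
    rw [hκτ]
    have : 1 ≤ 2 / ε := by rw [le_div_iff₀ hε]; linarith
    have : 1 ≤ 2 / ε * M := by nlinarith
    nlinarith
  set q : ℝ := Real.exp (-(l.re * τ)) with hq
  have hq0 : 0 ≤ q := Real.exp_nonneg _
  have hq1 : q ≤ 1 := by rw [hq, Real.exp_le_one_iff]; nlinarith [mul_pos hl hτ]
  have hexp : Complex.exp (-(l * τ)) = -(q : ℂ) := by
    have e1 : -(l * τ) = ((-(l.re * τ) : ℝ) : ℂ) + (-(l.im * τ) : ℝ) * Complex.I := by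
      apply Complex.ext <;> simp
    rw [e1, Complex.exp_add, ← Complex.ofReal_exp, ← hq]
    rcases abs_cases l.im with ⟨h1, h2⟩ | ⟨h1, h2⟩
    · have : -(l.im * τ) = -Real.pi := by rw [hτd, h1]; rw [h1] at hs'; field_simp
      rw [this]; simp [Complex.exp_neg]
    · have : -(l.im * τ) = Real.pi := by rw [hτd, h1]; field_simp
      rw [this]; simp
  have hlk : ∀ n r, lk n l (r + τ) = -(q:ℂ) * ((r + τ : ℂ) ^ n * Complex.exp (-(l * r))) := by
    intro n r
    rw [← hexp, lk]; push_cast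
    rw [show -(l * (r + τ)) = -(l * τ) + -(l * r) by ring, Complex.exp_add]; ring
  have hTv : ∀ v, ‖T τ v‖ ≤ M * ‖v‖ := fun v => (T τ).le_of_opNorm_le (hM τ hτ.le) v
  have hM0 : 0 ≤ M := by linarith
  have hε' : 0 ≤ 2 / ε := by positivity
  -- generic consequence
  have gen : ∀ (v w H : X) (B : ℝ), v = H - (q : ℂ) • T τ (v + w) → ‖H‖ + M * ‖w‖ ≤ M * B →
      ‖v‖ ≤ 2 / ε * M * B := by
    intro v w H B hv hB
    have h1 : v + (q : ℂ) • T τ v = H - (q : ℂ) • T τ w := by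
      nth_rewrite 1 [hv]; simp only [map_add]; module
    refine (inv_bd hε hε2 h hτ hq0 hq1 v).trans ?_
    rw [h1, mul_assoc]
    refine mul_le_mul_of_nonneg_left (le_trans ?_ hB) hε'
    refine (norm_sub_le _ _).trans ?_
    gcongr
    rw [norm_smul, Complex.norm_real, Real.norm_of_nonneg hq0]
    have := hTv w
    have h2 : 0 ≤ ‖T τ w‖ := norm_nonneg _
    nlinarith
  have r0 : LF T 0 l x = (∫ r in Ioc 0 τ, lk 0 l r • T r x) - (q : ℂ) • T τ (LF T 0 l x + 0) := by
    conv_lhs => rw [LF_split hT hM 0 hl x hτ]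
    have := tail_int hT hM hl x τ (-(q:ℂ)) 0 0
    rw [sub_eq_add_neg]; congr 1
    simp only [zero_mul, zero_smul, zero_add, map_smul] at this
    rw [add_zero, ← neg_smul, ← this]
    congr 1; ext r; rw [hlk]; simp [lk]
  have r1 : LF T 1 l x = (∫ r in Ioc 0 τ, lk 1 l r • T r x) -
      (q : ℂ) • T τ (LF T 1 l x + (τ : ℂ) • LF T 0 l x) := by
    conv_lhs => rw [LF_split hT hM 1 hl x hτ]
    have := tail_int hT hM hl x τ (-(q:ℂ) * τ) (-q) 0
    rw [sub_eq_add_neg]; congr 1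
    have e : -((q : ℂ) • T τ (LF T 1 l x + (τ : ℂ) • LF T 0 l x)) =
      T τ ((0:ℂ) • LF T 2 l x + (-q:ℂ) • LF T 1 l x + (-q * τ :ℂ) • LF T 0 l x) := by
      simp only [map_add, map_smul]; module
    rw [e, ← this]
    congr 1; ext r; rw [hlk]; congr 1; simp only [lk]; ring
  have r2 : LF T 2 l x = (∫ r in Ioc 0 τ, lk 2 l r • T r x) -
      (q : ℂ) • T τ (LF T 2 l x + ((2 * τ : ℝ) : ℂ) • LF T 1 l x + ((τ ^ 2 : ℝ) : ℂ) • LF T 0 l x) := by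
    conv_lhs => rw [LF_split hT hM 2 hl x hτ]
    have := tail_int hT hM hl x τ (-(q:ℂ) * τ ^ 2) (-q * (2 * τ)) (-q)
    rw [sub_eq_add_neg]; congr 1
    have e : -((q : ℂ) • T τ (LF T 2 l x + ((2 * τ : ℝ) : ℂ) • LF T 1 l x
        + ((τ ^ 2 : ℝ) : ℂ) • LF T 0 l x)) =
      T τ ((-q:ℂ) • LF T 2 l x + (-q * (2 * τ):ℂ) • LF T 1 l x + (-q * τ ^ 2 :ℂ) • LF T 0 l x) := by
      simp only [map_add, map_smul]; push_cast; module
    rw [e, ← this]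
    congr 1; ext r; rw [hlk]; congr 1; simp only [lk]; ring
  have nx := norm_nonneg x
  have hκ0 : 0 < κ := hτ.trans_le hτκ
  have b0 : ‖LF T 0 l x‖ ≤ κ * ‖x‖ := by
    have := gen _ _ _ (τ * ‖x‖) r0 (by
      have := head_bd hM hM0 0 hl x hτ
      rw [norm_zero]; simp only [zero_add, pow_one] at this; linarith)
    rw [hκτ]; linarith
  have b1 : ‖LF T 1 l x‖ ≤ 2 * κ ^ 2 * ‖x‖ := by
    have := gen _ _ _ (τ * ((2 * κ) * ‖x‖)) r1 (by
      have h1 := head_bd hM hM0 1 hl x hτ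
      have h2 : ‖(τ : ℂ) • LF T 0 l x‖ ≤ τ * (κ * ‖x‖) := by
        rw [norm_smul, Complex.norm_real, Real.norm_of_nonneg hτ.le]; gcongr
      have h3 : τ ^ (1 + 1) * ‖x‖ ≤ τ * (κ * ‖x‖) := by
        rw [show τ ^ (1 + 1) * ‖x‖ = τ * (τ * ‖x‖) by ring]; gcongr
      have h4 := mul_le_mul_of_nonneg_left (add_le_add h3 h2) hM0
      linarith)
    refine this.trans (le_of_eq ?_)
    rw [show 2 / ε * M * (τ * (2 * κ * ‖x‖)) = 2 / ε * M * τ * (2 * κ * ‖x‖) by ring, ← hκτ]; ring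
  refine ⟨b1, ?_⟩
  have := gen _ _ _ (τ * ((6 * κ ^ 2) * ‖x‖)) (by rw [add_assoc] at r2; exact r2) (by
      have h1 := head_bd hM hM0 2 hl x hτ
      have h2 : ‖((2 * τ : ℝ) : ℂ) • LF T 1 l x + ((τ ^ 2 : ℝ) : ℂ) • LF T 0 l x‖ ≤
         2 * τ * (2 * κ ^ 2 * ‖x‖) + τ * (κ * (κ * ‖x‖)) := by
        refine (norm_add_le _ _).trans ?_
        rw [norm_smul, norm_smul, Complex.norm_real, Complex.norm_real,
          Real.norm_of_nonneg (by positivity), Real.norm_of_nonneg (by positivity)]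
        rw [show τ ^ 2 * ‖LF T 0 l x‖ = τ * (τ * ‖LF T 0 l x‖) by ring]
        gcongr
      have h3 : τ ^ (2 + 1) * ‖x‖ ≤ τ * (κ * (κ * ‖x‖)) := by
        rw [show τ ^ (2 + 1) * ‖x‖ = τ * (τ * (τ * ‖x‖)) by ring]; gcongr
      have h4 := mul_le_mul_of_nonneg_left (add_le_add h3 h2) hM0
      linarith)
  refine this.trans (le_of_eq ?_)
  rw [show 2 / ε * M * (τ * (6 * κ ^ 2 * ‖x‖)) = 2 / ε * M * τ * (6 * κ ^ 2 * ‖x‖) by ring, ← hκτ]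
  ring

lemma lk_deriv (l : ℂ) (r : ℝ) : HasDerivAt (lk 2 l) (2 * lk 1 l r - l * lk 2 l r) r := by
  have h1 : HasDerivAt (fun r : ℝ => (r : ℂ)) 1 r := Complex.ofRealCLM.hasDerivAt
  have h2 := h1.pow 2
  have h3 := ((h1.const_mul l).neg).cexp
  have h4 := h2.mul h3
  refine h4.congr_deriv ?_
  simp [lk]; ring

lemma LF_ibp [CompleteSpace X] {T : ℝ → X →L[ℂ] X} (hT : IsC0Semigroup T) {M : ℝ}
    (hM : ∀ t : ℝ, 0 ≤ t → ‖T t‖ ≤ M) {l : ℂ} (hl : 0 < l.re) {y z : X}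
    (hd : ∀ r : ℝ, 0 < r → HasDerivAt (fun r => T r z) (T r y) r) :
    LF T 2 l y = l • LF T 2 l z - (2 : ℂ) • LF T 1 l z := by
  have i1 := (orb_int hT hM 1 hl z)
  have i2 := (orb_int hT hM 2 hl z)
  have i3 := (orb_int hT hM 2 hl y)
  have i1' : Integrable (fun r => (2:ℂ) • (lk 1 l r • T r z)) (volume.restrict (Ioi 0)) := i1.smul _
  have i2' : Integrable (fun r => l • (lk 2 l r • T r z)) (volume.restrict (Ioi 0)) := i2.smul _
  have i4 : Integrable (fun r => (2:ℂ) • (lk 1 l r • T r z) - l • (lk 2 l r • T r z))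
    (volume.restrict (Ioi 0)) := i1'.sub i2'
  have i5 : Integrable (fun r => ((2:ℂ) • (lk 1 l r • T r z) - l • (lk 2 l r • T r z)) 
    + lk 2 l r • T r y) (volume.restrict (Ioi 0)) := i4.add i3
  have hder : ∀ r ∈ Ioi (0:ℝ), HasDerivAt (fun r => lk 2 l r • T r z) 
      (((2:ℂ) • (lk 1 l r • T r z) - l • (lk 2 l r • T r z)) + lk 2 l r • T r y) r := by
    intro r hr
    have := (lk_deriv l r).smul (hd r hr)
    refine this.congr_deriv ?_
    simp only [sub_smul, mul_smul]; abel
  have hz := tendsto_zero_of_hasDerivAt_of_integrableOn_Ioi hder i5 i2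
  have hc : ContinuousWithinAt (fun r => lk 2 l r • T r z) (Ici 0) 0 :=
    ((lk_cont 2 l).continuousOn.smul (sg_contOn hT hM z)) 0 self_mem_Ici
  have := integral_Ioi_of_hasDerivAt_of_tendsto hc hder i5 hz
  rw [integral_add i4 i3, integral_sub i1' i2', integral_smul, integral_smul] at this
  have e0 : lk 2 l 0 = 0 := by simp [lk]
  simp only [e0, zero_smul, sub_zero] at this
  change (2:ℂ) • LF T 1 l z - l • LF T 2 l z + LF T 2 l y = 0 at this
  rw [← sub_eq_zero, ← this]; abel

lemma LF_y_bound [CompleteSpace X] {T : ℝ → X →L[ℂ] X} (hT : IsC0Semigroup T) {M : ℝ} (hM1 : 1 ≤ M)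
    (hM : ∀ t : ℝ, 0 ≤ t → ‖T t‖ ≤ M) {ε : ℝ} (hε : 0 < ε) (hε2 : ε ≤ 2)
    (h : ∀ t : ℝ, 0 < t → ‖T t - 1‖ ≤ 2 - ε) {y z : X}
    (hd : ∀ r : ℝ, 0 < r → HasDerivAt (fun r => T r z) (T r y) r)
    {a : ℝ} (ha : 0 < a) (s : ℝ) {K : ℝ} (hK : K = 2 * Real.pi * M / ε) :
    ‖LF T 2 (a + s * Complex.I) y‖ ≤ 32 * K * M / a ^ 2 * ‖z‖ * (1 + (s / (K * a)) ^ 2)⁻¹ := by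
  set l : ℂ := a + s * Complex.I with hl
  have hre : l.re = a := by simp [hl]
  have him : l.im = s := by simp [hl]
  have hl0 : 0 < l.re := by rw [hre]; exact ha
  have hK1 : 1 ≤ K := by
    rw [hK, le_div_iff₀ hε]
    nlinarith [Real.pi_gt_three]
  have hK0 : 0 < K := by linarith
  have hnl : ‖l‖ ≤ a + |s| := by
    refine (norm_add_le _ _).trans ?_
    simp [abs_of_pos ha]
  have nz := norm_nonneg z
  have hb : ‖LF T 2 l y‖ ≤ (a + |s|) * ‖LF T 2 l z‖ + 2 * ‖LF T 1 l z‖ := by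
    rw [LF_ibp hT hM hl0 hd]
    refine (norm_sub_le _ _).trans ?_
    rw [norm_smul, norm_smul]
    have : ‖(2:ℂ)‖ = 2 := by simp
    rw [this]
    gcongr
  have hM0 : 0 < M := by linarith
  rcases le_total |s| (K * a) with hsK | hsK
  · have b1 := LF_norm hM 1 hl0 z
    have b2 := LF_norm hM 2 hl0 z
    rw [hre] at b1 b2
    have h1 : (1 / 2 : ℝ) ≤ (1 + (s / (K * a)) ^ 2)⁻¹ := by
      rw [one_div]
      apply inv_anti₀ (by positivity)
      have : (s / (K * a)) ^ 2 ≤ 1 := by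
        rw [sq_le_one_iff_abs_le_one, abs_div, abs_of_pos (by positivity : 0 < K * a)]
        exact div_le_one_of_le₀ hsK (by positivity)
      linarith
    have h2 : ‖LF T 2 l y‖ ≤ (a + K * a) * (M * ‖z‖ * (2 / a ^ 3)) + 2 * (M * ‖z‖ * (1 / a ^ 2)) := by
      refine hb.trans ?_
      have b1' : ‖LF T 1 l z‖ ≤ M * ‖z‖ * (1 / a ^ 2) := by simpa using b1
      have b2' : ‖LF T 2 l z‖ ≤ M * ‖z‖ * (2 / a ^ 3) := by simpa using b2
      gcongr
    refine h2.trans ?_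
    refine le_trans ?_ (mul_le_mul_of_nonneg_left h1 (by positivity))
    have e1 : (a + K * a) * (M * ‖z‖ * (2 / a ^ 3)) + 2 * (M * ‖z‖ * (1 / a ^ 2)) =
      (M * ‖z‖ / a ^ 2) * (2 * (1 + K) + 2) := by field_simp
    have e2 : 32 * K * M / a ^ 2 * ‖z‖ * (1 / 2) = (M * ‖z‖ / a ^ 2) * (16 * K) := by ring
    rw [e1, e2]
    gcongr
    linarith
  · have hs0 : 0 < |s| := lt_of_lt_of_le (by positivity) hsK
    have hs : s ≠ 0 := abs_pos.1 hs0
    obtain ⟨b1, b2⟩ := LF_bounds hT hM1 hM hε hε2 h hl0 (by rw [him]; exact hs) z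
    rw [him, ← hK] at b1 b2
    have has : a ≤ |s| := le_trans (by nlinarith) hsK
    have h2 : ‖LF T 2 l y‖ ≤ (|s| + |s|) * (6 * (K / |s|) ^ 3 * ‖z‖) + 2 * (2 * (K / |s|) ^ 2 * ‖z‖) := by
      refine hb.trans ?_
      gcongr
    refine h2.trans ?_
    have e1 : (|s| + |s|) * (6 * (K / |s|) ^ 3 * ‖z‖) + 2 * (2 * (K / |s|) ^ 2 * ‖z‖) =
      (‖z‖ * K ^ 2 / |s| ^ 2) * (12 * K + 4) := by field_simp; ring
    have h3 : (K * a) ^ 2 / (2 * |s| ^ 2) ≤ (1 + (s / (K * a)) ^ 2)⁻¹ := by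
      rw [div_pow, ← sq_abs s, ← one_div, div_le_div_iff₀ (by positivity) (by positivity)]
      have : (K * a) ^ 2 * (1 + |s| ^ 2 / (K * a) ^ 2) = (K * a) ^ 2 + |s| ^ 2 := by
        field_simp
      rw [this]
      nlinarith [pow_le_pow_left₀ (by positivity) hsK 2]
    refine le_trans ?_ (mul_le_mul_of_nonneg_left h3 (by positivity))
    rw [e1]
    have e2 : 32 * K * M / a ^ 2 * ‖z‖ * ((K * a) ^ 2 / (2 * |s| ^ 2)) =
      (‖z‖ * K ^ 2 / |s| ^ 2) * (16 * K * M) := by field_simp; ring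
    rw [e2]
    gcongr
    nlinarith

open FourierTransform in
lemma inv_bound [CompleteSpace X] {T : ℝ → X →L[ℂ] X} (hT : IsC0Semigroup T) {M : ℝ} (hM1 : 1 ≤ M)
    (hM : ∀ t : ℝ, 0 ≤ t → ‖T t‖ ≤ M) {ε : ℝ} (hε : 0 < ε) (hε2 : ε ≤ 2)
    (h : ∀ t : ℝ, 0 < t → ‖T t - 1‖ ≤ 2 - ε) {y z : X}
    (hd : ∀ r : ℝ, 0 < r → HasDerivAt (fun r => T r z) (T r y) r)
    {a : ℝ} (ha : 0 < a) {t : ℝ} (ht : 0 < t) {K : ℝ} (hK : K = 2 * Real.pi * M / ε) :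
    t ^ 2 * Real.exp (-(a * t)) * ‖T t y‖ ≤ 16 * K ^ 2 * M / a * ‖z‖ := by
  have hK0 : 0 < K := by
    have := Real.pi_pos
    rw [hK]; positivity
  set f : ℝ → X := fun r => lk 2 (a : ℂ) (max r 0) • T (max r 0) y with hf
  have hfc : Continuous f := by
    have h1 : Continuous fun r : ℝ => lk 2 (a : ℂ) (max r 0) := (lk_cont 2 (a:ℂ)).comp (by fun_prop)
    exact h1.smul (sg_cont hT hM y)
  have hfi : f = (Ioi (0:ℝ)).indicator (fun r => lk 2 (a : ℂ) r • T r y) := by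
    ext r
    by_cases hr : 0 < r
    · simp [hf, hr, hr.le]
    · have hr' : r ≤ 0 := not_lt.1 hr
      simp [hf, hr, hr', lk]
  have hfint : Integrable f := by
    rw [hfi, integrable_indicator_iff measurableSet_Ioi]
    exact orb_int hT hM 2 (by simpa using ha) y
  have hF : ∀ w : ℝ, 𝓕 f w = LF T 2 (a + ((2 * Real.pi * w : ℝ) : ℂ) * Complex.I) y := by
    intro w
    rw [Real.fourier_real_eq_integral_exp_smul, LF, ← integral_indicator measurableSet_Ioi]
    congr 1; ext r
    rw [hfi]
    by_cases hr : r ∈ Ioi (0:ℝ)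
    · rw [indicator_of_mem hr, indicator_of_mem hr, smul_smul]
      congr 1
      simp only [lk]
      rw [mul_left_comm, ← Complex.exp_add]
      congr 2
      push_cast; ring
    · rw [indicator_of_notMem hr, indicator_of_notMem hr, smul_zero]
  set c : ℝ := 2 * Real.pi / (K * a) with hc
  have hc0 : 0 < c := by have := Real.pi_pos; positivity
  set B : ℝ → ℝ := fun w => 32 * K * M / a ^ 2 * ‖z‖ * (1 + (c * w) ^ 2)⁻¹ with hB
  have hFB : ∀ w, ‖𝓕 f w‖ ≤ B w := by
    intro w
    rw [hF]
    refine (LF_y_bound hT hM1 hM hε hε2 h hd ha _ hK).trans (le_of_eq ?_)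
    simp only [hB, hc]
    congr 4; ring
  have hBint : Integrable B := (integrable_inv_one_add_sq.comp_mul_left' hc0.ne').const_mul _
  have hBval : ∫ w, B w = 16 * K ^ 2 * M / a * ‖z‖ := by
    simp only [hB]
    rw [integral_const_mul, Measure.integral_comp_mul_left (fun w => (1 + w ^ 2)⁻¹) c,
      integral_univ_inv_one_add_sq, abs_of_pos (by positivity), hc]
    have := Real.pi_pos
    simp only [smul_eq_mul]
    field_simp; ring
  have hFc : Continuous (𝓕 f) :=
    VectorFourier.fourierIntegral_continuous Real.continuous_fourierChar
      (by fun_prop) hfint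
  have hFint : Integrable (𝓕 f) := hBint.mono' hFc.aestronglyMeasurable (Eventually.of_forall hFB)
  have hinv := hfint.fourierInv_fourier_eq hFint (v := t) hfc.continuousAt
  have hft : ‖f t‖ ≤ ∫ w, B w := by
    rw [← hinv, Real.fourierInv_eq]
    refine norm_integral_le_of_norm_le hBint (Eventually.of_forall fun w => ?_)
    rw [Circle.norm_smul]; exact hFB w
  have hft2 : ‖f t‖ = t ^ 2 * Real.exp (-(a * t)) * ‖T t y‖ := by
    simp only [hf, max_eq_left ht.le]
    rw [norm_smul, lk_norm 2 _ ht.le, Complex.ofReal_re]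
  rw [← hft2, ← hBval]; exact hft

lemma diff_bd [CompleteSpace X] {T : ℝ → X →L[ℂ] X} (hT : IsC0Semigroup T) {M : ℝ} (hM1 : 1 ≤ M)
    (hM : ∀ t : ℝ, 0 ≤ t → ‖T t‖ ≤ M) {ε : ℝ} (hε : 0 < ε) (hε2 : ε ≤ 2)
    (hh : ∀ t : ℝ, 0 < t → ‖T t - 1‖ ≤ 2 - ε) {t h : ℝ} (ht : 0 < t) (hh0 : 0 < h) :
    ‖T (t + h) - T t‖ ≤ (2000 * M ^ 4 / ε ^ 2) / t * h := by
  have hM0 : 0 < M := by linarith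
  refine ContinuousLinearMap.opNorm_le_bound _ (by positivity) fun x => ?_
  have hSc := sg_cont hT hM x
  set S : ℝ → X := fun r => T (max r 0) x with hS
  set Φ : ℝ → X := fun r => ∫ u in (0:ℝ)..r, S u with hΦ
  have hΦd : ∀ r, HasDerivAt Φ (S r) r := fun r =>
    intervalIntegral.integral_hasDerivAt_right (hSc.intervalIntegrable _ _)
      hSc.aestronglyMeasurable.stronglyMeasurableAtFilter hSc.continuousAt
  set c : ℂ := ((h⁻¹ : ℝ) : ℂ) with hc
  set z : X := c • ∫ u in (0:ℝ)..h, S u with hz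
  set y : X := c • (T h x - x) with hy
  have hTz : ∀ r : ℝ, 0 ≤ r → T r z = c • (Φ (r + h) - Φ r) := by
    intro r hr
    rw [hz, map_smul]
    congr 1
    rw [← ContinuousLinearMap.intervalIntegral_comp_comm _ (hSc.intervalIntegrable _ _)]
    have e1 : ∫ u in (0:ℝ)..h, T r (S u) = ∫ u in (0:ℝ)..h, S (u + r) := by
      refine intervalIntegral.integral_congr fun u hu => ?_
      rw [uIcc_of_le hh0.le] at hu
      simp only [hS]
      rw [max_eq_left hu.1, max_eq_left (by linarith [hu.1]), add_comm u r, hT.2.1 r u hr hu.1]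
      rfl
    rw [e1, intervalIntegral.integral_comp_add_right, zero_add, add_comm h r]
    simp only [hΦ]
    rw [intervalIntegral.integral_interval_sub_left (hSc.intervalIntegrable _ _)
      (hSc.intervalIntegrable _ _)]
  have hTy : ∀ r : ℝ, 0 ≤ r → T r y = c • (T (r + h) x - T r x) := by
    intro r hr
    rw [hy, map_smul, map_sub, hT.2.1 r h hr hh0.le]; rfl
  have hd : ∀ r : ℝ, 0 < r → HasDerivAt (fun r => T r z) (T r y) r := by
    intro r hr
    have h1 : HasDerivAt (fun r => c • (Φ (r + h) - Φ r)) (c • (S (r + h) - S r)) r :=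
      (((hΦd (r + h)).comp_add_const r h).sub (hΦd r)).const_smul c
    have h2 : c • (S (r + h) - S r) = T r y := by
      rw [hTy r hr.le]; simp only [hS]
      rw [max_eq_left hr.le, max_eq_left (by linarith)]
    rw [← h2]
    refine h1.congr_of_eventuallyEq ?_
    filter_upwards [lt_mem_nhds hr] with s hs
    exact hTz s hs.le
  have hzn : ‖z‖ ≤ M * ‖x‖ := by
    have h1 : ‖∫ u in (0:ℝ)..h, S u‖ ≤ M * ‖x‖ * |h - 0| :=
      intervalIntegral.norm_integral_le_of_norm_le_const fun u _ =>
        (T _).le_of_opNorm_le (hM _ (le_max_right _ _)) x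
    rw [hz, norm_smul, hc, Complex.norm_real, Real.norm_of_nonneg (by positivity)]
    rw [sub_zero, abs_of_pos hh0] at h1
    rw [inv_mul_le_iff₀ hh0]; linarith
  have main := inv_bound hT hM1 hM hε hε2 hh hd (a := t⁻¹) (by positivity) ht rfl
  rw [inv_mul_cancel₀ ht.ne', hTy t ht.le, norm_smul, hc, Complex.norm_real,
    Real.norm_of_nonneg (by positivity), Real.exp_neg] at main
  have e : (T (t + h) - T t) x = T (t + h) x - T t x := rfl
  rw [e]
  set d := ‖T (t + h) x - T t x‖ with hdd
  have h1 : t ^ 2 * (Real.exp 1)⁻¹ * (h⁻¹ * d) ≤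
      16 * (2 * Real.pi * M / ε) ^ 2 * M / t⁻¹ * (M * ‖x‖) := main.trans (by gcongr)
  have h2 : d = (t ^ 2 * (Real.exp 1)⁻¹ * (h⁻¹ * d)) * (Real.exp 1 * h / t ^ 2) := by
    have := Real.exp_pos 1
    field_simp
  rw [h2]
  refine (mul_le_mul_of_nonneg_right h1 (by positivity)).trans ?_
  have h3 : 16 * (2 * Real.pi * M / ε) ^ 2 * M / t⁻¹ * (M * ‖x‖) * (Real.exp 1 * h / t ^ 2) =
     (64 * Real.exp 1 * Real.pi ^ 2) * (M ^ 4 / ε ^ 2 / t * h * ‖x‖) := by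
    field_simp; ring
  have h4 : 2000 * M ^ 4 / ε ^ 2 / t * h * ‖x‖ = 2000 * (M ^ 4 / ε ^ 2 / t * h * ‖x‖) := by ring
  rw [h3, h4]
  apply mul_le_mul_of_nonneg_right _ (by positivity)
  have e1 := Real.exp_one_lt_d9
  have e2 : Real.pi ^ 2 ≤ 10 := by nlinarith [Real.pi_lt_d2, Real.pi_gt_three]
  nlinarith [Real.exp_pos 1, Real.pi_pos]

lemma secdiff {E : Type*} [NormedAddCommGroup E] [NormedSpace ℝ E] [CompleteSpace E]
    {f : ℝ → E} {δ L Λ B : ℝ} (hL : 0 ≤ L) (hΛ : 0 ≤ Λ)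
    (h1 : ∀ t h : ℝ, δ ≤ t → 0 ≤ h → ‖f (t + h) - f t‖ ≤ Λ * h)
    (h2 : ∀ t h k : ℝ, δ ≤ t → 0 ≤ h → 0 ≤ k →
      ‖f (t + h + k) - f (t + h) - f (t + k) + f t‖ ≤ L * h * k)
    {t₀ : ℝ} (ht₀ : δ < t₀) (hB : ∀ h : ℝ, 0 < h → ‖f (t₀ + h) - f t₀‖ ≤ B * h) :
    ∃ G : E, HasDerivAt f G t₀ ∧ ‖G‖ ≤ B := by
  -- difference quotients are Cauchy
  have hcont : Continuous fun r => f (max r δ) := by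
    have hl : LipschitzWith (Real.toNNReal Λ) fun r => f (max r δ) := by
      refine LipschitzWith.of_dist_le_mul fun r s => ?_
      rw [Real.coe_toNNReal _ hΛ]
      wlog hrs : s ≤ r generalizing r s
      · rw [dist_comm, dist_comm r s]; exact this s r (le_of_not_ge hrs)
      have hm : max s δ ≤ max r δ := max_le_max_right _ hrs
      have := h1 (max s δ) (max r δ - max s δ) (le_max_right _ _) (by linarith)
      rw [add_sub_cancel] at this
      rw [dist_eq_norm]
      refine this.trans (mul_le_mul_of_nonneg_left ?_ hΛ)
      rw [Real.dist_eq]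
      refine le_trans (le_abs_self _) (abs_max_sub_max_le_abs _ _ _)
    exact hl.continuous
  set D : ℝ → ℝ → E := fun h t => h⁻¹ • (f (t + h) - f t) with hD
  have hDD : ∀ t h k : ℝ, δ ≤ t → 0 < h → 0 < k → ‖D h t - D k t‖ ≤ L * (h + k) := by
    intro t h k ht hh hk
    set P : ℝ → E := fun r => f (max (t + r) δ) with hP
    have hPc : Continuous P := hcont.comp (by fun_prop : Continuous fun r : ℝ => t + r)
    have hPv : ∀ r, 0 ≤ r → P r = f (t + r) := fun r hr => by
      simp only [hP]; rw [max_eq_left (by linarith)]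
    have hi : ∀ a b, IntervalIntegrable P volume a b := fun a b => hPc.intervalIntegrable _ _
    have hi' : ∀ h a b : ℝ, IntervalIntegrable (fun r => P (r + h)) volume a b := fun h a b =>
      (hPc.comp (by fun_prop : Continuous fun r : ℝ => r + h)).intervalIntegrable _ _
    have hi2 : ∀ h a b : ℝ, IntervalIntegrable (fun r => P (r + h) - P r) volume a b :=
      fun h a b => (hi' h a b).sub (hi a b)
    have J : ∀ h k : ℝ, ∫ r in (0:ℝ)..k, (P (r + h) - P r) =
        (∫ r in (0:ℝ)..(k + h), P r) - (∫ r in (0:ℝ)..h, P r) - ∫ r in (0:ℝ)..k, P r := by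
      intro h k
      rw [intervalIntegral.integral_sub (hi' _ _ _) (hi _ _),
        intervalIntegral.integral_comp_add_right, zero_add,
        intervalIntegral.integral_interval_sub_left (hi _ _) (hi _ _)]
    have JJ : ∫ r in (0:ℝ)..k, (P (r + h) - P r) = ∫ r in (0:ℝ)..h, (P (r + k) - P r) := by
      rw [J h k, J k h, add_comm k h]; abel
    have est : ∀ h k : ℝ, 0 < h → 0 < k →
        ‖(∫ r in (0:ℝ)..k, (P (r + h) - P r)) - k • (P h - P 0)‖ ≤ L * h * k * k := by
      intro h k hh hk
      have e1 : k • (P h - P 0) = ∫ r in (0:ℝ)..k, (P h - P 0) := by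
        rw [intervalIntegral.integral_const, sub_zero]
      rw [e1, ← intervalIntegral.integral_sub (hi2 _ _ _) intervalIntegrable_const]
      have := intervalIntegral.norm_integral_le_of_norm_le_const (a := 0) (b := k)
        (f := fun r => (P (r + h) - P r) - (P h - P 0)) (C := L * h * k) (fun r hr => by
          rw [uIoc_of_le hk.le] at hr
          rw [hPv _ (by linarith [hr.1]), hPv _ hr.1.le, hPv _ hh.le, hPv _ le_rfl, add_zero]
          have := h2 t h r ht hh.le hr.1.le
          have e2 : f (t + (r + h)) - f (t + r) - (f (t + h) - f t) =
            f (t + h + r) - f (t + h) - f (t + r) + f t := by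
            rw [show t + (r + h) = t + h + r by ring]; abel
          rw [e2]
          refine this.trans ?_
          exact mul_le_mul_of_nonneg_left hr.2 (by positivity))
      rwa [sub_zero, abs_of_pos hk] at this
    have a1 := est h k hh hk
    have a2 := est k h hk hh
    rw [← JJ] at a2
    have a3 : ‖k • (P h - P 0) - h • (P k - P 0)‖ ≤ L * h * k * (h + k) := by
      have := norm_sub_le_norm_sub_add_norm_sub (k • (P h - P 0))
        (∫ r in (0:ℝ)..k, (P (r + h) - P r)) (h • (P k - P 0))
      rw [norm_sub_rev _ (∫ r in (0:ℝ)..k, (P (r + h) - P r))] at this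
      linarith
    have a4 : D h t - D k t = (h * k)⁻¹ • (k • (P h - P 0) - h • (P k - P 0)) := by
      simp only [hD]
      rw [hPv _ hh.le, hPv _ hk.le, hPv _ le_rfl, add_zero, smul_sub (h * k)⁻¹, smul_smul, smul_smul]
      congr 2 <;> field_simp
    rw [a4, norm_smul, Real.norm_of_nonneg (by positivity), inv_mul_le_iff₀ (by positivity)]
    linarith
  set u : ℕ → ℝ := fun n => 1 / ((n : ℝ) + 1) with hu
  have hu0 : ∀ n, 0 < u n := fun n => by simp only [hu]; positivity
  have hut : Tendsto u atTop (𝓝 0) := tendsto_one_div_add_atTop_nhds_zero_nat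
  have hlim : ∀ t, δ ≤ t → ∃ G, Tendsto (fun n => D (u n) t) atTop (𝓝 G) := by
    intro t ht
    refine cauchySeq_tendsto_of_complete (cauchySeq_of_le_tendsto_0 (fun n => L * (u n + u n)) ?_ ?_)
    · intro n m N hn hm
      rw [dist_eq_norm]
      refine (hDD t _ _ ht (hu0 n) (hu0 m)).trans (mul_le_mul_of_nonneg_left ?_ hL)
      have mono : ∀ a b : ℕ, a ≤ b → u b ≤ u a := fun a b hab => one_div_le_one_div_of_le
        (by positivity) (by have : (a:ℝ) ≤ b := by exact_mod_cast hab
                            linarith)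
      exact add_le_add (mono _ _ hn) (mono _ _ hm)
    · simpa using (hut.add hut).const_mul L
  choose! G hG using hlim
  have hDG : ∀ t h : ℝ, δ ≤ t → 0 < h → ‖f (t + h) - f t - h • G t‖ ≤ L * h * h := by
    intro t h ht hh
    have b1 : ‖D h t - G t‖ ≤ L * (h + 0) := by
      refine le_of_tendsto_of_tendsto ((tendsto_const_nhds.sub (hG t ht)).norm)
        ((tendsto_const_nhds.add hut).const_mul L) ?_
      exact Eventually.of_forall fun n => hDD t h (u n) ht hh (hu0 n)
    have b2 : f (t + h) - f t - h • G t = h • (D h t - G t) := by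
      simp only [hD]; rw [smul_sub, smul_inv_smul₀ hh.ne']
    rw [b2, norm_smul, Real.norm_of_nonneg hh.le]
    nlinarith
  have hGL : ∀ t k : ℝ, δ ≤ t → 0 ≤ k → ‖G (t + k) - G t‖ ≤ L * k := by
    intro t k ht hk
    refine le_of_tendsto ((hG (t + k) (by linarith)).sub (hG t ht)).norm ?_
    refine Eventually.of_forall fun n => ?_
    simp only [hD]
    rw [← smul_sub, norm_smul, Real.norm_of_nonneg (inv_nonneg.2 (hu0 n).le),
      inv_mul_le_iff₀ (hu0 n)]
    have := h2 t (u n) k ht (hu0 n).le hk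
    have e : f (t + k + u n) - f (t + k) - (f (t + u n) - f t) =
      f (t + u n + k) - f (t + u n) - f (t + k) + f t := by
      rw [show t + k + u n = t + u n + k by ring]; abel
    rw [e]; linarith
  refine ⟨G t₀, ?_, ?_⟩
  · have quad : ∀ r, δ ≤ r → ‖f r - f t₀ - (r - t₀) • G t₀‖ ≤ 2 * L * (r - t₀) ^ 2 := by
      intro r hr
      rcases lt_trichotomy r t₀ with h | h | h
      · have c1 := hDG r (t₀ - r) hr (by linarith)
        have c2 := hGL r (t₀ - r) hr (by linarith)
        rw [add_sub_cancel] at c1 c2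
        have e : f r - f t₀ - (r - t₀) • G t₀ = 
          -(f t₀ - f r - (t₀ - r) • G r) + (t₀ - r) • (G t₀ - G r) := by module
        rw [e]
        refine (norm_add_le _ _).trans ?_
        rw [norm_neg, norm_smul, Real.norm_of_nonneg (by linarith)]
        nlinarith [mul_le_mul_of_nonneg_left c2 (by linarith : 0 ≤ t₀ - r)]
      · subst h; simp
      · have c1 := hDG t₀ (r - t₀) ht₀.le (by linarith)
        rw [add_sub_cancel] at c1
        nlinarith [mul_nonneg hL (sq_nonneg (r - t₀))]
    rw [hasDerivAt_iff_isLittleO]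
    refine Asymptotics.IsBigO.trans_isLittleO (g := fun r => (r - t₀) ^ 2) ?_ ?_
    · refine Asymptotics.IsBigO.of_bound (2 * L) ?_
      filter_upwards [le_mem_nhds ht₀] with r hr
      rw [Real.norm_of_nonneg (sq_nonneg _)]
      exact quad r hr
    · have := (Asymptotics.isLittleO_pow_id (𝕜 := ℝ) (n := 2) (by norm_num))
      have ht : Tendsto (fun r : ℝ => r - t₀) (𝓝 t₀) (𝓝 0) := by
        have : Continuous fun r : ℝ => r - t₀ := by fun_prop
        simpa using this.tendsto t₀
      exact this.comp_tendsto ht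
  · refine le_of_tendsto (hG t₀ ht₀.le).norm (Eventually.of_forall fun n => ?_)
    simp only [hD]
    rw [norm_smul, Real.norm_of_nonneg (inv_nonneg.2 (hu0 n).le), inv_mul_le_iff₀ (hu0 n)]
    linarith [hB (u n) (hu0 n)]

lemma final_aux [CompleteSpace X] {T : ℝ → X →L[ℂ] X} (hT : IsC0Semigroup T) {C : ℝ} (hC : 0 ≤ C)
    (hd : ∀ t h : ℝ, 0 < t → 0 < h → ‖T (t + h) - T t‖ ≤ C / t * h) {t : ℝ} (ht : 0 < t) :
    ∃ G : X →L[ℂ] X, HasDerivAt (fun s : ℝ => T s) G t ∧ ‖G‖ ≤ C / t := by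
  have hd' : ∀ t h : ℝ, 0 < t → 0 ≤ h → ‖T (t + h) - T t‖ ≤ C / t * h := by
    intro t h ht hh
    rcases hh.eq_or_lt with rfl | hh
    · simp
    · exact hd t h ht hh
  refine secdiff (δ := t / 2) (L := (C / (t / 4)) ^ 2) (Λ := C / (t / 2)) (by positivity)
    (by positivity) ?_ ?_ (by linarith) (fun h hh => hd t h ht hh)
  · intro s h hs hh
    refine (hd' s h (by linarith) hh).trans ?_
    gcongr
  · intro s h k hs hh hk
    have hs0 : 0 < s := by linarith
    have e : T (s + h + k) - T (s + h) - T (s + k) + T s =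
        (T (s / 2 + h) - T (s / 2)) * (T (s / 2 + k) - T (s / 2)) := by
      have m : ∀ a b, 0 ≤ a → 0 ≤ b → T a * T b = T (a + b) := fun a b ha hb =>
        (hT.2.1 a b ha hb).symm
      rw [sub_mul, mul_sub, mul_sub, m _ _ (by positivity) (by positivity),
        m _ _ (by positivity) (by positivity), m _ _ (by positivity) (by positivity),
        m _ _ (by positivity) (by positivity)]
      rw [show s / 2 + h + (s / 2 + k) = s + h + k by ring,
        show s / 2 + h + s / 2 = s + h by ring, show s / 2 + (s / 2 + k) = s + k by ring,
        show s / 2 + s / 2 = s by ring]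
      abel
    rw [e]
    refine (norm_mul_le _ _).trans ?_
    have b1 : ∀ h, 0 ≤ h → ‖T (s / 2 + h) - T (s / 2)‖ ≤ C / (t / 4) * h := fun h hh => by
      refine (hd' (s / 2) h (by positivity) hh).trans ?_
      have : t / 4 ≤ s / 2 := by linarith
      gcongr
    calc _ ≤ (C / (t / 4) * h) * (C / (t / 4) * k) :=
          mul_le_mul (b1 h hh) (b1 k hk) (norm_nonneg _) (by positivity)
      _ = _ := by ring

end aux

/-- Quantitative bound on `sup_{t>0} ‖t T'(t)‖`: there is a universal constant
`c > 0` such that any `C₀`-semigroup with `‖T t‖ ≤ M` (`M ≥ 1`) and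
`‖T t - I‖ ≤ 2 - ε` for all `t > 0` (with `0 < ε ≤ 2`) is differentiable in
operator norm on `(0, ∞)`, with `‖t T'(t)‖ ≤ c · (M⁴/ε²) · (1 + log (M/ε))`. -/
theorem stmt5 :
    ∃ c : ℝ, 0 < c ∧
      ∀ (X : Type u) [NormedAddCommGroup X] [NormedSpace ℂ X] [CompleteSpace X]
        (T : ℝ → X →L[ℂ] X), IsC0Semigroup T →
      ∀ M : ℝ, 1 ≤ M → (∀ t : ℝ, 0 ≤ t → ‖T t‖ ≤ M) →
      ∀ ε : ℝ, 0 < ε → ε ≤ 2 →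
      (∀ t : ℝ, 0 < t → ‖T t - 1‖ ≤ 2 - ε) →
      ∃ T' : ℝ → X →L[ℂ] X,
        (∀ t : ℝ, 0 < t → HasDerivAt (fun s : ℝ => T s) (T' t) t) ∧
        ∀ t : ℝ, 0 < t → ‖(t : ℂ) • T' t‖ ≤ c * (M ^ 4 / ε ^ 2) * (1 + Real.log (M / ε)) := by
  refine ⟨8000, by norm_num, ?_⟩
  intro X _ _ _ T hT M hM1 hM ε hε hε2 hh
  have hM0 : 0 < M := by linarith
  have key : ∀ t : ℝ, 0 < t → ∃ G : X →L[ℂ] X, HasDerivAt (fun s : ℝ => T s) G t ∧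
      ‖G‖ ≤ (2000 * M ^ 4 / ε ^ 2) / t := fun t ht =>
    final_aux hT (by positivity) (fun t h ht hh0 => diff_bd hT hM1 hM hε hε2 hh ht hh0) ht
  choose! G hG1 hG2 using key
  refine ⟨G, hG1, fun t ht => ?_⟩
  have h1 : ‖(t : ℂ) • G t‖ ≤ 2000 * (M ^ 4 / ε ^ 2) := by
    rw [norm_smul, Complex.norm_real, Real.norm_of_nonneg ht.le]
    refine (mul_le_mul_of_nonneg_left (hG2 t ht) ht.le).trans (le_of_eq ?_)
    field_simp
  have hlog : (1 / 4 : ℝ) ≤ 1 + Real.log (M / ε) := by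
    have h2 : Real.log (1 / 2) ≤ Real.log (M / ε) := by
      apply Real.log_le_log (by norm_num)
      rw [div_le_div_iff₀ (by norm_num) hε]; linarith
    rw [one_div, Real.log_inv] at h2
    have := Real.log_two_lt_d9
    linarith
  refine h1.trans ?_
  have h3 : 0 ≤ M ^ 4 / ε ^ 2 := by positivity
  nlinarith [mul_le_mul_of_nonneg_left hlog h3]
end
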